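/- arXiv:1006.0590 — 2 statements merged into one kernel-verified Lean document; each statement's English description precedes it below -/
import Mathlib

section
/- For all integers k ≥ 2, every (undirected) graph on n ≥ 11k − 3 vertices with minimum degree at least ⌈n/2⌉ + ⌊k/2⌋ − 1 is k-ordered Hamiltonian: for every sequence s₁, …, s_k of distinct vertices there is a Hamilton cycle which encounters s₁, …, s_k in this cyclic order. -/
/-!
The terminals are first linked cyclically by paths with at most three inner vertices, one pair of
consecutive terminals at a time. If the next pair cannot be linked, take two unused neighbours of
each of its terminals and count the edges from these four vertices to the paths: the degree
condition forces equality in the estimate on every path, so that the two neighbourhoods alternate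
along the cyclic sequence of terminals, and the parity of `k` rules this out.

Now take a cyclic linkage covering as many vertices as possible, and suppose that it misses a set
`H ≠ ∅`. Maximality limits the edges from `H` to the paths, so `H` has large minimum degree and is
Hamilton-connected. Hence two vertices on a path that attach to different vertices of `H` are at
least `|H|` vertices apart, and there are few such attachment vertices. Double counting the edges
between `H` and the paths then gives a pair of consecutive terminals that can be linked through all
of `H` and two attachment vertices, while all other pairs have common neighbours outside; the
linkage so obtained is longer. For `k ≤ 3` Dirac's theorem suffices, as any three vertices of a
cycle occur in any given cyclic order in one of its two directions.
-/

open Finset Function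

namespace OrderedHamiltonian

/-! ### Rearranging a list into a path -/

section Lists

variable {α : Type*} {p q : α → Prop} [DecidablePred p] [DecidablePred q] {l l' l'' : List α}

theorem exists_crossing (hl : l ≠ []) (h : l.length ≤ l.dropLast.countP p + l.tail.countP q) :
    ∃ A x y B, l = A ++ x :: y :: B ∧ p x ∧ q y := by
  induction l with
  | nil => exact absurd rfl hl
  | cons x l ih =>
    obtain _ | ⟨y, l⟩ := l
    · simp at h
    by_cases hxy : p x ∧ q y
    · exact ⟨[], x, y, l, rfl, hxy⟩
    obtain ⟨A, z, w, B, hA, hzw⟩ := ih (List.cons_ne_nil _ _) (by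
      simp only [List.dropLast_cons_cons, List.countP_cons, List.tail_cons, List.length_cons,
        decide_eq_true_eq] at h ⊢
      split_ifs at h <;> first | omega | tauto)
    exact ⟨x :: A, z, w, B, by rw [hA, List.cons_append], hzw⟩

/-- `l'` is a rearrangement of `l` with the same first and the same last entry. -/
structure IsRearrangement (l' l : List α) : Prop where
  perm : l'.Perm l
  head?_eq : l'.head? = l.head?
  getLast?_eq : l'.getLast? = l.getLast?

namespace IsRearrangement

theorem refl (l : List α) : IsRearrangement l l := ⟨.refl l, rfl, rfl⟩

theorem trans (h : IsRearrangement l'' l') (h' : IsRearrangement l' l) : IsRearrangement l'' l :=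
  ⟨h.perm.trans h'.perm, h.head?_eq.trans h'.head?_eq, h.getLast?_eq.trans h'.getLast?_eq⟩

theorem dropLast_perm (h : IsRearrangement l' l) : l'.dropLast.Perm l.dropLast := by
  obtain rfl | ⟨l, a, rfl⟩ := l.eq_nil_or_concat'
  · simp [h.perm.eq_nil]
  obtain rfl | ⟨l', a', rfl⟩ := l'.eq_nil_or_concat'
  · simpa using h.perm
  obtain rfl : a' = a := by simpa using h.getLast?_eq
  simpa [List.perm_append_right_iff] using h.perm

theorem tail_perm (h : IsRearrangement l' l) : l'.tail.Perm l.tail := by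
  obtain _ | ⟨a, l⟩ := l
  · simp [h.perm.eq_nil]
  obtain _ | ⟨a', l'⟩ := l'
  · simpa using h.perm
  obtain rfl : a' = a := by simpa using h.head?_eq
  simpa using h.perm

theorem reverse_middle {A M B : List α} (hA : A ≠ []) (hB : B ≠ []) :
    IsRearrangement (A ++ M.reverse ++ B) (A ++ M ++ B) where
  perm := (M.reverse_perm.append_left A).append_right B
  head?_eq := by
    obtain ⟨a, A, rfl⟩ := List.exists_cons_of_ne_nil hA
    simp
  getLast?_eq := by
    obtain rfl | ⟨B, b, rfl⟩ := B.eq_nil_or_concat'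
    · exact absurd rfl hB
    · simp only [← List.append_assoc, List.getLast?_concat]

theorem exists_eq_cons_append {u v : α} {M : List α} (h : IsRearrangement l (u :: M ++ [v])) :
    ∃ M', M'.Perm M ∧ l = u :: M' ++ [v] := by
  have htail : l.tail.Perm (M ++ [v]) := h.tail_perm
  obtain ⟨M', w, hM'⟩ := l.tail.eq_nil_or_concat'.resolve_left fun h₀ => by simp [h₀] at htail
  obtain rfl : l = u :: (M' ++ [w]) := by
    rw [← hM']
    exact List.eq_cons_of_mem_head? (by simp [h.head?_eq])
  obtain rfl : w = v := by
    have hlast := h.getLast?_eq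
    rw [← List.cons_append, List.getLast?_concat, List.getLast?_concat] at hlast
    exact Option.some_injective _ hlast
  exact ⟨M', by simpa [List.perm_append_right_iff] using htail, rfl⟩

end IsRearrangement
end Lists

section Exchange

variable {V : Type*} {G : SimpleGraph V} [DecidableRel G.Adj] {L₁ L₂ : List V} {a b : V}

theorem exists_crossing_of_le_countP
    (hcount : L₁.length + L₂.length + 1 ≤ (L₁ ++ a :: b :: L₂).dropLast.countP (G.Adj a ·) +
      (L₁ ++ a :: b :: L₂).tail.countP (G.Adj b ·)) :
    ∃ A x y B, (L₁ ++ [a] = A ++ x :: y :: B ∨ b :: L₂ = A ++ x :: y :: B) ∧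
      G.Adj a x ∧ G.Adj b y := by
  have hdropLast : (L₁ ++ a :: b :: L₂).dropLast = (L₁ ++ [a]) ++ (b :: L₂).dropLast := by
    simp
  have htail : (L₁ ++ a :: b :: L₂).tail = (L₁ ++ [a]).tail ++ b :: L₂ := by
    cases L₁ <;> simp
  simp only [hdropLast, htail, List.countP_append, List.countP_cons, List.countP_nil,
    G.irrefl, decide_false, Bool.false_eq_true, if_false] at hcount
  obtain h | h : (L₁ ++ [a]).length ≤
        (L₁ ++ [a]).dropLast.countP (G.Adj a ·) + (L₁ ++ [a]).tail.countP (G.Adj b ·) ∨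
        (b :: L₂).length ≤
        (b :: L₂).dropLast.countP (G.Adj a ·) + (b :: L₂).tail.countP (G.Adj b ·) := by
    simp only [List.dropLast_concat, List.length_append, List.length_cons, List.length_nil,
      List.tail_cons]
    omega
  · obtain ⟨A, x, y, B, hA, hxy⟩ := exists_crossing (by simp) h
    exact ⟨A, x, y, B, .inl hA, hxy⟩
  · obtain ⟨A, x, y, B, hA, hxy⟩ := exists_crossing (by simp) h
    exact ⟨A, x, y, B, .inr hA, hxy⟩

theorem exists_longer_chain (hchain : (L₁ ++ [a]).IsChain G.Adj)
    (hcount : L₁.length + L₂.length + 1 ≤ (L₁ ++ a :: b :: L₂).dropLast.countP (G.Adj a ·) +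
      (L₁ ++ a :: b :: L₂).tail.countP (G.Adj b ·)) :
    ∃ K R, IsRearrangement (K ++ R) (L₁ ++ a :: b :: L₂) ∧ K.IsChain G.Adj ∧
      K.length = L₁.length + 2 := by
  obtain ⟨A, x, y, B, hA | hA, hax, hby⟩ := exists_crossing_of_le_countP hcount
  · refine ⟨A ++ [x] ++ (y :: B).reverse ++ [b], L₂, ?_, ?_, ?_⟩
    · have h := IsRearrangement.reverse_middle (A := A ++ [x]) (M := y :: B) (B := b :: L₂)
        (by simp) (by simp)
      simpa [show L₁ ++ a :: b :: L₂ = A ++ x :: y :: B ++ b :: L₂ by simp [← hA]] using h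
    · have hlast : (y :: B).getLast? = some a := by
        simpa [List.getLast?_cons] using (congrArg List.getLast? hA).symm
      rw [hA, show A ++ x :: y :: B = A ++ [x] ++ y :: B by simp, List.isChain_append] at hchain
      have hrev : (y :: B).reverse.IsChain G.Adj := by
        simpa only [List.isChain_reverse, G.adj_comm] using hchain.2.1
      refine List.isChain_append.mpr ⟨List.isChain_append.mpr ⟨hchain.1, hrev, ?_⟩, by simp, ?_⟩
      · rw [List.head?_reverse, hlast]
        simpa using hax.symm
      · simpa [← List.append_assoc] using hby.symm
    · have := congrArg List.length hA
      simp only [List.length_append, List.length_cons, List.length_nil, List.length_reverse] at *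
      omega
  · refine ⟨L₁ ++ [a] ++ [x], A.reverse ++ y :: B, ?_, ?_, by simp⟩
    · have h := IsRearrangement.reverse_middle (A := L₁ ++ [a]) (M := A ++ [x]) (B := y :: B)
        (by simp) (by simp)
      simpa [hA] using h
    · exact List.isChain_append.mpr ⟨hchain, by simp, by simpa using hax⟩

/-- Palmer's exchange argument: the first pair of consecutive nonadjacent entries is repaired by
reversing a segment, which never breaks the initial chain before it. -/
theorem exists_isChain_rearrangement {l : List V}
    (h : ∀ a ∈ l.dropLast, ∀ b ∈ l.tail, ¬ G.Adj a b →
      l.length ≤ l.dropLast.countP (G.Adj a ·) + l.tail.countP (G.Adj b ·) + 1) :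
    ∃ l', IsRearrangement l' l ∧ l'.IsChain G.Adj := by
  suffices H : ∀ n K R, IsRearrangement (K ++ R) l → K.IsChain G.Adj → R.length = n →
      ∃ l', IsRearrangement l' l ∧ l'.IsChain G.Adj from
    H _ [] l (.refl l) .nil rfl
  intro n
  induction n with
  | zero =>
    intro K R hKR hK hR
    rw [List.length_eq_zero_iff.mp hR, List.append_nil] at hKR
    exact ⟨K, hKR, hK⟩
  | succ n ih =>
    intro K R hKR hK hR
    obtain ⟨b, L₂, rfl⟩ := List.exists_cons_of_length_eq_add_one hR
    obtain rfl | ⟨L₁, a, rfl⟩ := K.eq_nil_or_concat'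
    · exact ih [b] L₂ hKR (.singleton b) (by simpa using hR)
    rw [List.append_assoc, List.singleton_append] at hKR
    by_cases hab : G.Adj a b
    · refine ih (L₁ ++ [a] ++ [b]) L₂ (by simpa using hKR) ?_ (by simpa using hR)
      exact List.isChain_append.mpr ⟨hK, by simp, by simpa using hab⟩
    have hcount := h a (hKR.dropLast_perm.subset (by simp)) b
      (hKR.tail_perm.subset (by cases L₁ <;> simp)) hab
    rw [← hKR.dropLast_perm.countP_eq, ← hKR.tail_perm.countP_eq, ← hKR.perm.length_eq] at hcount
    obtain ⟨K, R, hKR', hK, hlen⟩ := exists_longer_chain (b := b) (L₂ := L₂) hK (by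
      simp only [List.length_append, List.length_cons] at hcount
      omega)
    refine ih K R (hKR'.trans hKR) hK ?_
    have := hKR'.perm.length_eq
    simp only [List.length_append, List.length_cons] at this hR
    omega

end Exchange

/-! ### Degrees into a set of vertices -/

section DegIn

variable {V : Type*} {G : SimpleGraph V} [DecidableRel G.Adj] {S T : Finset V} {v x y z : V}

/-- The number of neighbours of `v` in `S`. -/
def degIn (G : SimpleGraph V) [DecidableRel G.Adj] (S : Finset V) (v : V) : ℕ :=
  #{w ∈ S | G.Adj v w}

theorem degIn_le_card : degIn G S v ≤ #S := card_filter_le _ _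

theorem degIn_lt_card (hv : v ∈ S) : degIn G S v < #S :=
  card_lt_card (filter_ssubset.mpr ⟨v, hv, G.irrefl⟩)

theorem sum_degIn_comm (S T : Finset V) : ∑ x ∈ S, degIn G T x = ∑ y ∈ T, degIn G S y := by
  simpa only [degIn, bipartiteAbove, bipartiteBelow, G.adj_comm] using
    sum_card_bipartiteAbove_eq_sum_card_bipartiteBelow G.Adj (s := S) (t := T)

theorem degIn_univ [Fintype V] (v : V) : degIn G univ v = G.degree v := by
  rw [degIn, ← G.card_neighborFinset_eq_degree, G.neighborFinset_eq_filter]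

theorem degIn_eq_card (h : ∀ v ∈ S, G.Adj x v) : degIn G S x = #S := by
  rw [degIn, filter_true_of_mem h]

theorem degIn_eq_zero (h : ∀ v ∈ S, ¬G.Adj x v) : degIn G S x = 0 := by
  rw [degIn, filter_false_of_mem h, card_empty]

theorem exists_adj_of_degIn_pos (h : 1 ≤ degIn G S x) : ∃ v ∈ S, G.Adj x v := by
  simpa [Finset.Nonempty] using card_pos.mp h

theorem degIn_add_degIn_le_card (h : ∀ v ∈ S, G.Adj x v → ¬G.Adj v z) :
    degIn G S x + degIn G S z ≤ #S := by
  rw [degIn, degIn, ← card_filter_add_card_filter_not (s := S) (G.Adj x ·)]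
  refine Nat.add_le_add_left (card_le_card fun v hv => ?_) _
  rw [mem_filter] at hv ⊢
  exact ⟨hv.1, fun hxv => h v hv.1 hxv hv.2.symm⟩

theorem degIn_add_degIn_add_degIn_le (hS : #S = 2)
    (h : ∀ u ∈ S, ∀ v ∈ S, u ≠ v → G.Adj u y → G.Adj x v → ¬G.Adj v z) :
    degIn G S x + degIn G S y + degIn G S z ≤ 4 := by
  classical
  obtain ⟨a, b, hab, rfl⟩ := card_eq_two.mp hS
  have hdegIn (v : V) :
      degIn G {a, b} v = (if G.Adj v a then 1 else 0) + if G.Adj v b then 1 else 0 := by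
    rw [degIn, card_filter, sum_pair hab]
  have ha := h a (by simp) b (by simp) hab
  have hb := h b (by simp) a (by simp) hab.symm
  simp only [G.adj_comm _ z, G.adj_comm _ y] at ha hb
  simp only [hdegIn]
  split_ifs <;> first | omega | tauto

theorem exists_ne_adj_of_two_le_degIn (h : 2 ≤ degIn G S x) (v : V) :
    ∃ u ∈ S, u ≠ v ∧ G.Adj x u := by
  obtain ⟨u, hu, huv⟩ := exists_mem_ne h v
  exact ⟨u, (mem_filter.mp hu).1, huv, (mem_filter.mp hu).2⟩

theorem degIn_add_degIn_add_two_le_card (hx : x ∈ S) (hz : z ∈ S) (hne : x ≠ z)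
    (hxz : ¬G.Adj x z) (h : ∀ v ∈ S, G.Adj x v → ¬G.Adj v z) :
    degIn G S x + degIn G S z + 2 ≤ #S := by
  classical
  have hdegIn {y : V} (hyx : ¬G.Adj y x) (hyz : ¬G.Adj y z) :
      degIn G S y = degIn G (S \ {x, z}) y := by
    refine congrArg card (Finset.ext fun v => ?_)
    simp only [mem_filter, mem_sdiff, mem_insert, mem_singleton]
    grind
  have hle := degIn_add_degIn_le_card (S := S \ {x, z}) fun v hv => h v (mem_sdiff.mp hv).1
  have hcard := card_sdiff_add_card_eq_card (insert_subset hx (singleton_subset_iff.mpr hz))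
  rw [card_pair hne] at hcard
  rw [hdegIn G.irrefl hxz, hdegIn (fun hzx => hxz hzx.symm) G.irrefl]
  omega

theorem degIn_add_degIn_le_card_add (S : Finset V) (x y : V) :
    degIn G S x + degIn G S y ≤ #S + #{z ∈ S | G.Adj x z ∧ G.Adj z y} := by
  classical
  rw [degIn, degIn, ← card_union_add_card_inter, ← filter_or, ← filter_and]
  simp only [G.adj_comm y]
  exact Nat.add_le_add_right (card_filter_le _ _) _

variable [DecidableEq V]

theorem degIn_insert_le : degIn G (insert x S) v ≤ degIn G S v + 1 := by
  unfold degIn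
  rw [filter_insert]
  split_ifs
  · exact card_insert_le _ _
  · omega

theorem degIn_add_degIn_sdiff (h : S ⊆ T) (v : V) :
    degIn G S v + degIn G (T \ S) v = degIn G T v := by
  rw [degIn, degIn, degIn, ← card_union_of_disjoint, ← filter_union, union_sdiff_of_subset h]
  exact disjoint_filter_filter disjoint_sdiff

theorem degIn_add_degIn_compl [Fintype V] (S : Finset V) (v : V) :
    degIn G S v + degIn G Sᶜ v = G.degree v := by
  rw [compl_eq_univ_sdiff, degIn_add_degIn_sdiff (subset_univ S), degIn_univ]

theorem countP_eq_card_filter {p : V → Prop} [DecidablePred p] {l : List V} (hl : l.Nodup) :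
    l.countP p = #{x ∈ l.toFinset | p x} := by
  rw [List.countP_eq_length_filter, ← List.toFinset_card_of_nodup (hl.filter _),
    List.toFinset_filter]
  simp

end DegIn

section HamiltonConnected

variable {V : Type*} {G : SimpleGraph V} [DecidableRel G.Adj]

theorem exists_hamiltonian_closed_chain [Fintype V] (h : Fintype.card V ≤ 2 * G.minDegree) (a : V) :
    ∃ M : List V, (a :: M).Nodup ∧ (∀ x, x ∈ a :: M) ∧ (a :: M ++ [a]).IsChain G.Adj := by
  classical
  set T := (univ.erase a).toList with hT
  have hnodup : (a :: T).Nodup := by simp [hT, nodup_toList]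
  have hmem (x : V) : x ∈ a :: T := by simp [hT, em]
  have huniv : (a :: T).toFinset = univ := by ext x; simpa using hmem x
  have hcard : (a :: T).length = Fintype.card V := by
    rw [← List.toFinset_card_of_nodup hnodup, huniv, card_univ]
  have hcount {l : List V} (hl : l.Perm (a :: T)) (x : V) :
      Fintype.card V ≤ 2 * l.countP (G.Adj x ·) := by
    have hdeg := h.trans (Nat.mul_le_mul_left 2 (G.minDegree_le_degree x))
    rw [hl.countP_eq, countP_eq_card_filter hnodup]
    rwa [← degIn_univ, degIn, ← huniv] at hdeg
  obtain ⟨l, hl, hchain⟩ := exists_isChain_rearrangement (G := G) (l := a :: T ++ [a])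
      fun x _ y _ _ => by
    have hx := hcount (l := (a :: T ++ [a]).dropLast) (by rw [List.dropLast_concat]) x
    have hy := hcount (l := (a :: T ++ [a]).tail) (List.perm_append_singleton a T) y
    simp only [List.length_append, hcard, List.length_singleton]
    omega
  obtain ⟨M, hM, rfl⟩ := hl.exists_eq_cons_append
  exact ⟨M, (hM.cons a).nodup_iff.mpr hnodup, fun x => (hM.cons a).mem_iff.mpr (hmem x), hchain⟩

theorem exists_spanning_path [DecidableEq V] {H : Finset V}
    (h : ∀ x ∈ H, #H < 2 * degIn G H x) {u v : V} (hu : u ∈ H) (hv : v ∈ H) (huv : u ≠ v) :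
    ∃ M : List V, (u :: M ++ [v]).Nodup ∧ (u :: M ++ [v]).toFinset = H ∧
      (u :: M ++ [v]).IsChain G.Adj := by
  set L := u :: (H \ {u, v}).toList ++ [v] with hL
  have hnodup : L.Nodup := by simp [hL, nodup_toList, List.nodup_append, huv]
  have hLH : L.toFinset = H := by
    ext
    simp only [hL, List.mem_toFinset, List.cons_append, List.mem_cons, List.mem_append, mem_toList,
      mem_sdiff, mem_insert, mem_singleton, List.not_mem_nil]
    grind
  have hcount {l : List V} {x y : V} (hl : l.Nodup) (hlH : H = insert y l.toFinset) (hx : x ∈ H) :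
      #H ≤ 2 * l.countP (G.Adj x ·) + 1 := by
    have hdeg := h x hx
    have hinsert : degIn G H x ≤ degIn G l.toFinset x + 1 := by rw [hlH]; exact degIn_insert_le
    rw [countP_eq_card_filter hl]
    unfold degIn at *
    omega
  have hdropLast {x : V} : x ∈ H → _ := hcount (x := x) (y := v) (hnodup.sublist L.dropLast_sublist)
    (by rw [← hLH, hL, List.dropLast_concat, List.toFinset_append]; simp [insert_comm])
  have htail {x : V} : x ∈ H → _ := hcount (x := x) (y := u) (hnodup.sublist L.tail_sublist)
    (by rw [← hLH, hL]; ext; simp)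
  have hcard : L.length = #H := by rw [← hLH, List.toFinset_card_of_nodup hnodup]
  obtain ⟨l, hl, hchain⟩ := exists_isChain_rearrangement (G := G) (l := L) fun a ha b hb _ => by
    have ha' := hdropLast (by simpa [← hLH] using List.mem_of_mem_dropLast ha)
    have hb' := htail (by simpa [← hLH] using List.mem_of_mem_tail hb)
    omega
  obtain ⟨M, -, rfl⟩ := hl.exists_eq_cons_append
  exact ⟨M, hl.perm.nodup_iff.mpr hnodup, by rw [List.toFinset_eq_of_perm _ _ hl.perm, hLH], hchain⟩

end HamiltonConnected

section Gap

variable {α : Type*} {p : α → Prop} [DecidablePred p] {g : ℕ}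

theorem countP_mul_le_of_gap {l : List α}
    (h : ∀ x M y, x :: M ++ [y] <:+: l → p x → p y → g ≤ M.length) :
    l.countP p * (g + 1) ≤ l.length + g := by
  induction hn : l.length using Nat.strong_induction_on generalizing l with
  | _ n ih =>
    obtain _ | ⟨x, t⟩ := l
    · simp
    rw [List.length_cons] at hn
    by_cases hx : p x
    swap
    · have := ih t.length (by omega)
        (fun _ _ _ hl => h _ _ _ (hl.trans (List.suffix_cons x t).isInfix)) rfl
      rw [List.countP_cons_of_neg (by simpa using hx)]
      omega
    set M := t.takeWhile (¬ p ·)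
    obtain ⟨R, hR⟩ : ∃ R, t.dropWhile (¬ p ·) = R := ⟨_, rfl⟩
    have ht : t = M ++ R := by rw [← hR, List.takeWhile_append_dropWhile]
    have hM : M.countP p = 0 := List.countP_eq_zero.mpr fun y hy => by
      simpa using List.mem_takeWhile_imp hy
    have hlen : t.length = M.length + R.length := by rw [ht, List.length_append]
    have hcount : (x :: t).countP p = R.countP p + 1 := by
      rw [List.countP_cons_of_pos (by simpa using hx), ht, List.countP_append, hM, zero_add]
    have hih := ih R.length (by omega) (fun _ _ _ hl => h _ _ _
      (hl.trans ⟨x :: M, [], by rw [ht]; simp⟩)) rfl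
    obtain _ | ⟨y, R⟩ := R
    · rw [hcount, List.countP_nil, zero_add, one_mul]
      omega
    have hy : p y := by
      have := List.head?_dropWhile_not (fun z => decide (¬ p z)) t
      simpa only [hR, List.head?_cons, decide_eq_false_iff_not, not_not] using this
    have hgap := h x M y ⟨[], R, by simp [ht]⟩ hx hy
    rw [hcount, add_one_mul]
    omega

theorem countP_mul_add_le_of_gap {x y : α} {l : List α}
    (h : ∀ a M b, a :: M ++ [b] <:+: x :: l ++ [y] → p a → p b → g ≤ M.length) :
    (x :: l ++ [y]).countP p * (g + 1) + ((if p x then 0 else 1) + if p y then 0 else 1) ≤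
      l.length + 2 + g := by
  have hl {l' : List α} (hl' : l' <:+: x :: l ++ [y]) : l'.countP p * (g + 1) ≤ l'.length + g :=
    countP_mul_le_of_gap fun a M b hM => h a M b (hM.trans hl')
  by_cases hx : p x <;> by_cases hy : p y
  · simpa [hx, hy] using hl (List.infix_refl _)
  · have := hl (l' := x :: l) ⟨[], [y], rfl⟩
    rw [show (x :: l ++ [y]).countP p = (x :: l).countP p by simp [hx, hy], if_pos hx, if_neg hy]
    rw [List.length_cons] at this
    omega
  · have := hl (l' := l ++ [y]) ⟨[x], [], by simp⟩
    rw [show (x :: l ++ [y]).countP p = (l ++ [y]).countP p by simp [hx], if_neg hx, if_pos hy]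
    rw [List.length_append, List.length_singleton] at this
    omega
  · have := hl (l' := l) ⟨[x], [y], rfl⟩
    rw [show (x :: l ++ [y]).countP p = l.countP p by simp [hx, hy], if_neg hx, if_neg hy]
    omega

end Gap

section Splice

variable {α : Type*} {s t x y : α} {P M : List α}

theorem isChain_cons_concat {R : α → α → Prop} {u v : α}
    (h : (u :: M ++ [v]).IsChain R) (hxu : R x u) (hvy : R v y) :
    (x :: (u :: M ++ [v]) ++ [y]).IsChain R := by
  rw [List.isChain_append]
  refine ⟨List.isChain_cons_cons.mpr ⟨hxu, h⟩, by simp, ?_⟩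
  rw [← List.cons_append, List.getLast?_concat]
  simpa using hvy

theorem isChain_replace {R : α → α → Prop} {A B N : List α}
    (h : (A ++ (x :: M ++ [y]) ++ B).IsChain R) (hN : (x :: N ++ [y]).IsChain R) :
    (A ++ (x :: N ++ [y]) ++ B).IsChain R := by
  rw [List.isChain_append, List.isChain_append] at h ⊢
  refine ⟨⟨h.1.1, hN, by simpa using h.1.2.2⟩, h.2.1, ?_⟩
  simpa only [← List.append_assoc, List.getLast?_concat] using h.2.2

theorem exists_splice {R : α → α → Prop} (h : x :: M ++ [y] <:+: s :: P ++ [t])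
    (hP : (s :: P ++ [t]).IsChain R) :
    ∃ A B, P = A ++ M ++ B ∧
      ∀ N, (x :: N ++ [y]).IsChain R → (s :: (A ++ N ++ B) ++ [t]).IsChain R := by
  obtain ⟨A₀, B₀, h⟩ := h
  obtain ⟨A, hA⟩ : ∃ A, A₀ ++ [x] = s :: A := by
    cases A₀ with
    | nil => exact ⟨[], by simpa using (List.cons_eq_cons.mp h).1⟩
    | cons a A => exact ⟨A ++ [x], by simpa using (List.cons_eq_cons.mp h).1⟩
  obtain ⟨B, hB⟩ : ∃ B, y :: B₀ = B ++ [t] := by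
    obtain rfl | ⟨B, b, rfl⟩ := B₀.eq_nil_or_concat'
    · exact ⟨[], by simpa [List.getLast?_cons] using congrArg List.getLast? h⟩
    · exact ⟨y :: B, by simpa [List.getLast?_cons] using congrArg List.getLast? h⟩
  have hsplit (N : List α) : A₀ ++ (x :: N ++ [y]) ++ B₀ = s :: (A ++ N ++ B) ++ [t] := by
    calc A₀ ++ (x :: N ++ [y]) ++ B₀ = (A₀ ++ [x]) ++ N ++ (y :: B₀) := by simp
      _ = s :: (A ++ N ++ B) ++ [t] := by simp [hA, hB]
  refine ⟨A, B, ?_, fun N hN => ?_⟩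
  · rw [hsplit] at h
    exact (List.cons_injective (List.append_cancel_right h)).symm
  · rw [← hsplit]
    exact isChain_replace (by rwa [h]) hN

end Splice

/-! ### Path systems and linkages -/

section PathSystem

variable {ι V : Type*} {s : ι → V} {P : ι → List V}

/-- Pairwise disjoint simple paths, where the `i`-th path starts at the terminal `s i` and continues
with the list `P i`. -/
structure IsPathSystem (s : ι → V) (P : ι → List V) : Prop where
  nodup : ∀ i, (s i :: P i).Nodup
  disjoint : Pairwise fun i j => List.Disjoint (s i :: P i) (s j :: P j)

theorem IsPathSystem.injective (h : IsPathSystem s P) : Injective s := fun i j hij => by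
  by_contra hne
  exact h.disjoint hne (List.mem_cons_self ..) (hij ▸ List.mem_cons_self ..)

theorem IsPathSystem.notMem (h : IsPathSystem s P) (i j : ι) : s i ∉ P j := fun hmem => by
  obtain rfl | hij := eq_or_ne i j
  · exact (List.nodup_cons.mp (h.nodup i)).1 hmem
  · exact h.disjoint hij (List.mem_cons_self ..) (List.mem_cons_of_mem _ hmem)

variable [Fintype ι]

theorem sum_length_update [DecidableEq ι] (P : ι → List V) (i : ι) (L : List V) :
    ∑ j, (update P i L j).length + (P i).length = ∑ j, (P j).length + L.length := by
  rw [← add_sum_erase _ _ (mem_univ i), ← add_sum_erase univ (fun j => (P j).length) (mem_univ i),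
    update_self, sum_congr rfl fun j hj => by rw [update_of_ne (ne_of_mem_erase hj)]]
  omega

variable [DecidableEq V] {x : V} {i : ι}

/-- The set of vertices of the paths of a path system. -/
def pathSupport (s : ι → V) (P : ι → List V) : Finset V :=
  univ.biUnion fun i => (s i :: P i).toFinset

theorem mem_pathSupport : x ∈ pathSupport s P ↔ ∃ i, x = s i ∨ x ∈ P i := by
  simp [pathSupport]

theorem terminal_mem_pathSupport (i : ι) : s i ∈ pathSupport s P :=
  mem_pathSupport.mpr ⟨i, .inl rfl⟩

theorem mem_pathSupport_of_mem (h : x ∈ P i) : x ∈ pathSupport s P :=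
  mem_pathSupport.mpr ⟨i, .inr h⟩

theorem IsPathSystem.sum_pathSupport (h : IsPathSystem s P) (f : V → ℕ) :
    ∑ x ∈ pathSupport s P, f x = ∑ i, ((s i :: P i).map f).sum := by
  rw [pathSupport, sum_biUnion fun i _ j _ hij => by
    simpa [List.disjoint_toFinset_iff_disjoint] using h.disjoint hij]
  exact sum_congr rfl fun i _ => List.sum_toFinset f (h.nodup i)

theorem IsPathSystem.card_pathSupport (h : IsPathSystem s P) :
    #(pathSupport s P) = ∑ i, ((P i).length + 1) := by
  rw [card_eq_sum_ones, h.sum_pathSupport]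
  simp [add_comm]

theorem IsPathSystem.card_filter_pathSupport (h : IsPathSystem s P) (p : V → Prop)
    [DecidablePred p] : #{x ∈ pathSupport s P | p x} = ∑ i, (s i :: P i).countP p := by
  rw [card_filter, h.sum_pathSupport]
  refine sum_congr rfl fun i _ => ?_
  induction s i :: P i with
  | nil => rfl
  | cons y l ih => simp [List.countP_cons, ih, add_comm]

variable [DecidableEq ι] {L : List V}

theorem IsPathSystem.update (h : IsPathSystem s P) (i : ι) (hL : L.Nodup)
    (hPL : ∀ x ∈ L, x ∈ P i ∨ x ∉ pathSupport s P) : IsPathSystem s (update P i L) := by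
  have hfresh {j x} (hx : x ∈ L) (hij : i ≠ j) : x ∉ s j :: P j := fun hxj => by
    obtain hxi | hxP := hPL x hx
    · exact h.disjoint hij (List.mem_cons_of_mem _ hxi) hxj
    · exact hxP (mem_pathSupport.mpr ⟨j, by simpa using hxj⟩)
  have hsL : s i ∉ L := fun hi =>
    (hPL _ hi).elim (h.notMem i i) fun hnot => hnot (terminal_mem_pathSupport i)
  have hdisj {j} (hij : i ≠ j) : List.Disjoint (s i :: L) (s j :: P j) := by
    rw [List.disjoint_cons_left]
    exact ⟨fun hi => h.disjoint hij (List.mem_cons_self ..) hi, fun x hx => hfresh hx hij⟩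
  refine ⟨fun j => ?_, fun j j' hjj' => ?_⟩
  · obtain rfl | hj := eq_or_ne j i
    · simpa using ⟨hsL, hL⟩
    · simpa [hj] using h.nodup j
  · obtain rfl | hj := eq_or_ne j i
    · simpa [hjj'.symm] using hdisj hjj'
    obtain rfl | hj' := eq_or_ne j' i
    · simpa [hj] using (hdisj hj.symm).symm
    · simpa [hj, hj'] using h.disjoint hjj'

theorem IsPathSystem.mem_pathSupport_update (h : IsPathSystem s P) :
    x ∈ pathSupport s (Function.update P i L) ↔ x ∈ L ∨ x ∈ pathSupport s P ∧ x ∉ P i := by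
  simp only [mem_pathSupport]
  constructor
  · rintro ⟨j, rfl | hx⟩
    · exact .inr ⟨⟨j, .inl rfl⟩, h.notMem j i⟩
    obtain rfl | hj := eq_or_ne j i
    · exact .inl (by simpa using hx)
    · rw [update_of_ne hj] at hx
      exact .inr ⟨⟨j, .inr hx⟩, fun hxi => h.disjoint hj (List.mem_cons_of_mem _ hx)
        (List.mem_cons_of_mem _ hxi)⟩
  · rintro (hx | ⟨⟨j, rfl | hx⟩, hxi⟩)
    · exact ⟨i, .inr (by simpa using hx)⟩
    · exact ⟨j, .inl rfl⟩
    · exact ⟨j, .inr (by rwa [update_of_ne (by rintro rfl; exact hxi hx)])⟩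

end PathSystem

section Linkage

variable {V : Type*} {G : SimpleGraph V} {k : ℕ} [NeZero k] {s : Fin k → V}
  {T : Finset (Fin k)} {P : Fin k → List V} {i : Fin k} {L M N : List V} {x y : V}

/-- The `i`-th path of a path system, extended by the next terminal in the cyclic order. -/
abbrev arc (s : Fin k → V) (P : Fin k → List V) (i : Fin k) : List V :=
  s i :: P i ++ [s (i + 1)]

/-- For `i ∈ T` the `i`-th path of the system leads in `G` from the terminal `s i` to the next
terminal `s (i + 1)`; the other terminals carry no path yet. -/
structure IsLinkage (G : SimpleGraph V) (s : Fin k → V) (T : Finset (Fin k))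
    (P : Fin k → List V) : Prop where
  isPathSystem : IsPathSystem s P
  isChain : ∀ i ∈ T, (arc s P i).IsChain G.Adj
  eq_nil : ∀ i ∉ T, P i = []

theorem sum_terminal_succ (s : Fin k → V) (f : V → ℕ) : ∑ i, f (s (i + 1)) = ∑ i, f (s i) :=
  Equiv.sum_comp (Equiv.addRight (1 : Fin k)) fun i => f (s i)

theorem sum_map_tail_arc (P : Fin k → List V) (f : V → ℕ) :
    ∑ i, ((P i ++ [s (i + 1)]).map f).sum = ∑ i, ((s i :: P i).map f).sum := by
  simp [sum_add_distrib, sum_terminal_succ, add_comm]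

variable [DecidableEq V]

theorem IsLinkage.update_insert (h : IsLinkage G s T P) (i : Fin k) (hL : L.Nodup)
    (hPL : ∀ x ∈ L, x ∈ P i ∨ x ∉ pathSupport s P)
    (hchain : (s i :: L ++ [s (i + 1)]).IsChain G.Adj) :
    IsLinkage G s (insert i T) (update P i L) where
  isPathSystem := h.isPathSystem.update i hL hPL
  isChain j hj := by
    obtain rfl | hji := eq_or_ne j i
    · simpa using hchain
    · simpa [hji] using h.isChain j (mem_of_mem_insert_of_ne hj hji)
  eq_nil j hj := by
    rw [mem_insert, not_or] at hj
    rw [update_of_ne hj.1, h.eq_nil j hj.2]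

theorem IsLinkage.reroute (h : IsLinkage G s T P) (hi : i ∈ T) (hM : x :: M ++ [y] <:+: arc s P i)
    (hN : N.Nodup) (hNP : ∀ z ∈ N, z ∉ pathSupport s P) (hchain : (x :: N ++ [y]).IsChain G.Adj) :
    ∃ L, IsLinkage G s T (update P i L) ∧ L.length + M.length = (P i).length + N.length ∧
      ∀ v, v ∉ pathSupport s (update P i L) ↔ v ∈ M ∨ v ∉ pathSupport s P ∧ v ∉ N := by
  obtain ⟨A, B, hP, hreplace⟩ := exists_splice hM (h.isChain i hi)
  have hnodup : (A ++ M ++ B).Nodup := hP ▸ (List.nodup_cons.mp (h.isPathSystem.nodup i)).2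
  have hdisj : ∀ z ∈ M, z ∉ A ∧ z ∉ B := fun z hz => by
    simp only [List.nodup_append, List.mem_append] at hnodup
    exact ⟨fun hzA => hnodup.1.2.2 z hzA z hz rfl, fun hzB => hnodup.2.2 z (.inr hz) z hzB rfl⟩
  have hmem (z : V) (hz : z ∈ A ++ M ++ B) : z ∈ pathSupport s P :=
    mem_pathSupport_of_mem (hP ▸ hz)
  have hfresh (z : V) (hz : z ∈ N) : z ∉ A ++ M ++ B := fun h => hNP z hz (hmem z h)
  have hnodup' : (A ++ N ++ B).Nodup := by
    have hAB : (A ++ B).Nodup := hnodup.sublist (by simp)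
    have hperm : (A ++ N ++ B).Perm (N ++ (A ++ B)) := by
      rw [← List.append_assoc]
      exact List.perm_append_comm.append_right B
    exact hperm.nodup_iff.mpr (List.nodup_append'.mpr ⟨hN, hAB, fun z hz hzAB =>
      hfresh z hz (by simp only [List.mem_append] at hzAB ⊢; tauto)⟩)
  refine ⟨A ++ N ++ B, ?_, ?_, fun v => ?_⟩
  · rw [← insert_eq_of_mem hi]
    refine h.update_insert i hnodup' (fun z hz => ?_) (hreplace N hchain)
    simp only [hP, List.mem_append] at hz ⊢
    exact hz.elim (fun h => h.elim (fun h => .inl (.inl (.inl h))) fun h => .inr (hNP z h))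
      fun h => .inl (.inr h)
  · simp only [hP, List.length_append]
    omega
  · have hM' := hdisj v
    have hv := hmem v
    have hN' := hNP v
    rw [h.isPathSystem.mem_pathSupport_update, hP]
    simp only [List.mem_append] at hv ⊢
    tauto

end Linkage

/-! ### Linkages with short paths -/

section Spread

variable {V : Type*} {α β : V → ℕ} {x y : V} {P : List V}

/-- The constraints on the numbers `α v`, `β v` of neighbours which the entries `v` of a list have
in two sets of two vertices each, when no shortcut and no detour of the list passes through these
sets. -/
structure IsSpread (α β : V → ℕ) (l : List V) : Prop where
  le_two (v : V) : α v ≤ 2 ∧ β v ≤ 2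
  window {w x y z : V} : [w, x, y, z] <:+: l → α w + α z ≤ 2 ∧ β w + β z ≤ 2
  triple {x y z : V} : [x, y, z] <:+: l →
    (1 ≤ β y → α x + α y + α z ≤ 4) ∧ (1 ≤ α y → β x + β y + β z ≤ 4)

/-- The sum of `f` over the two ends of every edge of the path `l`. -/
def edgeSum (f : V → ℕ) (l : List V) : ℕ :=
  (l.dropLast.map f).sum + (l.tail.map f).sum

theorem edgeSum_singleton (f : V → ℕ) (x : V) : edgeSum f [x] = 0 := rfl

theorem edgeSum_cons_cons (f : V → ℕ) (x y : V) (l : List V) :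
    edgeSum f (x :: y :: l) = f x + f y + edgeSum f (y :: l) := by
  simp only [edgeSum, List.dropLast_cons_cons, List.map_cons, List.sum_cons, List.tail_cons]
  omega

theorem IsSpread.symm {l : List V} (h : IsSpread α β l) : IsSpread β α l where
  le_two v := (h.le_two v).symm
  window hl := (h.window hl).symm
  triple hl := (h.triple hl).symm

theorem IsSpread.edgeSum_le_and (h : IsSpread α β (x :: P ++ [y])) (hP : P.length ≤ 3) :
    edgeSum (α + β) (x :: P ++ [y]) ≤ 4 * (P.length + 1) + 4 ∧
      (edgeSum (α + β) (x :: P ++ [y]) = 4 * (P.length + 1) + 4 →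
        α y = 2 → β y = 0 → α x = 0 ∧ β x = 2) := by
  have hx := h.le_two x
  have hy := h.le_two y
  match P with
  | [] =>
    simp only [List.cons_append, List.nil_append, edgeSum_cons_cons, edgeSum_singleton,
      Pi.add_apply, List.length_nil]
    omega
  | [a] =>
    have ha := h.le_two a
    have hxay := h.triple (show [x, a, y] <:+: _ from ⟨[], [], rfl⟩)
    simp only [List.cons_append, List.nil_append, edgeSum_cons_cons, edgeSum_singleton,
      Pi.add_apply, List.length_cons, List.length_nil]
    omega
  | [a, b] =>
    have ha := h.le_two a
    have hb := h.le_two b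
    have hxab := h.triple (show [x, a, b] <:+: _ from ⟨[], [y], rfl⟩)
    have haby := h.triple (show [a, b, y] <:+: _ from ⟨[x], [], rfl⟩)
    have hxaby := h.window (show [x, a, b, y] <:+: _ from ⟨[], [], rfl⟩)
    simp only [List.cons_append, List.nil_append, edgeSum_cons_cons, edgeSum_singleton,
      Pi.add_apply, List.length_cons, List.length_nil]
    omega
  | [a, b, c] =>
    have ha := h.le_two a
    have hb := h.le_two b
    have hc := h.le_two c
    have habc := h.triple (show [a, b, c] <:+: _ from ⟨[x], [y], rfl⟩)
    have hbcy := h.triple (show [b, c, y] <:+: _ from ⟨[x, a], [], rfl⟩)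
    have hxabc := h.window (show [x, a, b, c] <:+: _ from ⟨[], [y], rfl⟩)
    have habcy := h.window (show [a, b, c, y] <:+: _ from ⟨[x], [], rfl⟩)
    simp only [List.cons_append, List.nil_append, edgeSum_cons_cons, edgeSum_singleton,
      Pi.add_apply, List.length_cons, List.length_nil]
    omega

end Spread

section ShortLinkage

variable {V : Type*} {G : SimpleGraph V} {k : ℕ} [NeZero k] {s : Fin k → V}
  {T : Finset (Fin k)} {P : Fin k → List V} {i i₀ : Fin k} {M N : List V} {u v w x y z : V}

/-- A linkage whose paths have at most three inner vertices each. -/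
structure IsShortLinkage (G : SimpleGraph V) (s : Fin k → V) (T : Finset (Fin k))
    (P : Fin k → List V) : Prop extends IsLinkage G s T P where
  length_le : ∀ i, (P i).length ≤ 3

/-- A short linkage of least total length for `T` such that no short linkage, of whatever length,
links the terminal `s i₀` as well: the situation that the degree condition rules out. -/
structure IsBlocked (G : SimpleGraph V) (s : Fin k → V) (T : Finset (Fin k))
    (P : Fin k → List V) (i₀ : Fin k) : Prop extends IsShortLinkage G s T P where
  notMem : i₀ ∉ T
  minimal : ∀ Q, IsShortLinkage G s T Q → ∑ i, (P i).length ≤ ∑ i, (Q i).length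
  not_exists_insert : ∀ Q, ¬IsShortLinkage G s (insert i₀ T) Q

variable [DecidableEq V]

theorem IsShortLinkage.update_insert (h : IsShortLinkage G s T P) (i : Fin k) (hN : N.Nodup)
    (hNP : ∀ z ∈ N, z ∉ pathSupport s P) (hlen : N.length ≤ 3)
    (hchain : (s i :: N ++ [s (i + 1)]).IsChain G.Adj) :
    IsShortLinkage G s (insert i T) (update P i N) where
  toIsLinkage := h.toIsLinkage.update_insert i hN (fun z hz => .inr (hNP z hz)) hchain
  length_le := (forall_update_iff P fun _ L => L.length ≤ 3).mpr ⟨hlen, fun j _ => h.length_le j⟩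

theorem IsShortLinkage.reroute (h : IsShortLinkage G s T P) (hM : x :: M ++ [y] <:+: arc s P i)
    (hM₀ : M ≠ []) (hv : v ∉ pathSupport s P) (hxv : G.Adj x v) (hvy : G.Adj v y) :
    ∃ L, IsShortLinkage G s T (update P i L) ∧ L.length + M.length = (P i).length + 1 ∧
      ∀ z, z ∉ pathSupport s (update P i L) ↔ z ∈ M ∨ z ∉ pathSupport s P ∧ z ≠ v := by
  have hpos := List.length_pos_iff.mpr hM₀
  have hi : i ∈ T := by
    by_contra hT
    have hlen := hM.length_le
    simp only [arc, h.eq_nil i hT, List.length_append, List.length_cons, List.length_nil] at hlen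
    omega
  obtain ⟨L, hL, hlen, hmem⟩ := h.toIsLinkage.reroute hi hM (N := [v]) (by simp) (by simpa)
    (by simpa using ⟨hxv, hvy⟩)
  have hPi := h.length_le i
  rw [List.length_singleton] at hlen
  exact ⟨L, ⟨hL, (forall_update_iff P fun _ L => L.length ≤ 3).mpr
    ⟨by omega, fun j _ => h.length_le j⟩⟩, hlen, by simpa using hmem⟩

theorem IsBlocked.not_isChain (h : IsBlocked G s T P i₀) (hN : N.Nodup)
    (hNP : ∀ z ∈ N, z ∉ pathSupport s P) (hlen : N.length ≤ 3) :
    ¬(s i₀ :: N ++ [s (i₀ + 1)]).IsChain G.Adj := fun hchain =>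
  h.not_exists_insert _ (h.toIsShortLinkage.update_insert i₀ hN hNP hlen hchain)

theorem IsBlocked.not_adj_next (h : IsBlocked G s T P i₀) (hv : v ∉ pathSupport s P)
    (hsv : G.Adj (s i₀) v) : ¬G.Adj v (s (i₀ + 1)) := fun hvs =>
  h.not_isChain (N := [v]) (by simp) (by simpa) (by simp) (by simpa using ⟨hsv, hvs⟩)

theorem IsBlocked.not_adj_of_window (h : IsBlocked G s T P i₀)
    (hw : [w, x, y, z] <:+: arc s P i) (hv : v ∉ pathSupport s P) (hwv : G.Adj w v) :
    ¬G.Adj v z := fun hvz => by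
  obtain ⟨L, hL, hlen, -⟩ := h.toIsShortLinkage.reroute (M := [x, y]) hw (by simp) hv hwv hvz
  have hmin := h.minimal _ hL
  have hsum := sum_length_update P i L
  simp only [List.length_cons, List.length_nil] at hlen
  omega

theorem IsBlocked.not_adj_of_triple (h : IsBlocked G s T P i₀)
    (hxyz : [x, y, z] <:+: arc s P i) (hu : u ∉ pathSupport s P) (hv : v ∉ pathSupport s P)
    (hw : w ∉ pathSupport s P) (huw : u ≠ w) (huv : u ≠ v) (hwv : w ≠ v)
    (hsu : G.Adj (s i₀) u) (hws : G.Adj w (s (i₀ + 1))) (huy : G.Adj u y) (hyw : G.Adj y w)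
    (hxv : G.Adj x v) : ¬G.Adj v z := fun hvz => by
  obtain ⟨L, hL, -, hmem⟩ := h.toIsShortLinkage.reroute (M := [y]) hxyz (by simp) hv hxv hvz
  refine h.not_exists_insert _ (hL.update_insert i₀ (N := [u, y, w])
    (by simp [huy.ne, hyw.ne, huw]) (fun t ht => (hmem t).mpr ?_) (by simp)
    (by simpa using ⟨hsu, huy, hyw, hws⟩))
  obtain rfl | rfl | rfl : t = u ∨ t = y ∨ t = w := by simpa using ht
  · exact .inr ⟨hu, huv⟩
  · exact .inl (by simp)
  · exact .inr ⟨hw, hwv⟩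

end ShortLinkage

section Alternation

open scoped Fin.CommRing Fin.NatCast

theorem of_alternating {k : ℕ} [NeZero k] (hodd : Odd k) {p q : Fin k → Prop} {i₀ : Fin k}
    (h₀ : p i₀) (hpq : ∀ i ≠ i₀, p (i + 1) → q i) (hqp : ∀ i ≠ i₀, q (i + 1) → p i) :
    p (i₀ + 1) := by
  obtain ⟨n, rfl⟩ := hodd
  have hne {m : ℕ} (hm : m + 1 < 2 * n + 1) : i₀ - (m + 1 : ℕ) ≠ i₀ := by
    rw [Ne, sub_eq_self, Fin.natCast_eq_zero]
    exact Nat.not_dvd_of_pos_of_lt m.succ_pos hm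
  have hstep (m : ℕ) : i₀ - (m + 1 : ℕ) + 1 = i₀ - (m : ℕ) := by push_cast; ring
  have heven (m : ℕ) (hm : 2 * m < 2 * n + 1) : p (i₀ - (2 * m : ℕ)) := by
    induction m with
    | zero => simpa using h₀
    | succ m ih =>
      have hp := ih (by omega)
      have hq := hpq (i₀ - (2 * m + 1 : ℕ)) (hne (by omega)) (by rwa [hstep])
      exact hqp (i₀ - (2 * m + 1 + 1 : ℕ)) (hne (by omega)) (by rwa [hstep])
  have hlast : i₀ - (2 * n : ℕ) = i₀ + 1 := by
    have : ((2 * n + 1 : ℕ) : Fin (2 * n + 1)) = 0 := Fin.natCast_self _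
    push_cast at this ⊢
    linear_combination -this
  exact hlast ▸ heven n (by omega)

end Alternation

section Blocked

variable {V : Type*} [DecidableEq V] {G : SimpleGraph V} [DecidableRel G.Adj] {k : ℕ} [NeZero k]
  {s : Fin k → V} {T : Finset (Fin k)} {P : Fin k → List V} {i₀ : Fin k} {A B : Finset V} {a b : V}

theorem IsBlocked.isSpread (h : IsBlocked G s T P i₀)
    (hA : ∀ a ∈ A, a ∉ pathSupport s P ∧ G.Adj (s i₀) a)
    (hB : ∀ b ∈ B, b ∉ pathSupport s P ∧ G.Adj b (s (i₀ + 1))) (hcardA : #A = 2) (hcardB : #B = 2)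
    (i : Fin k) : IsSpread (degIn G A) (degIn G B) (arc s P i) where
  le_two v := ⟨degIn_le_card.trans hcardA.le, degIn_le_card.trans hcardB.le⟩
  window hwxyz :=
    ⟨(degIn_add_degIn_le_card fun v hv => h.not_adj_of_window hwxyz (hA v hv).1).trans hcardA.le,
      (degIn_add_degIn_le_card fun v hv => h.not_adj_of_window hwxyz (hB v hv).1).trans hcardB.le⟩
  triple hxyz := by
    have hne {a b : V} (ha : a ∈ A) (hb : b ∈ B) : a ≠ b := fun hab =>
      h.not_adj_next (hA a ha).1 (hA a ha).2 (hab ▸ (hB b hb).2)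
    constructor <;> intro hpos <;> obtain ⟨w, hw, hyw⟩ := exists_adj_of_degIn_pos hpos
    · exact degIn_add_degIn_add_degIn_le hcardA fun u hu v hv huv huy =>
        h.not_adj_of_triple hxyz (hA u hu).1 (hA v hv).1 (hB w hw).1 (hne hu hw) huv
          (hne hv hw).symm (hA u hu).2 (hB w hw).2 huy hyw
    · exact degIn_add_degIn_add_degIn_le hcardB fun u hu v hv huv huy =>
        h.not_adj_of_triple hxyz (hA w hw).1 (hB v hv).1 (hB u hu).1 (hne hw hu) (hne hw hv) huv
          (hA w hw).2 (hB u hu).2 hyw.symm huy.symm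

variable [Fintype V]

theorem IsBlocked.degIn_add_degIn_add_two_le (h : IsBlocked G s T P i₀)
    (ha : a ∉ pathSupport s P ∧ G.Adj (s i₀) a) (hb : b ∉ pathSupport s P ∧ G.Adj b (s (i₀ + 1))) :
    degIn G (pathSupport s P)ᶜ a + degIn G (pathSupport s P)ᶜ b + 2 ≤ #(pathSupport s P)ᶜ := by
  have hne : a ≠ b := fun hab => h.not_adj_next ha.1 ha.2 (hab ▸ hb.2)
  refine degIn_add_degIn_add_two_le_card (mem_compl.mpr ha.1) (mem_compl.mpr hb.1) hne
    (fun hab => ?_) fun v hv hav hvb => ?_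
  · exact h.not_isChain (N := [a, b]) (by simpa) (by simpa using ⟨ha.1, hb.1⟩) (by simp)
      (by simpa using ⟨ha.2, hab, hb.2⟩)
  · exact h.not_isChain (N := [a, v, b]) (by simpa using ⟨⟨hav.ne, hne⟩, hvb.ne⟩)
      (by simpa using ⟨ha.1, mem_compl.mp hv, hb.1⟩) (by simp)
      (by simpa using ⟨ha.2, hav, hvb, hb.2⟩)

theorem IsBlocked.le_sum_degIn (h : IsBlocked G s T P i₀)
    (hdeg : Fintype.card V + 2 * (k / 2) ≤ 2 * G.minDegree + 2)
    (hA : ∀ a ∈ A, a ∉ pathSupport s P ∧ G.Adj (s i₀) a)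
    (hB : ∀ b ∈ B, b ∉ pathSupport s P ∧ G.Adj b (s (i₀ + 1)))
    (hcardA : #A = 2) (hcardB : #B = 2) :
    2 * #(pathSupport s P) + 4 * (k / 2) ≤
      ∑ v ∈ pathSupport s P, (degIn G A v + degIn G B v) := by
  obtain ⟨a, a', ha, rfl⟩ := card_eq_two.mp hcardA
  obtain ⟨b, b', hb, rfl⟩ := card_eq_two.mp hcardB
  rw [sum_add_distrib, sum_degIn_comm _ {a, a'}, sum_degIn_comm _ {b, b'}, sum_pair ha, sum_pair hb]
  have hab := h.degIn_add_degIn_add_two_le (hA a (by simp)) (hB b (by simp))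
  have hab' := h.degIn_add_degIn_add_two_le (hA a' (by simp)) (hB b' (by simp))
  have hdegree (v : V) := (degIn_add_degIn_compl (G := G) (pathSupport s P) v).ge.trans'
    (G.minDegree_le_degree v)
  have ha := hdegree a
  have ha' := hdegree a'
  have hb := hdegree b
  have hb' := hdegree b'
  have hcard := card_add_card_compl (pathSupport s P)
  omega

end Blocked

section BlockedCount

variable {V : Type*} [DecidableEq V] {G : SimpleGraph V} {k : ℕ} [NeZero k]
  {s : Fin k → V} {T : Finset (Fin k)} {P : Fin k → List V} {i₀ : Fin k} {A B : Finset V}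

theorem IsShortLinkage.card_pathSupport_add_three_le (h : IsShortLinkage G s T P)
    (hi₀ : i₀ ∉ T) : #(pathSupport s P) + 3 ≤ 4 * k := by
  have hnil := h.eq_nil i₀ hi₀
  calc #(pathSupport s P) + 3 = ∑ i, ((P i).length + 1 + if i = i₀ then 3 else 0) := by
        rw [sum_add_distrib, sum_ite_eq' univ i₀, if_pos (mem_univ i₀),
          h.isPathSystem.card_pathSupport]
    _ ≤ ∑ _i : Fin k, 4 := sum_le_sum fun i _ => by
        have := h.length_le i
        split_ifs with hi
        · simp [hi, hnil]
        · omega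
    _ = 4 * k := by simp [mul_comm]

theorem IsPathSystem.sum_edgeSum (h : IsPathSystem s P) (f : V → ℕ) :
    ∑ i, edgeSum f (arc s P i) = 2 * ∑ v ∈ pathSupport s P, f v := by
  simp only [edgeSum, arc, List.dropLast_concat]
  simp only [List.cons_append, List.tail_cons]
  rw [sum_add_distrib, sum_map_tail_arc, ← h.sum_pathSupport, two_mul]

variable [DecidableRel G.Adj]

theorem IsBlocked.edgeSum_add_le (h : IsBlocked G s T P i₀)
    (hA : ∀ a ∈ A, a ∉ pathSupport s P ∧ G.Adj (s i₀) a)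
    (hB : ∀ b ∈ B, b ∉ pathSupport s P ∧ G.Adj b (s (i₀ + 1)))
    (hcardA : #A = 2) (hcardB : #B = 2) (i : Fin k) :
    edgeSum (degIn G A + degIn G B) (arc s P i) + (if i = i₀ then 4 else 0) ≤
      4 * ((P i).length + 1) + 4 := by
  split_ifs with hi
  · have hA₀ := degIn_le_card (G := G) (S := A) (v := s i₀)
    have hB₀ := degIn_le_card (G := G) (S := B) (v := s (i₀ + 1))
    have hB₁ := degIn_eq_zero fun b hb hsb => h.not_adj_next (hB b hb).1 hsb (hB b hb).2
    have hA₁ := degIn_eq_zero fun a ha hsa => h.not_adj_next (hA a ha).1 (hA a ha).2 hsa.symm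
    simp only [hi, arc, h.eq_nil i₀ h.notMem, List.cons_append, List.nil_append, edgeSum_cons_cons,
      edgeSum_singleton, Pi.add_apply, hA₁, hB₁, List.length_nil]
    omega
  · exact ((h.isSpread hA hB hcardA hcardB i).edgeSum_le_and (h.length_le i)).1

variable [Fintype V]

theorem IsBlocked.odd_and_edgeSum_eq (h : IsBlocked G s T P i₀)
    (hdeg : Fintype.card V + 2 * (k / 2) ≤ 2 * G.minDegree + 2)
    (hA : ∀ a ∈ A, a ∉ pathSupport s P ∧ G.Adj (s i₀) a)
    (hB : ∀ b ∈ B, b ∉ pathSupport s P ∧ G.Adj b (s (i₀ + 1)))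
    (hcardA : #A = 2) (hcardB : #B = 2) :
    Odd k ∧ ∀ i ≠ i₀,
      edgeSum (degIn G A + degIn G B) (arc s P i) = 4 * ((P i).length + 1) + 4 := by
  have hle (i : Fin k) := h.edgeSum_add_le hA hB hcardA hcardB i
  have hsum : ∑ i, (edgeSum (degIn G A + degIn G B) (arc s P i) + if i = i₀ then 4 else 0) =
      2 * (∑ v ∈ pathSupport s P, (degIn G A v + degIn G B v)) + 4 := by
    rw [sum_add_distrib, sum_ite_eq' univ i₀, if_pos (mem_univ i₀), h.isPathSystem.sum_edgeSum]
    rfl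
  have hbound : ∑ i, (4 * ((P i).length + 1) + 4) = 4 * #(pathSupport s P) + 4 * k := by
    rw [sum_add_distrib, ← mul_sum, ← h.isPathSystem.card_pathSupport]
    simp [mul_comm]
  have hlower := h.le_sum_degIn hdeg hA hB hcardA hcardB
  have hupper := sum_le_sum fun i (_ : i ∈ univ) => hle i
  have hk : k % 2 = 1 := by omega
  refine ⟨Nat.odd_iff.mpr hk, fun i hi => ?_⟩
  have := (sum_eq_sum_iff_of_le fun i _ => hle i).mp (by omega) i (mem_univ i)
  simpa [hi] using this

end BlockedCount

section ShortLinkageExists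

variable {V : Type*} [Fintype V] {G : SimpleGraph V} [DecidableRel G.Adj] {k : ℕ} [NeZero k]
  {s : Fin k → V} {T : Finset (Fin k)} {P : Fin k → List V} {i₀ : Fin k}

theorem not_isBlocked (hcard : 7 * k ≤ Fintype.card V + 1)
    (hdeg : Fintype.card V + 2 * (k / 2) ≤ 2 * G.minDegree + 2) : ¬IsBlocked G s T P i₀ := by
  classical
  intro h
  have hfresh (j : Fin k) :
      ∃ A : Finset V, A ⊆ {v ∈ (pathSupport s P)ᶜ | G.Adj (s j) v} ∧ #A = 2 := by
    refine exists_subset_card_eq (?_ : 2 ≤ degIn G (pathSupport s P)ᶜ (s j))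
    have hC := h.card_pathSupport_add_three_le h.notMem
    have hin := degIn_lt_card (G := G) (terminal_mem_pathSupport (s := s) (P := P) j)
    have hout := degIn_add_degIn_compl (G := G) (pathSupport s P) (s j)
    have := G.minDegree_le_degree (s j)
    omega
  obtain ⟨A, hA, hcardA⟩ := hfresh i₀
  obtain ⟨B, hB, hcardB⟩ := hfresh (i₀ + 1)
  replace hA (a : V) (ha : a ∈ A) : a ∉ pathSupport s P ∧ G.Adj (s i₀) a := by
    simpa using hA ha
  replace hB (b : V) (hb : b ∈ B) : b ∉ pathSupport s P ∧ G.Adj b (s (i₀ + 1)) := by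
    simpa [G.adj_comm b] using hB hb
  obtain ⟨hodd, heq⟩ := h.odd_and_edgeSum_eq hdeg hA hB hcardA hcardB
  have hspread := h.isSpread hA hB hcardA hcardB
  have hnext : degIn G A (s (i₀ + 1)) = 2 ∧ degIn G B (s (i₀ + 1)) = 0 := by
    refine of_alternating hodd (p := fun i => degIn G A (s i) = 2 ∧ degIn G B (s i) = 0)
      (q := fun i => degIn G A (s i) = 0 ∧ degIn G B (s i) = 2) ⟨?_, ?_⟩
      (fun i hi hp => ((hspread i).edgeSum_le_and (h.length_le i)).2 (heq i hi) hp.1 hp.2)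
      (fun i hi hq => ((hspread i).symm.edgeSum_le_and (h.length_le i)).2
        (by rw [add_comm, heq i hi]) hq.2 hq.1 |>.symm)
    · rw [degIn_eq_card fun a ha => (hA a ha).2, hcardA]
    · exact degIn_eq_zero fun b hb hsb => h.not_adj_next (hB b hb).1 hsb (hB b hb).2
  have hzero := degIn_eq_zero fun a ha hsa => h.not_adj_next (hA a ha).1 (hA a ha).2 hsa.symm
  omega

theorem exists_isShortLinkage (hs : Injective s) (hcard : 7 * k ≤ Fintype.card V + 1)
    (hdeg : Fintype.card V + 2 * (k / 2) ≤ 2 * G.minDegree + 2) (T : Finset (Fin k)) :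
    ∃ P, IsShortLinkage G s T P := by
  induction T using Finset.induction with
  | empty =>
    exact ⟨fun _ => [], ⟨⟨⟨fun i => by simp, fun i j hij => by simpa using hs.ne hij.symm⟩,
      fun i hi => absurd hi (notMem_empty i), fun _ _ => rfl⟩, by simp⟩⟩
  | insert i₀ T hi₀ ih =>
    by_contra hblocked
    rw [not_exists] at hblocked
    obtain ⟨P, hP, hmin⟩ := exists_minimalFor_of_wellFoundedLT (IsShortLinkage G s T)
      (fun P => ∑ i, (P i).length) ih
    exact not_isBlocked hcard hdeg ⟨hP, hi₀, fun Q hQ => le_of_not_gt fun hlt =>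
      absurd (hmin hQ hlt.le) (not_le.mpr hlt), hblocked⟩

end ShortLinkageExists

/-! ### Linkages of maximal length -/

section MaxLinkage

variable {V : Type*} {G : SimpleGraph V} {k : ℕ} [NeZero k] {s : Fin k → V} {P : Fin k → List V}
  {i : Fin k} {M N : List V} {u v x y : V}

theorem countP_arc {p : V → Prop} [DecidablePred p] (i : Fin k) :
    (arc s P i).countP p = (s i :: P i).countP p + if p (s (i + 1)) then 1 else 0 := by
  rw [arc, List.countP_append, List.countP_singleton]
  simp

/-- A linkage of all terminals that covers as many vertices as possible. -/
structure IsMaxLinkage (G : SimpleGraph V) (s : Fin k → V) (P : Fin k → List V) : Prop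
    extends IsLinkage G s univ P where
  sum_length_le : ∀ Q, IsLinkage G s univ Q → ∑ i, (Q i).length ≤ ∑ i, (P i).length

theorem exists_isMaxLinkage [Finite V] (h : IsLinkage G s univ P) :
    ∃ Q, IsMaxLinkage G s Q := by
  classical
  cases nonempty_fintype V
  have hle (Q : Fin k → List V) (hQ : IsLinkage G s univ Q) :
      ∑ i, (Q i).length ≤ Fintype.card V := by
    have hcard := hQ.isPathSystem.card_pathSupport
    rw [sum_add_distrib] at hcard
    exact (Nat.le_add_right _ _).trans (hcard.symm.le.trans (card_le_univ _))
  obtain ⟨Q, hQ, hmin⟩ := exists_minimalFor_of_wellFoundedLT (IsLinkage G s univ)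
    (fun Q => Fintype.card V - ∑ i, (Q i).length) ⟨P, h⟩
  refine ⟨Q, hQ, fun R hR => ?_⟩
  have hQR : Fintype.card V - ∑ i, (R i).length ≤ Fintype.card V - ∑ i, (Q i).length →
      Fintype.card V - ∑ i, (Q i).length ≤ Fintype.card V - ∑ i, (R i).length := hmin hR
  have hR' := hle R hR
  omega

variable [DecidableEq V]

theorem IsPathSystem.card_filter_mul_add_le (h : IsPathSystem s P) (p : V → Prop) [DecidablePred p]
    {g : ℕ} (hgap : ∀ i x M y, x :: M ++ [y] <:+: arc s P i → p x → p y → g ≤ M.length) :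
    (#{x ∈ pathSupport s P | p x} + #{i | p (s i)}) * (g + 1) + 2 * #{i | ¬p (s i)} ≤
      #(pathSupport s P) + k + k * g := by
  have hcount : ∑ i, (arc s P i).countP p = #{x ∈ pathSupport s P | p x} + #{i | p (s i)} := by
    simp only [countP_arc, sum_add_distrib, h.card_filter_pathSupport, card_filter,
      sum_terminal_succ s fun x => if p x then 1 else 0]
  have hends : ∑ i, ((if p (s i) then 0 else 1) + if p (s (i + 1)) then 0 else 1) =
      2 * #{i | ¬p (s i)} := by
    simp only [sum_add_distrib, sum_terminal_succ s fun x => if p x then 0 else 1, card_filter,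
      ite_not, two_mul]
  have hsum := sum_le_sum fun i (_ : i ∈ univ) => countP_mul_add_le_of_gap (hgap i)
  rw [sum_add_distrib, ← sum_mul, hcount, hends] at hsum
  refine hsum.trans_eq ?_
  rw [h.card_pathSupport]
  simp only [sum_add_distrib, sum_const, card_univ, Fintype.card_fin, smul_eq_mul]
  ring

theorem IsPathSystem.two_mul_card_filter_le (h : IsPathSystem s P) (p : V → Prop) [DecidablePred p]
    (hgap : ∀ i x M y, x :: M ++ [y] <:+: arc s P i → p x → p y → 1 ≤ M.length) :
    2 * #{x ∈ pathSupport s P | p x} ≤ #(pathSupport s P) := by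
  have hle := h.card_filter_mul_add_le p hgap
  have hk := card_filter_add_card_filter_not (s := (univ : Finset (Fin k))) (p <| s ·)
  rw [card_univ, Fintype.card_fin] at hk
  omega

theorem IsMaxLinkage.length_le (h : IsMaxLinkage G s P) (hM : x :: M ++ [y] <:+: arc s P i)
    (hN : N.Nodup) (hNP : ∀ z ∈ N, z ∉ pathSupport s P) (hchain : (x :: N ++ [y]).IsChain G.Adj) :
    N.length ≤ M.length := by
  obtain ⟨L, hL, hlen, -⟩ := h.reroute (mem_univ i) hM hN hNP hchain
  have hmax := h.sum_length_le _ hL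
  have hsum := sum_length_update P i L
  omega

theorem IsMaxLinkage.one_le_length (h : IsMaxLinkage G s P) (hM : x :: M ++ [y] <:+: arc s P i)
    (hv : v ∉ pathSupport s P) (hxv : G.Adj x v) (hvy : G.Adj v y) : 1 ≤ M.length :=
  h.length_le (N := [v]) hM (by simp) (by simpa) (by simpa using ⟨hxv, hvy⟩)

variable [Fintype V] [DecidableRel G.Adj]

theorem IsMaxLinkage.card_add_le_two_mul_degIn (h : IsMaxLinkage G s P)
    (hdeg : Fintype.card V + 2 * (k / 2) ≤ 2 * G.minDegree + 2) (hv : v ∉ pathSupport s P) :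
    #(pathSupport s P)ᶜ + 2 * (k / 2) ≤ 2 * degIn G (pathSupport s P)ᶜ v + 2 := by
  have hle : 2 * degIn G (pathSupport s P) v ≤ #(pathSupport s P) :=
    h.isPathSystem.two_mul_card_filter_le (G.Adj v ·) fun i x M y hM hx hy =>
      h.one_le_length hM hv hx.symm hy
  have hsum := degIn_add_degIn_compl (G := G) (pathSupport s P) v
  have hcard := card_add_card_compl (pathSupport s P)
  have := G.minDegree_le_degree v
  omega

theorem IsMaxLinkage.four_le_card_compl (h : IsMaxLinkage G s P) (hk : 4 ≤ k)
    (hdeg : Fintype.card V + 2 * (k / 2) ≤ 2 * G.minDegree + 2) (hv : v ∉ pathSupport s P) :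
    4 ≤ #(pathSupport s P)ᶜ := by
  have hle := h.card_add_le_two_mul_degIn hdeg hv
  have hlt := degIn_lt_card (G := G) (mem_compl.mpr hv)
  omega

theorem IsMaxLinkage.exists_spanning_path_compl (h : IsMaxLinkage G s P) (hk : 4 ≤ k)
    (hdeg : Fintype.card V + 2 * (k / 2) ≤ 2 * G.minDegree + 2) (hu : u ∉ pathSupport s P)
    (hv : v ∉ pathSupport s P) (huv : u ≠ v) :
    ∃ R : List V, (u :: R ++ [v]).Nodup ∧ (u :: R ++ [v]).toFinset = (pathSupport s P)ᶜ ∧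
      (u :: R ++ [v]).IsChain G.Adj :=
  exists_spanning_path (fun x hx => by
    have := h.card_add_le_two_mul_degIn hdeg (mem_compl.mp hx)
    omega) (mem_compl.mpr hu) (mem_compl.mpr hv) huv

theorem IsMaxLinkage.card_compl_le_length (h : IsMaxLinkage G s P) (hk : 4 ≤ k)
    (hdeg : Fintype.card V + 2 * (k / 2) ≤ 2 * G.minDegree + 2)
    (hM : x :: M ++ [y] <:+: arc s P i) (hu : u ∉ pathSupport s P) (hv : v ∉ pathSupport s P)
    (huv : u ≠ v) (hxu : G.Adj x u) (hvy : G.Adj v y) : #(pathSupport s P)ᶜ ≤ M.length := by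
  obtain ⟨R, hnodup, hR, hchain⟩ := h.exists_spanning_path_compl hk hdeg hu hv huv
  rw [← hR, List.toFinset_card_of_nodup hnodup]
  exact h.length_le hM hnodup (fun z hz => mem_compl.mp (hR ▸ List.mem_toFinset.mpr hz))
    (isChain_cons_concat hchain hxu hvy)

end MaxLinkage

section Attachments

variable {V : Type*} {G : SimpleGraph V} [DecidableRel G.Adj] [Fintype V] [DecidableEq V]

/-- The vertices of `C` that have at least `d` neighbours outside `C`. -/
def attachments (G : SimpleGraph V) [DecidableRel G.Adj] (C : Finset V) (d : ℕ) : Finset V :=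
  {x ∈ C | d ≤ degIn G Cᶜ x}

theorem attachments_subset {C : Finset V} {d : ℕ} : attachments G C d ⊆ C := filter_subset _ _

theorem attachments_anti {C : Finset V} : Antitone (attachments G C) := fun _ _ hd =>
  monotone_filter_right C fun _ _ => hd.trans

theorem degIn_compl_eq_zero {C : Finset V} {x : V} (hx : x ∈ C) (hxC : x ∉ attachments G C 1) :
    degIn G Cᶜ x = 0 := by
  by_contra hne
  exact hxC (mem_filter.mpr ⟨hx, Nat.pos_of_ne_zero hne⟩)

theorem card_compl_mul_minDegree_add_le (C : Finset V) :
    #Cᶜ * (G.minDegree + 1) + #(attachments G C 2) ≤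
      #(attachments G C 1) + #Cᶜ * (#(attachments G C 2) + #Cᶜ) := by
  have hcompl : #Cᶜ * (G.minDegree + 1) ≤ ∑ v ∈ Cᶜ, degIn G C v + #Cᶜ * #Cᶜ := by
    rw [← smul_eq_mul, ← smul_eq_mul, ← sum_const, ← sum_const, ← sum_add_distrib]
    refine sum_le_sum fun v hv => ?_
    have := G.minDegree_le_degree v
    have := degIn_add_degIn_compl (G := G) C v
    have := degIn_lt_card (G := G) hv
    omega
  have hC : ∑ x ∈ C, degIn G Cᶜ x + #(attachments G C 2) ≤
      #(attachments G C 1) + #Cᶜ * #(attachments G C 2) := by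
    rw [attachments, attachments, card_filter, card_filter, mul_sum, ← sum_add_distrib,
      ← sum_add_distrib]
    refine sum_le_sum fun x _ => ?_
    have := degIn_le_card (G := G) (S := Cᶜ) (v := x)
    split_ifs <;> omega
  rw [sum_degIn_comm] at hcompl
  linarith

variable {C A : Finset V} {x : V} {d : ℕ}

theorem card_add_minDegree_lt_of_degIn_compl_le (hx : x ∈ C) (hA : A ⊆ C) (hxA : x ∉ A)
    (hd : degIn G Cᶜ x ≤ d) : #A + G.minDegree < degIn G A x + #C + d := by
  have hdegree := degIn_add_degIn_compl (G := G) C x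
  have hmin := G.minDegree_le_degree x
  have hsdiff := degIn_lt_card (G := G) (mem_sdiff.mpr ⟨hx, hxA⟩)
  have hsplit := degIn_add_degIn_sdiff (G := G) hA x
  have hcard := card_sdiff_add_card_eq_card hA
  omega

variable {k : ℕ} [NeZero k] {s : Fin k → V} {P : Fin k → List V}

theorem IsMaxLinkage.two_mul_card_attachments_one_le (h : IsMaxLinkage G s P) (hk : 4 ≤ k)
    (hdeg : Fintype.card V + 2 * (k / 2) ≤ 2 * G.minDegree + 2) :
    2 * #(attachments G (pathSupport s P) 1) ≤ #(pathSupport s P) := by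
  refine h.isPathSystem.two_mul_card_filter_le _ fun i x M y hM hx hy => ?_
  obtain ⟨u, hu, hxu⟩ := exists_adj_of_degIn_pos hx
  obtain ⟨v, hv, hyv⟩ := exists_adj_of_degIn_pos hy
  rw [mem_compl] at hu hv
  obtain rfl | huv := eq_or_ne u v
  · exact h.one_le_length hM hu hxu hyv.symm
  · have hlen := h.card_compl_le_length hk hdeg hM hu hv huv hxu hyv.symm
    have := h.four_le_card_compl hk hdeg hu
    omega

theorem IsMaxLinkage.card_attachments_two_le (h : IsMaxLinkage G s P) (hk : 4 ≤ k)
    (hdeg : Fintype.card V + 2 * (k / 2) ≤ 2 * G.minDegree + 2) :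
    (#(attachments G (pathSupport s P) 2) + #{i | 2 ≤ degIn G (pathSupport s P)ᶜ (s i)}) *
        (#(pathSupport s P)ᶜ + 1) + 2 * #{i | ¬2 ≤ degIn G (pathSupport s P)ᶜ (s i)} ≤
      #(pathSupport s P) + k + k * #(pathSupport s P)ᶜ := by
  refine h.isPathSystem.card_filter_mul_add_le _ fun i x M y hM hx hy => ?_
  obtain ⟨v, hv, hyv⟩ := exists_adj_of_degIn_pos (one_le_two.trans hy)
  obtain ⟨u, hu, huv, hxu⟩ := exists_ne_adj_of_two_le_degIn hx v
  exact h.card_compl_le_length hk hdeg hM (mem_compl.mp hu) (mem_compl.mp hv) huv hxu hyv.symm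

theorem IsMaxLinkage.minDegree_lt_card (h : IsMaxLinkage G s P) (hk : 4 ≤ k)
    (hdeg : Fintype.card V + 2 * (k / 2) ≤ 2 * G.minDegree + 2) :
    G.minDegree < #(pathSupport s P) := by
  have hF := h.two_mul_card_attachments_one_le hk hdeg
  have hpos : 0 < #(pathSupport s P) := card_pos.mpr ⟨s 0, terminal_mem_pathSupport 0⟩
  obtain ⟨x, hx, hxF⟩ := exists_mem_notMem_of_card_lt_card
    (show #(attachments G (pathSupport s P) 1) < #(pathSupport s P) by omega)
  have hx₀ := degIn_compl_eq_zero hx hxF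
  have := degIn_add_degIn_compl (G := G) (pathSupport s P) x
  have := degIn_lt_card (G := G) hx
  have := G.minDegree_le_degree x
  omega

theorem IsMaxLinkage.minDegree_lt_card_attachments_add (h : IsMaxLinkage G s P) (hk : 4 ≤ k)
    (hdeg : Fintype.card V + 2 * (k / 2) ≤ 2 * G.minDegree + 2)
    (hH : (pathSupport s P)ᶜ.Nonempty) :
    G.minDegree < #(attachments G (pathSupport s P) 2) + #(pathSupport s P)ᶜ := by
  by_contra! hle
  obtain ⟨d, hd⟩ := Nat.exists_eq_add_of_le hle
  have hcount := card_compl_mul_minDegree_add_le (G := G) (pathSupport s P)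
  have hF := h.two_mul_card_attachments_one_le hk hdeg
  have hcard := card_add_card_compl (pathSupport s P)
  have hexcess : #(pathSupport s P)ᶜ * (d + 1) + #(attachments G (pathSupport s P) 2) ≤
      #(attachments G (pathSupport s P) 1) := by
    rw [hd] at hcount
    linarith
  have hpos : d + #(pathSupport s P)ᶜ ≤ #(pathSupport s P)ᶜ * (d + 1) := by
    rw [mul_add_one]
    exact Nat.add_le_add_right (Nat.le_mul_of_pos_left d hH.card_pos) _
  omega

theorem IsMaxLinkage.card_attachments_add_card_le (h : IsMaxLinkage G s P) (hk : 4 ≤ k)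
    (hdeg : Fintype.card V + 2 * (k / 2) ≤ 2 * G.minDegree + 2)
    (hH : (pathSupport s P)ᶜ.Nonempty) :
    #(attachments G (pathSupport s P) 2) + #{i | 2 ≤ degIn G (pathSupport s P)ᶜ (s i)} ≤ k := by
  have hgap := h.card_attachments_two_le hk hdeg
  have hdelta := h.minDegree_lt_card_attachments_add hk hdeg hH
  have hcard := card_add_card_compl (pathSupport s P)
  have hk' := card_filter_add_card_filter_not (s := (univ : Finset (Fin k)))
    fun i => 2 ≤ degIn G (pathSupport s P)ᶜ (s i)
  rw [card_univ, Fintype.card_fin] at hk'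
  by_contra! hlt
  obtain ⟨t, ht⟩ := Nat.exists_eq_add_of_lt hlt
  have hpos : t ≤ t * #(pathSupport s P)ᶜ := Nat.le_mul_of_pos_right t hH.card_pos
  rw [ht, show k + t + 1 = k + (t + 1) by omega, add_mul, mul_add_one k, add_one_mul t,
    mul_add_one t] at hgap
  omega

end Attachments

section Spanning

variable {V : Type*} {G : SimpleGraph V} {k : ℕ} [NeZero k] {s : Fin k → V}

theorem card_le_card_sdiff_union_image_add {ι : Type*} [Fintype ι] [DecidableEq V] (f : ι → V)
    (C W : Finset V) : #C ≤ #(C \ (W ∪ univ.image f)) + (#W + Fintype.card ι) := by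
  have := le_card_sdiff (W ∪ univ.image f) C
  have := card_union_le W (univ.image f)
  have : #(univ.image f) ≤ Fintype.card ι := card_image_le
  omega

theorem exists_injective_of_card_le {ι : Type*} [Fintype ι] {Z : ι → Finset V}
    (hZ : ∀ i, Fintype.card ι ≤ #(Z i)) : ∃ z : ι → V, Injective z ∧ ∀ i, z i ∈ Z i := by
  classical
  refine (all_card_le_biUnion_card_iff_exists_injective Z).mp fun S => ?_
  obtain rfl | ⟨i, hi⟩ := S.eq_empty_or_nonempty
  · simp
  · exact (card_le_univ S).trans ((hZ i).trans (card_le_card (subset_biUnion_of_mem Z hi)))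

theorem isLinkage_singleton {z : Fin k → V} (hs : Injective s) (hz : Injective z)
    (hzs : ∀ i j, z i ≠ s j) (hsz : ∀ i, G.Adj (s i) (z i)) (hzs' : ∀ i, G.Adj (z i) (s (i + 1))) :
    IsLinkage G s univ fun i => [z i] where
  isPathSystem :=
    { nodup i := by simpa using (hzs i i).symm
      disjoint i j hij := by
        simpa using ⟨⟨hs.ne hij.symm, (hzs i j).symm⟩, (hzs j i), hz.ne hij.symm⟩ }
  isChain i _ := by simpa using ⟨hsz i, hzs' i⟩
  eq_nil i hi := absurd (mem_univ i) hi

variable [Fintype V] [DecidableEq V] [DecidableRel G.Adj] {P : Fin k → List V}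

theorem adj_of_degIn_compl_eq_zero {C : Finset V} {x y : V} (hC : #C ≤ G.minDegree + 1)
    (hx : x ∈ C) (hy : y ∈ C) (hxy : x ≠ y) (h₀ : degIn G Cᶜ x = 0) : G.Adj x y := by
  have hlt := card_add_minDegree_lt_of_degIn_compl_le hx (singleton_subset_iff.mpr hy)
    (by simpa using hxy) h₀.le
  rw [card_singleton] at hlt
  obtain ⟨z, hz, hxz⟩ := exists_adj_of_degIn_pos (show 1 ≤ degIn G {y} x by omega)
  rwa [mem_singleton.mp hz] at hxz

theorem IsMaxLinkage.exists_common_neighbors (h : IsMaxLinkage G s P) (hk : 4 ≤ k)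
    (hcard : 7 * k ≤ Fintype.card V + 1)
    (hdeg : Fintype.card V + 2 * (k / 2) ≤ 2 * G.minDegree + 2)
    (hH : (pathSupport s P)ᶜ.Nonempty) (i : Fin k) :
    ∃ Z ⊆ pathSupport s P \ (attachments G (pathSupport s P) 2 ∪ univ.image s), k ≤ #Z ∧
      ∀ z ∈ Z, G.Adj (s i) z ∧ G.Adj z (s (i + 1)) := by
  have hdelta := h.minDegree_lt_card hk hdeg
  have hdelta' := h.minDegree_lt_card_attachments_add hk hdeg hH
  have hwm := h.card_attachments_add_card_le hk hdeg hH
  have hcompl := card_add_card_compl (pathSupport s P)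
  have hmem (j : Fin k) := terminal_mem_pathSupport (s := s) (P := P) j
  have hF := h.two_mul_card_attachments_one_le hk hdeg
  have hsdiff := card_le_card_sdiff_union_image_add s (pathSupport s P)
  rw [Fintype.card_fin] at hsdiff
  set C := pathSupport s P
  by_cases hm : ∀ j, degIn G Cᶜ (s j) ≤ 1
  · refine ⟨{z ∈ C \ (attachments G C 2 ∪ univ.image s) | G.Adj (s i) z ∧ G.Adj z (s (i + 1))},
      filter_subset _ _, ?_, fun z hz => (mem_filter.mp hz).2⟩
    have hnbr (j : Fin k) := card_add_minDegree_lt_of_degIn_compl_le (hmem j)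
      (A := C \ (attachments G C 2 ∪ univ.image s)) sdiff_subset (by simp) (hm j)
    have hi := hnbr i
    have hi' := hnbr (i + 1)
    have hW := hsdiff (attachments G C 2)
    have hcommon := degIn_add_degIn_le_card_add (G := G) (C \ (attachments G C 2 ∪ univ.image s))
      (s i) (s (i + 1))
    omega
  · push Not at hm
    obtain ⟨j, hj⟩ := hm
    have hpos : 0 < #{i | 2 ≤ degIn G Cᶜ (s i)} := card_pos.mpr ⟨j, mem_filter.mpr ⟨mem_univ j, hj⟩⟩
    have hZ := hsdiff (attachments G C 1)
    refine ⟨C \ (attachments G C 1 ∪ univ.image s), ?_, by omega, fun z hz => ?_⟩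
    · exact sdiff_subset_sdiff subset_rfl
        (union_subset_union (attachments_anti one_le_two) subset_rfl)
    · simp only [mem_sdiff, mem_union, not_or, mem_image, mem_univ, true_and, not_exists] at hz
      have hz₀ := degIn_compl_eq_zero hz.1 hz.2.1
      have hadj (j : Fin k) : G.Adj z (s j) :=
        adj_of_degIn_compl_eq_zero (by omega) hz.1 (hmem j) (Ne.symm (hz.2.2 j)) hz₀
      exact ⟨(hadj i).symm, hadj (i + 1)⟩

theorem IsMaxLinkage.exists_two_le_degIn_attachments (h : IsMaxLinkage G s P) (hk : 4 ≤ k)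
    (hdeg : Fintype.card V + 2 * (k / 2) ≤ 2 * G.minDegree + 2)
    (hH : (pathSupport s P)ᶜ.Nonempty) :
    ∃ i, 2 ≤ degIn G (attachments G (pathSupport s P) 2 \ univ.image s) (s i) ∧
      2 ≤ degIn G (attachments G (pathSupport s P) 2 \ univ.image s) (s (i + 1)) := by
  have hdelta := h.minDegree_lt_card hk hdeg
  have hdelta' := h.minDegree_lt_card_attachments_add hk hdeg hH
  have hwm := h.card_attachments_add_card_le hk hdeg hH
  have hcompl := card_add_card_compl (pathSupport s P)
  have hmem (j : Fin k) := terminal_mem_pathSupport (s := s) (P := P) j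
  set C := pathSupport s P
  set W := attachments G C 2
  set S : Finset (Fin k) := {i | 2 ≤ degIn G Cᶜ (s i)} with hS
  have hW : #W ≤ #(W \ univ.image s) + #S := by
    have hsub : W ∩ univ.image s ⊆ S.image s := fun x hx => by
      obtain ⟨hxW, hxs⟩ := mem_inter.mp hx
      obtain ⟨j, -, rfl⟩ := mem_image.mp hxs
      exact mem_image_of_mem s (mem_filter.mpr ⟨mem_univ j, (mem_filter.mp hxW).2⟩)
    have hle := (card_le_card hsub).trans card_image_le
    have := card_sdiff_add_card_inter W (univ.image s)
    omega
  have hdegIn (j : Fin k) (hj : j ∉ S) : 2 ≤ degIn G (W \ univ.image s) (s j) := by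
    have hlt := card_add_minDegree_lt_of_degIn_compl_le (d := 1) (hmem j)
      (A := W \ univ.image s) (sdiff_subset.trans attachments_subset) (by simp)
      (by simpa [hS, Nat.lt_succ_iff] using hj)
    omega
  obtain ⟨i, -, hi⟩ : ∃ i ∈ univ, i ∉ S ∪ S.image (· - 1) := by
    refine exists_mem_notMem_of_card_lt_card ((card_union_le _ _).trans_lt ?_)
    have := card_image_le (s := S) (f := (· - 1))
    rw [card_univ, Fintype.card_fin]
    omega
  rw [mem_union, not_or] at hi
  exact ⟨i, hdegIn i hi.1, hdegIn (i + 1) fun hi' =>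
    hi.2 (mem_image.mpr ⟨i + 1, hi', add_sub_cancel_right i 1⟩)⟩

theorem IsMaxLinkage.exists_detour (h : IsMaxLinkage G s P) (hk : 4 ≤ k)
    (hdeg : Fintype.card V + 2 * (k / 2) ≤ 2 * G.minDegree + 2)
    (hH : (pathSupport s P)ᶜ.Nonempty) :
    ∃ i L, L.Nodup ∧ L.length = #(pathSupport s P)ᶜ + 2 ∧ (s i :: L ++ [s (i + 1)]).IsChain G.Adj ∧
      ∀ z ∈ L, z ∉ univ.image s ∧ z ∉ pathSupport s P \ attachments G (pathSupport s P) 2 := by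
  obtain ⟨i, hi, hi'⟩ := h.exists_two_le_degIn_attachments hk hdeg hH
  obtain ⟨y, hy, hsy⟩ := exists_adj_of_degIn_pos (one_le_two.trans hi')
  obtain ⟨x, hx, hxy, hsx⟩ := exists_ne_adj_of_two_le_degIn hi y
  rw [mem_sdiff] at hx hy
  obtain ⟨hxC, hxdeg⟩ := mem_filter.mp hx.1
  obtain ⟨hyC, hydeg⟩ := mem_filter.mp hy.1
  obtain ⟨v, hv, hyv⟩ := exists_adj_of_degIn_pos (one_le_two.trans hydeg)
  obtain ⟨u, hu, huv, hxu⟩ := exists_ne_adj_of_two_le_degIn hxdeg v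
  obtain ⟨R, hnodup, hR, hchain⟩ := h.exists_spanning_path_compl hk hdeg (mem_compl.mp hu)
    (mem_compl.mp hv) huv
  have hmemR (z : V) : z ∈ u :: R ++ [v] ↔ z ∉ pathSupport s P := by
    rw [← List.mem_toFinset, hR, mem_compl]
  refine ⟨i, x :: (u :: R ++ [v]) ++ [y], ?_, ?_,
    isChain_cons_concat (isChain_cons_concat hchain hxu hyv.symm) hsx hsy.symm, fun z hz => ?_⟩
  · have hxM := mt (hmemR x).mp (not_not.mpr hxC)
    have hyM := mt (hmemR y).mp (not_not.mpr hyC)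
    rw [List.cons_append, List.nodup_cons, List.nodup_append_comm]
    simpa [hxy] using ⟨by simpa using hxM, by simpa using hyM, by simpa using hnodup⟩
  · rw [← hR, List.toFinset_card_of_nodup hnodup]
    simp
  · rw [List.cons_append, List.mem_cons, List.mem_append, List.mem_singleton, hmemR] at hz
    rw [mem_sdiff, not_and_not_right]
    obtain rfl | hz | rfl := hz
    · exact ⟨hx.2, fun _ => hx.1⟩
    · refine ⟨fun hzs => ?_, fun hzC => absurd hzC hz⟩
      obtain ⟨j, -, rfl⟩ := mem_image.mp hzs
      exact hz (terminal_mem_pathSupport j)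
    · exact ⟨hy.2, fun _ => hy.1⟩

theorem IsMaxLinkage.compl_pathSupport_eq_empty (h : IsMaxLinkage G s P) (hk : 4 ≤ k)
    (hcard : 7 * k ≤ Fintype.card V + 1)
    (hdeg : Fintype.card V + 2 * (k / 2) ≤ 2 * G.minDegree + 2) :
    (pathSupport s P)ᶜ = ∅ := by
  by_contra hne
  have hH := nonempty_iff_ne_empty.mpr hne
  obtain ⟨i, L, hnodup, hlen, hchain, hL⟩ := h.exists_detour hk hdeg hH
  choose Z hZC hZ hZadj using h.exists_common_neighbors hk hcard hdeg hH
  obtain ⟨z, hz, hzZ⟩ := exists_injective_of_card_le (Z := Z) (by simpa using hZ)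
  have hzC (j : Fin k) := mem_sdiff.mp (hZC j (hzZ j))
  simp only [mem_union, not_or] at hzC
  have hsingle : IsLinkage G s univ fun j => [z j] :=
    isLinkage_singleton h.isPathSystem.injective hz
      (fun j j' hjj' => (hzC j).2.2 (mem_image.mpr ⟨j', mem_univ j', hjj'.symm⟩))
      (fun j => (hZadj j _ (hzZ j)).1) fun j => (hZadj j _ (hzZ j)).2
  have hfresh : ∀ x ∈ L, x ∉ pathSupport s fun j => [z j] := fun x hx hmem => by
    obtain ⟨j, rfl | hxz⟩ := mem_pathSupport.mp hmem
    · exact (hL _ hx).1 (mem_image_of_mem s (mem_univ j))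
    · rw [List.mem_singleton.mp hxz] at hx
      exact (hL _ hx).2 (mem_sdiff.mpr ⟨(hzC j).1, (hzC j).2.1⟩)
  have hlinkage := hsingle.update_insert i hnodup (fun x hx => .inr (hfresh x hx)) hchain
  rw [insert_eq_of_mem (mem_univ i)] at hlinkage
  have hmax := h.sum_length_le _ hlinkage
  have hupdate := sum_length_update (fun j => [z j]) i L
  have hcardC := h.isPathSystem.card_pathSupport
  simp only [sum_add_distrib, sum_const, card_univ, Fintype.card_fin, smul_eq_mul, mul_one,
    List.length_singleton] at hupdate hcardC
  have hdelta := h.minDegree_lt_card_attachments_add hk hdeg hH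
  have hwm := h.card_attachments_add_card_le hk hdeg hH
  have hcompl := card_add_card_compl (pathSupport s P)
  omega

end Spanning

/-! ### Hamilton cycles as lists -/

section HamiltonianList

variable {V : Type*} {G : SimpleGraph V} {k : ℕ} {s : Fin k → V} {l : List V}

/-- `l` lists the vertices of `G` along a Hamilton cycle; the closing edge joins its last entry to
its first one. -/
structure IsHamiltonianList (G : SimpleGraph V) (l : List V) : Prop where
  nodup : l.Nodup
  mem : ∀ x, x ∈ l
  isChain : l.IsChain G.Adj
  adj_head : ∀ x ∈ l.getLast?, ∀ y ∈ l.head?, G.Adj x y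

theorem isHamiltonianList_cons {a : V} (hnodup : (a :: l).Nodup) (hmem : ∀ x, x ∈ a :: l)
    (hchain : (a :: l ++ [a]).IsChain G.Adj) : IsHamiltonianList G (a :: l) := by
  obtain ⟨hchain, -, hlast⟩ := List.isChain_append.mp hchain
  exact ⟨hnodup, hmem, hchain, by simpa using hlast⟩

theorem IsHamiltonianList.length_eq [Fintype V] (h : IsHamiltonianList G l) :
    l.length = Fintype.card V := by
  classical
  rw [← List.toFinset_card_of_nodup h.nodup, ← card_univ]
  congr 1
  ext x
  simp [h.mem]

theorem IsHamiltonianList.adj_getElem_zmod [NeZero l.length] (h : IsHamiltonianList G l)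
    (i : ZMod l.length) :
    G.Adj (l[i.val]'i.val_lt) (l[(i + 1).val]'(i + 1).val_lt) := by
  have hval : (i + 1).val = (i.val + 1) % l.length := by
    rw [ZMod.val_add, ZMod.val_one_eq_one_mod, Nat.add_mod_mod]
  simp only [hval]
  obtain hlt | heq := (Nat.succ_le_of_lt i.val_lt).lt_or_eq
  · simp only [Nat.mod_eq_of_lt (show i.val + 1 < l.length from hlt)]
    exact List.isChain_iff_getElem.mp h.isChain _ hlt
  · have hlast : i.val = l.length - 1 := by omega
    have hfirst : (i.val + 1) % l.length = 0 := by rw [← Nat.succ_eq_add_one, heq, Nat.mod_self]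
    simp only [hfirst]
    exact h.adj_head _ (by simp [List.getLast?_eq_getElem?, ← hlast, i.val_lt])
      _ (by simp [List.head?_eq_getElem?, Nat.pos_of_neZero])

theorem exists_strictMono_zmod_of_sublist (hs : (List.ofFn s).Sublist l) :
    ∃ p : Fin k → ZMod l.length, StrictMono (fun j => (p j).val) ∧
      ∀ j, l[(p j).val]? = some (s j) := by
  obtain ⟨g, hg⟩ := List.sublist_iff_exists_fin_orderEmbedding_get_eq.mp hs
  let q (j : Fin k) : Fin l.length := g (j.cast List.length_ofFn.symm)
  have hval (j : Fin k) : ((q j : ℕ) : ZMod l.length).val = q j := ZMod.val_natCast_of_lt (q j).2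
  refine ⟨fun j => (q j : ℕ), fun i j hij => ?_, fun j => ?_⟩
  · simp only [hval]
    exact g.strictMono hij
  · rw [hval, List.getElem?_eq_getElem (q j).2]
    simpa using (hg (j.cast List.length_ofFn.symm)).symm

theorem IsHamiltonianList.exists_zmod_cycle [Fintype V] [NeZero k] (h : IsHamiltonianList G l)
    (hs : (List.ofFn s).Sublist l) :
    ∃ f : ZMod (Fintype.card V) → V, Bijective f ∧ (∀ i, G.Adj (f i) (f (i + 1))) ∧
      ∃ p : Fin k → ZMod (Fintype.card V),
        StrictMono (fun j => (p j).val) ∧ ∀ j, f (p j) = s j := by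
  have : NeZero l.length := ⟨by
    have := hs.length_le
    have := NeZero.pos k
    rw [List.length_ofFn] at *
    omega⟩
  have hlen := h.length_eq
  rw [← hlen]
  have hinj : Injective fun i : ZMod l.length => l[i.val]'i.val_lt := fun i j hij =>
    ZMod.val_injective _ (h.nodup.getElem_inj_iff.mp hij)
  obtain ⟨p, hp, hps⟩ := exists_strictMono_zmod_of_sublist hs
  exact ⟨_, (Fintype.bijective_iff_injective_and_card _).mpr ⟨hinj, by rw [ZMod.card, hlen]⟩,
    h.adj_getElem_zmod, p, hp, fun j => (List.getElem?_eq_some_iff.mp (hps j)).2⟩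

theorem exists_isHamiltonianList_sublist_triple [Fintype V] [DecidableRel G.Adj]
    (hdeg : Fintype.card V ≤ 2 * G.minDegree) {a b c : V} (hab : a ≠ b) (hac : a ≠ c)
    (hbc : b ≠ c) : ∃ l, IsHamiltonianList G l ∧ [a, b, c].Sublist l := by
  obtain ⟨M, hnodup, hmem, hchain⟩ := exists_hamiltonian_closed_chain hdeg a
  have hsublist (A B : List V) (hc : c ∈ B) : [a, b, c].Sublist (a :: (A ++ b :: B)) :=
    .cons_cons a <|
      ((List.singleton_sublist.mpr hc).cons_cons b).trans (List.sublist_append_right _ _)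
  obtain ⟨A, B, rfl⟩ := List.append_of_mem (show b ∈ M by simpa [hab.symm] using hmem b)
  obtain hc | hc : c ∈ A ∨ c ∈ B := by simpa [hac.symm, hbc.symm] using hmem c
  · have hperm : (a :: (B.reverse ++ b :: A.reverse)).Perm (a :: (A ++ b :: B)) := by
      simpa using (List.reverse_perm (A ++ b :: B)).cons a
    refine ⟨_, isHamiltonianList_cons (hperm.nodup_iff.mpr hnodup)
      (fun x => hperm.mem_iff.mpr (hmem x)) ?_, hsublist _ _ (List.mem_reverse.mpr hc)⟩
    have hreverse := List.isChain_reverse.mpr (hchain.imp fun _ _ hxy => hxy.symm)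
    simpa using hreverse
  · exact ⟨_, isHamiltonianList_cons hnodup hmem hchain, hsublist A B hc⟩

theorem ofFn_sublist_flatten {α : Type*} {n : ℕ} {f : Fin n → α} {L : Fin n → List α}
    (h : ∀ i, f i ∈ L i) : (List.ofFn f).Sublist (List.ofFn L).flatten := by
  induction n with
  | zero => simp
  | succ n ih =>
    rw [List.ofFn_succ, List.ofFn_succ, List.flatten_cons]
    exact (List.singleton_sublist.mpr (h 0)).append (ih fun i => h i.succ)

theorem IsLinkage.isHamiltonianList {s : Fin (k + 1) → V} {P : Fin (k + 1) → List V}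
    (h : IsLinkage G s univ P) (hP : ∀ x, ∃ i, x ∈ s i :: P i) :
    IsHamiltonianList G (List.ofFn fun i => s i :: P i).flatten := by
  have hpath (i : Fin (k + 1)) : (s i :: P i).IsChain G.Adj ∧
      ∀ x ∈ (s i :: P i).getLast?, G.Adj x (s (i + 1)) := by
    obtain ⟨hchain, -, hlast⟩ := List.isChain_append.mp (h.isChain i (mem_univ i))
    exact ⟨hchain, fun x hx => hlast x hx _ (by simp)⟩
  refine ⟨?_, fun x => ?_, ?_, fun x hx y hy => ?_⟩
  · rw [List.nodup_flatten, List.pairwise_ofFn, List.forall_mem_ofFn_iff]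
    exact ⟨h.isPathSystem.nodup, fun i j hij => h.isPathSystem.disjoint hij.ne⟩
  · obtain ⟨i, hi⟩ := hP x
    exact List.mem_flatten.mpr ⟨_, List.mem_ofFn.mpr ⟨i, rfl⟩, hi⟩
  · rw [List.isChain_flatten (by simp), List.isChain_ofFn, List.forall_mem_ofFn_iff]
    refine ⟨fun i => (hpath i).1, fun i hi x hx y hy => ?_⟩
    have hnext : (⟨i, by omega⟩ : Fin (k + 1)) + 1 = ⟨i + 1, hi⟩ := by
      ext
      rw [Fin.val_add, Fin.val_one', Nat.add_mod_mod, Nat.mod_eq_of_lt hi]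
    obtain rfl : s ⟨i + 1, hi⟩ = y := by simpa using hy
    exact hnext ▸ (hpath ⟨i, by omega⟩).2 x hx
  · obtain rfl : s 0 = y := by simpa [List.ofFn_succ] using hy
    rw [← Fin.last_add_one k]
    refine (hpath (Fin.last k)).2 x ?_
    rw [List.ofFn_succ', List.concat_eq_append, List.flatten_append, List.getLast?_append] at hx
    simpa [List.getLast?_cons] using hx

theorem exists_isHamiltonianList_of_lt_four [Fintype V] [DecidableRel G.Adj]
    (hs : Injective s) (hk : 2 ≤ k) (hk' : k < 4) (hcard : 3 ≤ Fintype.card V)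
    (hdeg : Fintype.card V ≤ 2 * G.minDegree) :
    ∃ l, IsHamiltonianList G l ∧ (List.ofFn s).Sublist l := by
  classical
  obtain rfl | rfl : k = 2 ∨ k = 3 := by omega
  · obtain ⟨c, -, hc⟩ : ∃ c ∈ univ, c ∉ ({s 0, s 1} : Finset V) :=
      exists_mem_notMem_of_card_lt_card (card_le_two.trans_lt (by rwa [card_univ]))
    simp only [mem_insert, mem_singleton, not_or] at hc
    obtain ⟨l, hl, hsub⟩ := exists_isHamiltonianList_sublist_triple hdeg
      (hs.ne (by decide : (0 : Fin 2) ≠ 1)) (Ne.symm hc.1) (Ne.symm hc.2)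
    exact ⟨l, hl, .trans (by simp [List.ofFn_succ]) hsub⟩
  · obtain ⟨l, hl, hsub⟩ := exists_isHamiltonianList_sublist_triple hdeg
      (hs.ne (by decide : (0 : Fin 3) ≠ 1)) (hs.ne (by decide : (0 : Fin 3) ≠ 2))
      (hs.ne (by decide : (1 : Fin 3) ≠ 2))
    exact ⟨l, hl, by simpa [List.ofFn_succ] using hsub⟩

theorem exists_isHamiltonianList_of_four_le [Fintype V] [DecidableRel G.Adj]
    (hs : Injective s) (hk : 4 ≤ k) (hcard : 7 * k ≤ Fintype.card V + 1)
    (hdeg : Fintype.card V + 2 * (k / 2) ≤ 2 * G.minDegree + 2) :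
    ∃ l, IsHamiltonianList G l ∧ (List.ofFn s).Sublist l := by
  classical
  obtain ⟨k, rfl⟩ : ∃ m, k = m + 1 := ⟨k - 1, by omega⟩
  obtain ⟨P, hP⟩ := exists_isShortLinkage hs hcard hdeg univ
  obtain ⟨Q, hQ⟩ := exists_isMaxLinkage hP.toIsLinkage
  have huniv := compl_eq_empty_iff _ |>.mp (hQ.compl_pathSupport_eq_empty hk hcard hdeg)
  refine ⟨_, hQ.toIsLinkage.isHamiltonianList fun x => ?_,
    ofFn_sublist_flatten fun i => List.mem_cons_self ..⟩
  simpa using mem_pathSupport.mp (huniv ▸ mem_univ x)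

end HamiltonianList

end OrderedHamiltonian

theorem k_ordered_hamiltonian_graph_general {k : ℕ} (hk : 2 ≤ k)
    {V : Type*} [Fintype V] {G : SimpleGraph V} [DecidableRel G.Adj]
    (hn : 7 * k ≤ Fintype.card V + 1)
    (hdeg : (Fintype.card V + 1) / 2 + k / 2 - 1 ≤ G.minDegree)
    {s : Fin k → V} (hs : Function.Injective s) :
    ∃ f : ZMod (Fintype.card V) → V, Function.Bijective f ∧
      (∀ i, G.Adj (f i) (f (i + 1))) ∧
      ∃ p : Fin k → ZMod (Fintype.card V),
        StrictMono (fun j => (p j).val) ∧ ∀ j, f (p j) = s j := by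
  have : NeZero k := ⟨by omega⟩
  obtain ⟨l, hl, hsub⟩ : ∃ l, OrderedHamiltonian.IsHamiltonianList G l ∧
      (List.ofFn s).Sublist l := by
    obtain hk' | hk' := lt_or_ge k 4
    · exact OrderedHamiltonian.exists_isHamiltonianList_of_lt_four hs hk hk' (by omega) (by omega)
    · exact OrderedHamiltonian.exists_isHamiltonianList_of_four_le hs hk' hn (by omega)
  exact hl.exists_zmod_cycle hsub

/-- Kierstead–Sárközy–Selkow: for k ≥ 2, every graph on n ≥ 11k − 3 vertices with minimum
degree at least ⌈n/2⌉ + ⌊k/2⌋ − 1 is k-ordered Hamiltonian: for any distinct vertices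
s₁, …, s_k there is a Hamilton cycle (a cyclic ordering f of all the vertices, consecutive
ones adjacent) encountering s₁, …, s_k in this cyclic order (i.e. they occur at positions
with strictly increasing representatives). -/
theorem k_ordered_hamiltonian_graph (k : ℕ) (hk : 2 ≤ k)
    (V : Type) [Fintype V] [DecidableEq V] (G : SimpleGraph V) [DecidableRel G.Adj]
    (hn : 11 * k - 3 ≤ Fintype.card V)
    (hdeg : (Fintype.card V + 1) / 2 + k / 2 - 1 ≤ G.minDegree)
    (s : Fin k → V) (hs : Function.Injective s) :
    ∃ f : ZMod (Fintype.card V) → V, Function.Bijective f ∧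
      (∀ i, G.Adj (f i) (f (i + 1))) ∧
      ∃ p : Fin k → ZMod (Fintype.card V),
        StrictMono (fun j => (p j).val) ∧ ∀ j, f (p j) = s j := by
  exact k_ordered_hamiltonian_graph_general hk (by omega) hdeg hs
end

section
/- There exist positive constants c and C and an integer n₀ such that the following holds: whenever G is an oriented graph on n ≥ n₀ vertices with minimum semidegree δ⁰(G) ≥ (1/2 − c)n, and n₁, …, n_t are integers with each nᵢ ≥ 3 and n₁ + ⋯ + n_t ≤ n − C, then G contains t pairwise vertex-disjoint directed cycles of lengths n₁, …, n_t respectively. -/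
/-- The outdegree of a vertex `x` in the digraph with adjacency relation `G`. -/
noncomputable def outDeg {V : Type*} (G : V → V → Prop) (x : V) : ℕ :=
  Nat.card {y : V // G x y}

/-- The indegree of a vertex `x` in the digraph with adjacency relation `G`. -/
noncomputable def inDeg {V : Type*} (G : V → V → Prop) (x : V) : ℕ :=
  Nat.card {y : V // G y x}

/-- An oriented graph: no loops and no 2-cycles. -/
def IsOriented {V : Type*} (G : V → V → Prop) : Prop :=
  ∀ x y : V, G x y → ¬ G y x

/-!
The cycles are removed one at a time, and what remains after each removal has to stay close to
regular. This is measured by a potential `∑ (p - deg)⁺ ^ 4`, where the sum runs over the relative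
out- and indegrees of all vertices into the remaining set `U`. Removing a set `T` of bounded size
changes the potential to first order by `∑ u ∈ T, g u`, where the weight `g` has total zero over
`U`, and the higher order terms accumulate only to `O(1 / |U|)`. As long as `|U|` exceeds a
constant, this bounds every single degree.

It therefore suffices to show that, for each weight `g` of nonpositive total, a nearly regular
oriented graph has a `j`-cycle (or a path with `j` inner vertices between prescribed ends) of
nonpositive weight. If every `j`-cycle had positive weight, then the set `L` of vertices of weight
at most `-s` would contain no `j`-cycle. Such a set is nearly transitive: it has a vertex `x` almost
without inneighbours and a vertex `y` almost without outneighbours in `L`, which leaves about `|L|`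
vertices `w` with `y → w → x`. Each of them closes a path of `j - 1` vertices of `L` to a `j`-cycle,
so it has weight at least `2 * s`. Integrating over `s` yields a positive total. For paths, a light
path is joined to the two ends by connections avoiding the heaviest vertices.

A long cycle is a triangle in which one edge is replaced by a chain of connections of bounded
length, each chosen to preserve the bound on the potential.
-/

section IsOriented

variable {V : Type*} {G : V → V → Prop}

protected lemma IsOriented.flip (hG : IsOriented G) : IsOriented (flip G) :=
  fun x y hxy hyx ↦ hG x y hyx hxy

lemma IsOriented.irrefl (hG : IsOriented G) (x : V) : ¬ G x x := fun h ↦ hG x x h h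

lemma IsOriented.ne (hG : IsOriented G) {x y : V} (hxy : G x y) : x ≠ y := by
  rintro rfl
  exact hG.irrefl x hxy

end IsOriented

namespace OrientedGraph

open Finset
open scoped Classical BigOperators

section FourthPowers

variable {x d s k K : ℝ}

lemma posPart_add_pow_four_le (x d : ℝ) :
    (x + d)⁺ ^ 4 ≤ x⁺ ^ 4 + 4 * x⁺ ^ 3 * d + 8 * x⁺ ^ 2 * d ^ 2 + 3 * d ^ 4 := by
  have hle : (x + d)⁺ ≤ |x⁺ + d| :=
    sup_le ((add_le_add_left (le_posPart x) d).trans (le_abs_self _)) (abs_nonneg _)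
  calc (x + d)⁺ ^ 4 ≤ |x⁺ + d| ^ 4 := pow_le_pow_left₀ (posPart_nonneg _) hle 4
    _ = (x⁺ + d) ^ 4 := Even.pow_abs (by decide) _
    _ ≤ _ := by nlinarith [mul_nonneg (sq_nonneg d) (sq_nonneg (x⁺ - d))]

lemma posPart_add_pow_four_le_of_abs_le (hs : 1 ≤ s) (hd : |d| ≤ 2 * K / s) :
    (x + d)⁺ ^ 4 ≤
      x⁺ ^ 4 * (1 + 1 / (2 * s)) + 4 * x⁺ ^ 3 * d + 560 * K ^ 4 / s ^ 3 := by
  have : 0 < s := by linarith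
  have hamgm : 8 * x⁺ ^ 2 * d ^ 2 ≤ x⁺ ^ 4 * (1 / (2 * s)) + 32 * s * d ^ 4 := by
    have hsq : x⁺ ^ 4 * (1 / (2 * s)) + 32 * s * d ^ 4 - 8 * x⁺ ^ 2 * d ^ 2 =
        (x⁺ ^ 2 - 8 * s * d ^ 2) ^ 2 / (2 * s) := by
      field_simp
      ring
    rw [← sub_nonneg, hsq]
    positivity
  have hfour : (32 * s + 3) * d ^ 4 ≤ 560 * K ^ 4 / s ^ 3 :=
    calc (32 * s + 3) * d ^ 4 = (32 * s + 3) * |d| ^ 4 := by rw [Even.pow_abs (by decide)]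
      _ ≤ (35 * s) * (2 * K / s) ^ 4 := by
        gcongr
        linarith
      _ = 560 * K ^ 4 / s ^ 3 := by
        field_simp
        ring
  linarith [posPart_add_pow_four_le x d]

lemma one_div_mul_add_le_one_div_sub (hk : 1 ≤ k) (hs : 2 * k ≤ s) :
    1 / s * (1 + 1 / (2 * s)) + 448 / 1000 / s ^ 2 ≤ 1 / (s - k) := by
  have hs_pos : 0 < s := by linarith
  calc 1 / s * (1 + 1 / (2 * s)) + 448 / 1000 / s ^ 2 ≤ (s + 1) / s ^ 2 := by
        rw [← sub_nonneg]
        have : (s + 1) / s ^ 2 - (1 / s * (1 + 1 / (2 * s)) + 448 / 1000 / s ^ 2) =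
            52 / 1000 / s ^ 2 := by
          field_simp
          ring
        rw [this]
        positivity
    _ ≤ 1 / (s - k) := by
      rw [div_le_div_iff₀ (by positivity) (by linarith)]
      nlinarith

end FourthPowers

section Deficit

variable {ι V : Type*} {p K : ℝ} {I J : Finset ι} {a : ι → V → ℝ} {U T : Finset V}

/-- The total fourth-power deficit below `p` of the averages over `U` of the functions `a i`. -/
noncomputable def deficit (p : ℝ) (I : Finset ι) (a : ι → V → ℝ) (U : Finset V) : ℝ :=
  ∑ i ∈ I, (p - 𝔼 u ∈ U, a i u)⁺ ^ 4

lemma deficit_mono (h : I ⊆ J) (a : ι → V → ℝ) (U : Finset V) :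
    deficit p I a U ≤ deficit p J a U :=
  sum_le_sum_of_subset_of_nonneg h fun _ _ _ ↦ by positivity

lemma expect_sdiff {f : V → ℝ} (hT : T ⊂ U) :
    𝔼 u ∈ U \ T, f u = 𝔼 u ∈ U, f u - (∑ u ∈ T, (f u - 𝔼 v ∈ U, f v)) / #(U \ T) := by
  have hne : (#(U \ T) : ℝ) ≠ 0 := by
    exact_mod_cast (sdiff_nonempty.2 hT.2).card_pos.ne'
  have hmul : (#U : ℝ) * 𝔼 u ∈ U, f u = ∑ u ∈ U, f u := by
    rw [← nsmul_eq_mul, card_smul_expect]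
  rw [expect_eq_sum_div_card, eq_sub_iff_add_eq, ← add_div, div_eq_iff hne, sum_sub_distrib,
    sum_const, nsmul_eq_mul, cast_card_sdiff hT.1, mul_sub, mul_comm _ (#U : ℝ), hmul,
    ← sum_sdiff hT.1]
  ring

lemma abs_sum_sub_expect_le {f : V → ℝ} (hf : ∀ u, f u ∈ Set.Icc 0 1) (hU : U.Nonempty)
    (T : Finset V) : |∑ u ∈ T, (f u - 𝔼 v ∈ U, f v)| ≤ #T := by
  have hE_nonneg : 0 ≤ 𝔼 v ∈ U, f v := expect_nonneg fun v _ ↦ (hf v).1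
  have hE_le : 𝔼 v ∈ U, f v ≤ 1 := expect_le hU fun v _ ↦ (hf v).2
  calc |∑ u ∈ T, (f u - 𝔼 v ∈ U, f v)| ≤ ∑ u ∈ T, |f u - 𝔼 v ∈ U, f v| :=
        abs_sum_le_sum_abs _ _
    _ ≤ ∑ _u ∈ T, 1 := sum_le_sum fun u _ ↦
      abs_sub_le_of_nonneg_of_le (hf u).1 (hf u).2 hE_nonneg hE_le
    _ = #T := by simp

/-- `hT` says that the first-order change of the deficit is nonpositive. -/
lemma deficit_sdiff_le (ha : ∀ i u, a i u ∈ Set.Icc 0 1) (hTU : T ⊆ U) (hTK : (#T : ℝ) ≤ K)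
    (hU : 2 * K ≤ #U) (hne : U.Nonempty)
    (hT : ∑ u ∈ T, ∑ i ∈ I, (p - 𝔼 v ∈ U, a i v)⁺ ^ 3 * (a i u - 𝔼 v ∈ U, a i v) ≤ 0) :
    deficit p I a (U \ T) ≤
      deficit p I a U * (1 + 1 / (2 * #U)) + #I * (560 * K ^ 4 / #U ^ 3) := by
  set s : ℝ := (#U : ℝ)
  have hs : 1 ≤ s := Nat.one_le_cast.2 hne.card_pos
  have hcard : (#(U \ T) : ℝ) = s - #T := cast_card_sdiff hTU
  have hss : T ⊂ U := hTU.ssubset_of_ne (by rintro rfl; linarith)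
  set D : ι → ℝ := fun i ↦ ∑ u ∈ T, (a i u - 𝔼 v ∈ U, a i v)
  have hterm : ∀ i ∈ I, (p - 𝔼 u ∈ U \ T, a i u)⁺ ^ 4 ≤
      (p - 𝔼 u ∈ U, a i u)⁺ ^ 4 * (1 + 1 / (2 * s)) +
        4 / (s - #T) * ((p - 𝔼 u ∈ U, a i u)⁺ ^ 3 * D i) + 560 * K ^ 4 / s ^ 3 := by
    intro i _
    have hD : |D i / (s - #T)| ≤ 2 * K / s := by
      rw [abs_div, abs_of_pos (by linarith : 0 < s - #T), div_le_div_iff₀ (by linarith)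
        (by linarith)]
      have : |D i| ≤ #T := abs_sum_sub_expect_le (ha i) hne T
      nlinarith [abs_nonneg (D i)]
    rw [expect_sdiff hss, ← sub_add, hcard]
    refine (posPart_add_pow_four_le_of_abs_le hs hD).trans_eq ?_
    ring
  have hlin : ∑ i ∈ I, 4 / (s - #T) * ((p - 𝔼 u ∈ U, a i u)⁺ ^ 3 * D i) ≤ 0 := by
    rw [← mul_sum]
    refine mul_nonpos_of_nonneg_of_nonpos (div_nonneg (by norm_num) (by linarith)) ?_
    simpa only [D, mul_sum, sum_comm (s := T)] using hT
  refine (sum_le_sum hterm).trans ?_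
  rw [sum_add_distrib, sum_add_distrib, ← sum_mul, sum_const, nsmul_eq_mul]
  exact add_le_add_left (add_le_of_nonpos_right hlin) _

lemma sum_posPart_pow_mul_sub_expect (p : ℝ) (I : Finset ι) (a : ι → V → ℝ) (U : Finset V) :
    ∑ u ∈ U, ∑ i ∈ I, (p - 𝔼 v ∈ U, a i v)⁺ ^ 3 * (a i u - 𝔼 v ∈ U, a i v) = 0 := by
  rw [sum_comm]
  refine sum_eq_zero fun i _ ↦ ?_
  rw [← mul_sum, sum_sub_distrib, sum_const, card_smul_expect, sub_self, mul_zero]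

/-- Removing `T` changes the deficit, to first order, by the sum over `T` of a weight whose total
over `U` is zero. -/
lemma exists_deficit_sdiff_le {P : Finset V → Prop} (ha : ∀ i u, a i u ∈ Set.Icc 0 1)
    (hI : (#I : ℝ) ≤ 4 * #U) (hU : 2 * K ≤ #U) (hdef : deficit p I a U ≤ 5000 * K ^ 4 / #U)
    (hP : ∀ g : V → ℝ, ∑ u ∈ U, g u ≤ 0 →
      ∃ T ⊆ U, T.Nonempty ∧ (#T : ℝ) ≤ K ∧ P T ∧ ∑ u ∈ T, g u ≤ 0) :
    ∃ T ⊆ U, P T ∧ deficit p I a (U \ T) ≤ 5000 * K ^ 4 / #(U \ T) := by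
  obtain ⟨T, hTU, hT_ne, hTK, hPT, hT⟩ := hP _ (sum_posPart_pow_mul_sub_expect p I a U).le
  refine ⟨T, hTU, hPT, ?_⟩
  have hT_card : (1 : ℝ) ≤ #T := by exact_mod_cast hT_ne.card_pos
  have hU_pos : (0 : ℝ) < #U := by linarith
  rw [cast_card_sdiff hTU]
  calc deficit p I a (U \ T)
      ≤ deficit p I a U * (1 + 1 / (2 * #U)) + #I * (560 * K ^ 4 / #U ^ 3) :=
        deficit_sdiff_le ha hTU hTK hU (hT_ne.mono hTU) hT
    _ ≤ 5000 * K ^ 4 / #U * (1 + 1 / (2 * #U)) + 4 * #U * (560 * K ^ 4 / #U ^ 3) := by gcongr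
    _ = 5000 * K ^ 4 * (1 / #U * (1 + 1 / (2 * #U)) + 448 / 1000 / #U ^ 2) := by
      field_simp
      ring
    _ ≤ 5000 * K ^ 4 * (1 / (#U - #T)) := by
      gcongr
      exact one_div_mul_add_le_one_div_sub hT_card (by linarith)
    _ = 5000 * K ^ 4 / (#U - #T) := mul_one_div _ _

end Deficit

section Neighbourhoods

variable {V : Type*} {G : V → V → Prop} {U W A L : Finset V} {u v : V} {d e : ℝ}

/-- The set of out-neighbours of `v` in `U`. -/
noncomputable def outNbhd (G : V → V → Prop) (U : Finset V) (v : V) : Finset V := {u ∈ U | G v u}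

/-- The set of in-neighbours of `v` in `U`. -/
noncomputable def inNbhd (G : V → V → Prop) (U : Finset V) (v : V) : Finset V := {u ∈ U | G u v}

/-- The outdegree and the indegree of `v` in `U` fall short of `|U| / 2` by at most `d`. -/
def NearRegular (G : V → V → Prop) (d : ℝ) (U : Finset V) (v : V) : Prop :=
  (#U : ℝ) / 2 - d ≤ #(outNbhd G U v) ∧ (#U : ℝ) / 2 - d ≤ #(inNbhd G U v)

/-- Every vertex of `L` is nonadjacent to at most `e` vertices of `L`, itself included. -/
def AlmostComplete (G : V → V → Prop) (e : ℝ) (L : Finset V) : Prop :=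
  ∀ v ∈ L, (#{u ∈ L | ¬ G v u ∧ ¬ G u v} : ℝ) ≤ e

@[simp] lemma mem_outNbhd : u ∈ outNbhd G U v ↔ u ∈ U ∧ G v u := by simp [outNbhd]

@[simp] lemma mem_inNbhd : u ∈ inNbhd G U v ↔ u ∈ U ∧ G u v := by simp [inNbhd]

lemma mem_outNbhd_inter_inNbhd {x y : V} :
    u ∈ outNbhd G U x ∩ inNbhd G W y ↔ (u ∈ U ∧ u ∈ W) ∧ G x u ∧ G u y := by
  simp only [mem_inter, mem_outNbhd, mem_inNbhd, and_and_and_comm]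

lemma inNbhd_outNbhd (U : Finset V) (x y : V) :
    inNbhd G (outNbhd G U x) y = outNbhd G U x ∩ inNbhd G U y := by
  ext
  simp only [mem_inNbhd, mem_inter, mem_outNbhd]
  tauto

lemma outNbhd_outNbhd_comm (U : Finset V) (x y : V) :
    outNbhd G (outNbhd G U x) y = outNbhd G (outNbhd G U y) x :=
  filter_comm _ _ U

@[simp] lemma outNbhd_flip (U : Finset V) (v : V) : outNbhd (flip G) U v = inNbhd G U v := rfl

@[simp] lemma inNbhd_flip (U : Finset V) (v : V) : inNbhd (flip G) U v = outNbhd G U v := rfl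

lemma outNbhd_subset (U : Finset V) (v : V) : outNbhd G U v ⊆ U := filter_subset _ _

lemma inNbhd_subset (U : Finset V) (v : V) : inNbhd G U v ⊆ U := filter_subset _ _

lemma card_outNbhd_add_card_inNbhd_le (hG : IsOriented G) (U : Finset V) (v : V) :
    (#(outNbhd G U v) : ℝ) + #(inNbhd G U v) ≤ #U := by
  have hdisj : Disjoint (outNbhd G U v) (inNbhd G U v) :=
    disjoint_filter.2 fun u _ hvu ↦ hG v u hvu
  rw [← Nat.cast_add, ← card_union_of_disjoint hdisj]
  exact_mod_cast card_le_card (union_subset (outNbhd_subset U v) (inNbhd_subset U v))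

lemma card_outNbhd_le_add_card_sdiff (U W : Finset V) (v : V) :
    (#(outNbhd G U v) : ℝ) ≤ #(outNbhd G W v) + #(U \ W) := by
  have hsub : outNbhd G U v ⊆ outNbhd G W v ∪ U \ W := by
    intro u
    simp only [mem_outNbhd, mem_union, mem_sdiff]
    tauto
  exact_mod_cast (card_le_card hsub).trans (card_union_le _ _)

lemma card_add_card_le_card_inter_add {B : Finset V} (hA : A ⊆ U) (hB : B ⊆ U) :
    (#A : ℝ) + #B ≤ #(A ∩ B) + #U := by
  rw [add_comm (#(A ∩ B) : ℝ)]
  exact_mod_cast (card_union_add_card_inter A B).symm.trans_le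
    (Nat.add_le_add_right (card_le_card (union_subset hA hB)) _)

namespace NearRegular

protected lemma flip (h : NearRegular G d U v) : NearRegular (flip G) d U v := ⟨h.2, h.1⟩

lemma nonneg (h : NearRegular G d U v) (hG : IsOriented G) : 0 ≤ d := by
  linarith [h.1, h.2, card_outNbhd_add_card_inNbhd_le hG U v]

lemma le_card_outNbhd (h : NearRegular G d U v) (W : Finset V) :
    (#U : ℝ) / 2 - d - #(U \ W) ≤ #(outNbhd G W v) := by
  linarith [h.1, card_outNbhd_le_add_card_sdiff (G := G) U W v]

lemma card_outNbhd_le (h : NearRegular G d U v) (hG : IsOriented G) (hW : W ⊆ U) :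
    (#(outNbhd G W v) : ℝ) ≤ #U / 2 + d := by
  have hle : (#(outNbhd G W v) : ℝ) ≤ #(outNbhd G U v) := by
    exact_mod_cast card_le_card (filter_subset_filter _ hW)
  linarith [h.2, card_outNbhd_add_card_inNbhd_le hG U v]

end NearRegular

namespace AlmostComplete

protected lemma flip (h : AlmostComplete G e L) : AlmostComplete (flip G) e L := by
  simpa only [AlmostComplete, flip, and_comm] using h

lemma mono (h : AlmostComplete G e L) (hA : A ⊆ L) : AlmostComplete G e A := fun v hv ↦
  le_trans (by exact_mod_cast card_le_card (filter_subset_filter _ hA)) (h v (hA hv))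

lemma card_le (h : AlmostComplete G e L) (hv : v ∈ L) (hA : A ⊆ L) :
    (#A : ℝ) ≤ #(outNbhd G A v) + #(inNbhd G A v) + e := by
  have hsub : A ⊆ (outNbhd G A v ∪ inNbhd G A v) ∪ {u ∈ L | ¬ G v u ∧ ¬ G u v} := by
    intro u hu
    have := hA hu
    simp only [mem_union, mem_outNbhd, mem_inNbhd, mem_filter]
    tauto
  have hcard : (#A : ℝ) ≤ #(outNbhd G A v) + #(inNbhd G A v) +
      #{u ∈ L | ¬ G v u ∧ ¬ G u v} := by
    exact_mod_cast (card_le_card hsub).trans ((card_union_le _ _).trans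
      (Nat.add_le_add_right (card_union_le _ _) _))
  linarith [h v hv]

end AlmostComplete

lemma NearRegular.almostComplete (hG : IsOriented G) (h : ∀ v ∈ U, NearRegular G d U v) :
    AlmostComplete G (2 * d) U := by
  intro v hv
  have hdisj : Disjoint {u ∈ U | ¬ G v u ∧ ¬ G u v} (outNbhd G U v ∪ inNbhd G U v) := by
    rw [disjoint_left]
    intro u
    simp only [mem_filter, mem_union, mem_outNbhd, mem_inNbhd]
    tauto
  have hdisj' : Disjoint (outNbhd G U v) (inNbhd G U v) :=
    disjoint_filter.2 fun u _ hvu ↦ hG v u hvu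
  have hcard : (#{u ∈ U | ¬ G v u ∧ ¬ G u v} : ℝ) +
      (#(outNbhd G U v) + #(inNbhd G U v)) ≤ #U := by
    rw [← Nat.cast_add, ← Nat.cast_add, ← card_union_of_disjoint hdisj',
      ← card_union_of_disjoint hdisj]
    exact_mod_cast card_le_card (union_subset (filter_subset _ _)
      (union_subset (outNbhd_subset U v) (inNbhd_subset U v)))
  linarith [(h v hv).1, (h v hv).2]

lemma sum_card_inNbhd (U : Finset V) :
    ∑ v ∈ U, (#(inNbhd G U v) : ℝ) = ∑ v ∈ U, (#(outNbhd G U v) : ℝ) := by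
  exact_mod_cast (sum_card_bipartiteAbove_eq_sum_card_bipartiteBelow (s := U) (t := U) G).symm

lemma AlmostComplete.exists_le_card_outNbhd (h : AlmostComplete G e L) (hL : L.Nonempty) :
    ∃ v ∈ L, ((#L : ℝ) - e) / 2 ≤ #(outNbhd G L v) := by
  refine exists_le_of_sum_le hL ?_
  have hsum : ∑ _v ∈ L, ((#L : ℝ) - e) ≤ ∑ v ∈ L, ((#(outNbhd G L v) : ℝ) + #(inNbhd G L v)) :=
    sum_le_sum fun v hv ↦ by linarith [h.card_le hv subset_rfl]
  rw [sum_add_distrib, sum_card_inNbhd] at hsum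
  rw [← sum_div]
  linarith

lemma exists_card_outNbhd_le (hG : IsOriented G) (hL : L.Nonempty) :
    ∃ v ∈ L, (#(outNbhd G L v) : ℝ) ≤ #L / 2 := by
  refine exists_le_of_sum_le hL ?_
  have hsum : ∑ v ∈ L, ((#(outNbhd G L v) : ℝ) + #(inNbhd G L v)) ≤ ∑ _v ∈ L, (#L : ℝ) :=
    sum_le_sum fun v _ ↦ card_outNbhd_add_card_inNbhd_le hG L v
  rw [sum_add_distrib, sum_card_inNbhd] at hsum
  rw [← sum_div]
  linarith

end Neighbourhoods

section PathsAndCycles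

variable {V : Type*} {G : V → V → Prop} {U W L : Finset V} {w x y z : V} {i j k : ℕ}
  {l l' q : List V} {hq : q ≠ []} {e : ℝ}

/-- `l` is a list of `j` distinct elements of `W`: the vertices of a path, connection or cycle. -/
structure IsListIn (W : Finset V) (j : ℕ) (l : List V) : Prop where
  length_eq : l.length = j
  nodup : l.Nodup
  mem : ∀ u ∈ l, u ∈ W

/-- `l` lists the vertices of a directed path with `j` vertices, all of them in `W`. -/
structure IsPathIn (G : V → V → Prop) (W : Finset V) (j : ℕ) (l : List V) : Prop
    extends IsListIn W j l where
  chain : l.IsChain G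

/-- `l` lists the `j` inner vertices, all of them in `W`, of a directed walk from `x` to `y`. The
ends `x` and `y` need not lie in `W` and may coincide. -/
structure IsConnectionIn (G : V → V → Prop) (W : Finset V) (x y : V) (j : ℕ) (l : List V) : Prop
    extends IsListIn W j l where
  chain : (x :: (l ++ [y])).IsChain G

/-- `l` lists the vertices of a directed cycle of length `j`, all of them in `W`. -/
structure IsCycleIn (G : V → V → Prop) (W : Finset V) (j : ℕ) (l : List V) : Prop
    extends IsListIn W j l where
  chain : (l : Cycle V).Chain G

namespace IsListIn

lemma nil (W : Finset V) : IsListIn W 0 [] := ⟨rfl, List.nodup_nil, by simp⟩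

lemma mono (h : IsListIn W j l) (hW : W ⊆ U) : IsListIn U j l :=
  ⟨h.length_eq, h.nodup, fun u hu ↦ hW (h.mem u hu)⟩

lemma append (h : IsListIn W i l) (h' : IsListIn W j l') (hd : l.Disjoint l') :
    IsListIn W (i + j) (l ++ l') where
  length_eq := by simp [h.length_eq, h'.length_eq]
  nodup := h.nodup.append h'.nodup hd
  mem u hu := (List.mem_append.1 hu).elim (h.mem u) (h'.mem u)

lemma cons (h : IsListIn W j l) (hx : x ∈ W) (hxl : x ∉ l) : IsListIn W (j + 1) (x :: l) where
  length_eq := by simp [h.length_eq]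
  nodup := List.nodup_cons.2 ⟨hxl, h.nodup⟩
  mem := List.forall_mem_cons.2 ⟨hx, h.mem⟩

lemma toFinset_subset (h : IsListIn W j l) : l.toFinset ⊆ W :=
  fun u hu ↦ h.mem u (List.mem_toFinset.1 hu)

lemma card_toFinset (h : IsListIn W j l) : #l.toFinset = j := by
  rw [List.toFinset_card_of_nodup h.nodup, h.length_eq]

lemma card_sdiff_toFinset_add (h : IsListIn W j l) : #(W \ l.toFinset) + j = #W := by
  rw [← h.card_toFinset, card_sdiff_add_card_eq_card h.toFinset_subset]

lemma disjoint_of_sdiff (h : IsListIn (W \ l'.toFinset) j l) : l'.Disjoint l :=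
  fun u hul' hul ↦ (mem_sdiff.1 (h.mem u hul)).2 (List.mem_toFinset.2 hul')

end IsListIn

lemma IsCycleIn.mono (h : IsCycleIn G W j l) (hW : W ⊆ U) : IsCycleIn G U j l :=
  ⟨h.toIsListIn.mono hW, h.chain⟩

namespace IsPathIn

lemma mono (h : IsPathIn G W j l) (hW : W ⊆ U) : IsPathIn G U j l :=
  ⟨h.toIsListIn.mono hW, h.chain⟩

lemma cons (h : IsPathIn G W j l) (hx : x ∈ U) (hW : W ⊆ outNbhd G U x) (hG : IsOriented G) :
    IsPathIn G U (j + 1) (x :: l) where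
  toIsListIn := (h.toIsListIn.mono (hW.trans (outNbhd_subset U x))).cons hx
    fun hxl ↦ hG.irrefl x (mem_outNbhd.1 (hW (h.mem x hxl))).2
  chain := List.isChain_cons.2
    ⟨fun y hy ↦ (mem_outNbhd.1 (hW (h.mem y (List.mem_of_mem_head? hy)))).2, h.chain⟩

lemma isConnectionIn (h : IsPathIn G (outNbhd G U x ∩ inNbhd G U y) j l)
    (hxy : j = 0 → G x y) : IsConnectionIn G U x y j l where
  toIsListIn := h.toIsListIn.mono (inter_subset_left.trans (outNbhd_subset U x))
  chain := by
    have hl : ∀ u ∈ l, G x u ∧ G u y := fun u hu ↦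
      (mem_outNbhd_inter_inNbhd.1 (h.mem u hu)).2
    rcases l with _ | ⟨a, l⟩
    · simpa using hxy h.length_eq.symm
    · refine List.isChain_cons_cons.2 ⟨(hl a (by simp)).1, ?_⟩
      exact List.isChain_append.2 ⟨h.chain, List.isChain_singleton y,
        fun b hb c hc ↦ by
          rw [List.head?_cons, Option.mem_some_iff] at hc
          exact hc ▸ (hl b (List.mem_of_mem_getLast? hb)).2⟩

end IsPathIn

namespace IsConnectionIn

lemma nil (W : Finset V) (hxy : G x y) : IsConnectionIn G W x y 0 [] :=
  ⟨.nil W, by simpa using hxy⟩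

lemma mono (h : IsConnectionIn G W x y j l) (hW : W ⊆ U) : IsConnectionIn G U x y j l :=
  ⟨h.toIsListIn.mono hW, h.chain⟩

lemma cons (h : IsConnectionIn G W x y j l) (hx : x ∈ W) (hxl : x ∉ l) (hzx : G z x) :
    IsConnectionIn G W z y (j + 1) (x :: l) :=
  ⟨h.toIsListIn.cons hx hxl, List.isChain_cons_cons.2 ⟨hzx, h.chain⟩⟩

lemma append (h : IsConnectionIn G W x z i l) (h' : IsConnectionIn G W z y j l') (hz : z ∈ W)
    (hzl : z ∉ l) (hzl' : z ∉ l') (hd : l.Disjoint l') :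
    IsConnectionIn G W x y (i + (j + 1)) (l ++ z :: l') where
  toIsListIn := h.toIsListIn.append (h'.toIsListIn.cons hz hzl')
    (List.disjoint_cons_right.2 ⟨hzl, hd⟩)
  chain := by
    simpa using List.isChain_split (l₁ := x :: l).2 ⟨h.chain, h'.chain⟩

lemma append_getLast (hl : IsListIn W i l) (hchain : (x :: l).IsChain G) (hne : l ≠ [])
    (hl' : IsConnectionIn G W (l.getLast hne) y j l') (hd : l.Disjoint l') :
    IsConnectionIn G W x y (i + j) (l ++ l') where
  toIsListIn := hl.append hl'.toIsListIn hd
  chain := by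
    rw [← List.dropLast_concat_getLast hne, ← List.cons_append] at hchain
    have := List.isChain_split.2 ⟨hchain, hl'.chain⟩
    rwa [← List.dropLast_concat_getLast hne, List.append_assoc, List.append_assoc,
      ← List.cons_append]

lemma append_path (hl : IsConnectionIn G W x (q.head hq) i l) (hp : IsPathIn G W k q)
    (hl' : IsConnectionIn G W (q.getLast hq) y j l') (hlq : l.Disjoint q)
    (hlq' : (l ++ q).Disjoint l') : IsConnectionIn G W x y (i + k + j) (l ++ q ++ l') := by
  have hchain : (x :: (l ++ q)).IsChain G := by
    have := List.isChain_split (l₁ := x :: l).2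
      ⟨hl.chain, (List.cons_head_tail hq).symm ▸ hp.chain⟩
    rwa [List.cons_head_tail, List.cons_append] at this
  refine append_getLast (hl.toIsListIn.append hp.toIsListIn hlq) hchain
    (List.append_ne_nil_of_right_ne_nil l hq) ?_ hlq'
  rwa [List.getLast_append_of_ne_nil _ hq]

lemma isCycleIn (h : IsConnectionIn G W x x j l) (hx : x ∈ W) (hxl : x ∉ l) :
    IsCycleIn G W (j + 1) (x :: l) :=
  ⟨h.toIsListIn.cons hx hxl, (Cycle.chain_coe_cons G x l).2 h.chain⟩

end IsConnectionIn

lemma AlmostComplete.exists_path (h : AlmostComplete G e L) (hG : IsOriented G) (he : 0 ≤ e)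
    (j : ℕ) (hL : 2 ^ j * (e + 1) ≤ #L + e) : ∃ l, IsPathIn G L j l := by
  induction j generalizing L with
  | zero => exact ⟨[], .nil L, List.isChain_nil⟩
  | succ j ih =>
    have hpow : (1 : ℝ) ≤ 2 ^ j := one_le_pow₀ (by norm_num)
    rw [pow_succ] at hL
    have hne : L.Nonempty := by
      rw [← card_pos, ← Nat.cast_pos (α := ℝ)]
      nlinarith
    obtain ⟨v, hv, hvL⟩ := h.exists_le_card_outNbhd hne
    obtain ⟨l, hl⟩ := ih (h.mono (outNbhd_subset L v)) (by linarith)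
    exact ⟨v :: l, hl.cons hv subset_rfl hG⟩

lemma AlmostComplete.exists_connection (h : AlmostComplete G e L) (hG : IsOriented G)
    (he : 0 ≤ e) (hxy : j = 0 → G x y)
    (hcard : 2 ^ j * (e + 1) ≤ #(outNbhd G L x ∩ inNbhd G L y) + e) :
    ∃ l, IsConnectionIn G L x y j l ∧ x ∉ l ∧ y ∉ l := by
  obtain ⟨l, hl⟩ := (h.mono (inter_subset_left.trans (outNbhd_subset L x))).exists_path hG he j
    hcard
  have hmem : ∀ u ∈ l, G x u ∧ G u y := fun u hu ↦
    (mem_outNbhd_inter_inNbhd.1 (hl.mem u hu)).2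
  exact ⟨l, hl.isConnectionIn hxy, fun hxl ↦ hG.irrefl x (hmem x hxl).1,
    fun hyl ↦ hG.irrefl y (hmem y hyl).2⟩

lemma AlmostComplete.exists_cycle_of_edge (h : AlmostComplete G e L) (hG : IsOriented G)
    (he : 0 ≤ e) (hx : x ∈ L) (hy : y ∈ L) (hxy : G x y) (hj : j ≠ 0)
    (hcard : 2 ^ j * (e + 1) ≤ #(outNbhd G L y ∩ inNbhd G L x) + e) :
    ∃ l, IsCycleIn G L (j + 2) (x :: y :: l) := by
  obtain ⟨l, hl, hyl, hxl⟩ := h.exists_connection hG he (fun h ↦ absurd h hj) hcard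
  exact ⟨l, (hl.cons hy hyl hxy).isCycleIn hx
    (List.not_mem_cons_of_ne_of_not_mem (hG.ne hxy) hxl)⟩

end PathsAndCycles

section ShortCycles

variable {V : Type*} {G : V → V → Prop} {U W L : Finset V} {v x y : V} {j : ℕ} {d e : ℝ}

lemma exists_cycle_through (hG : IsOriented G) (hU : ∀ u ∈ U, NearRegular G d U u) (hW : W ⊆ U)
    (hv : v ∈ W) (hsmall : (#(U \ W) : ℝ) ≤ #U / 20) (hj : 3 ≤ j)
    (hn : 20 * (2 ^ j * (2 * d + 1)) ≤ #U) : ∃ l, IsCycleIn G W j (v :: l) := by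
  obtain ⟨i, rfl⟩ : ∃ i, j = i + 2 := ⟨j - 2, by omega⟩
  have hd : 0 ≤ d := (hU v (hW hv)).nonneg hG
  have hpow : (2 : ℝ) ≤ 2 ^ i := le_self_pow₀ one_le_two (by omega)
  rw [pow_add] at hn
  have hn' : 160 * (2 * d + 1) ≤ (#U : ℝ) := by nlinarith
  have hcomp : AlmostComplete G (2 * d) W := (NearRegular.almostComplete hG hU).mono hW
  have hv_ge := (hU v (hW hv)).le_card_outNbhd W
  have hv_le := (hU v (hW hv)).card_outNbhd_le hG hW
  have hv_ne : (outNbhd G W v).Nonempty := by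
    rw [← card_pos, ← Nat.cast_pos (α := ℝ)]
    linarith
  obtain ⟨b, hb, hb_le⟩ := exists_card_outNbhd_le hG hv_ne
  obtain ⟨hbW, hvb⟩ := mem_outNbhd.1 hb
  have hb_ge := (hU b (hW hbW)).le_card_outNbhd W
  have hlink := hcomp.card_le hv (outNbhd_subset (G := G) W b)
  rw [outNbhd_outNbhd_comm, inNbhd_outNbhd] at hlink
  obtain ⟨l, hl⟩ := hcomp.exists_cycle_of_edge hG (by linarith) hv hbW hvb (j := i) (by omega)
    (by nlinarith)
  exact ⟨b :: l, hl⟩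

/-- The vertex of largest outdegree works: an in-neighbour `q` of it with many out-neighbours
among the other in-neighbours would have a larger outdegree, because the edge from `q` lies on
few triangles. -/
lemma AlmostComplete.exists_card_inNbhd_le (h : AlmostComplete G e L) (hG : IsOriented G)
    (hL : L.Nonempty)
    (hlink : ∀ x ∈ L, ∀ y ∈ L, G x y → (#(outNbhd G L y ∩ inNbhd G L x) : ℝ) ≤ e) :
    ∃ x ∈ L, (#(inNbhd G L x) : ℝ) ≤ 5 * e := by
  obtain ⟨x, hx, hmax⟩ := exists_max_image L (fun x ↦ #(outNbhd G L x)) hL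
  refine ⟨x, hx, ?_⟩
  rcases (inNbhd G L x).eq_empty_or_nonempty with hempty | hne
  · have he : 0 ≤ e := (Nat.cast_nonneg _).trans (h x hx)
    simpa [hempty] using he
  obtain ⟨q, hq, hq_ge⟩ := (h.mono (inNbhd_subset L x)).exists_le_card_outNbhd hne
  obtain ⟨hqL, hqx⟩ := mem_inNbhd.1 hq
  have hout := h.card_le hqL (outNbhd_subset (G := G) L x)
  rw [inNbhd_outNbhd] at hout
  have hdisj : Disjoint (outNbhd G (outNbhd G L x) q) (outNbhd G (inNbhd G L x) q) :=
    (disjoint_filter.2 fun u _ hxu ↦ hG x u hxu).mono (outNbhd_subset _ _) (outNbhd_subset _ _)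
  have hsub : outNbhd G (outNbhd G L x) q ∪ outNbhd G (inNbhd G L x) q ⊆ outNbhd G L q :=
    union_subset (filter_subset_filter _ (outNbhd_subset L x))
      (filter_subset_filter _ (inNbhd_subset L x))
  have hq_le : (#(outNbhd G (outNbhd G L x) q) : ℝ) + #(outNbhd G (inNbhd G L x) q) ≤
      #(outNbhd G L x) := by
    rw [← Nat.cast_add, ← card_union_of_disjoint hdisj]
    exact_mod_cast (card_le_card hsub).trans (hmax q hqL)
  linarith [hlink q hqL x hx hqx]

lemma AlmostComplete.exists_source_sink (h : AlmostComplete G e L) (hG : IsOriented G)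
    (hL : L.Nonempty) (hcard : 6 * e < #L)
    (hlink : ∀ x ∈ L, ∀ y ∈ L, G x y → (#(outNbhd G L y ∩ inNbhd G L x) : ℝ) ≤ e) :
    ∃ x ∈ L, ∃ y ∈ L, G x y ∧ (#(inNbhd G L x) : ℝ) ≤ 5 * e ∧
      (#(outNbhd G L y) : ℝ) ≤ 11 * e := by
  obtain ⟨x, hx, hx_le⟩ := h.exists_card_inNbhd_le hG hL hlink
  have hx_ge := h.card_le hx subset_rfl
  have hne : (outNbhd G L x).Nonempty := by
    rw [← card_pos, ← Nat.cast_pos (α := ℝ)]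
    linarith
  have hcomp := h.mono (outNbhd_subset (G := G) L x)
  obtain ⟨y, hy, hy_le⟩ := hcomp.flip.exists_card_inNbhd_le hG.flip hne fun a ha b hb hba ↦ by
    have hsub : outNbhd G (outNbhd G L x) a ∩ inNbhd G (outNbhd G L x) b ⊆
        outNbhd G L a ∩ inNbhd G L b :=
      inter_subset_inter (filter_subset_filter _ (outNbhd_subset L x))
        (filter_subset_filter _ (outNbhd_subset L x))
    rw [outNbhd_flip, inNbhd_flip, inter_comm]
    exact le_trans (by exact_mod_cast card_le_card hsub)
      (hlink b (outNbhd_subset L x hb) a (outNbhd_subset L x ha) hba)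
  rw [inNbhd_flip] at hy_le
  obtain ⟨hyL, hxy⟩ := mem_outNbhd.1 hy
  refine ⟨x, hx, y, hyL, hxy, hx_le, ?_⟩
  have hy_le' := card_outNbhd_le_add_card_sdiff (G := G) L (outNbhd G L x) y
  rw [cast_card_sdiff (outNbhd_subset L x)] at hy_le'
  linarith

lemma le_card_outNbhd_inter_inNbhd_sdiff (hx : NearRegular G d U x) (hy : NearRegular G d U y)
    (hL : L ⊆ U) :
    (#L : ℝ) - 2 * d - #(inNbhd G L x) - #(outNbhd G L y) ≤
      #(outNbhd G (U \ L) y ∩ inNbhd G (U \ L) x) := by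
  have hsplit : ∀ p : V → Prop, (#{u ∈ U | p u} : ℝ) = #{u ∈ U \ L | p u} + #{u ∈ L | p u} :=
    fun p ↦ by
      rw [← Nat.cast_add, ← card_union_of_disjoint (disjoint_filter_filter sdiff_disjoint),
        ← filter_union, sdiff_union_of_subset hL]
  have hinter := card_add_card_le_card_inter_add (outNbhd_subset (G := G) (U \ L) y)
    (inNbhd_subset (G := G) (U \ L) x)
  rw [cast_card_sdiff hL] at hinter
  have hx_in := hx.2
  have hy_out := hy.1
  unfold inNbhd outNbhd at *
  rw [hsplit] at hx_in hy_out
  linarith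

/-- The set `L` is nearly transitive, so it has a source `x` and a sink `y`; the vertices `w`
with `y → w → x` close up a path of `L` from `x` to `y`. -/
lemma exists_many_closing (hG : IsOriented G) (hd : 0 ≤ d) (hU : ∀ u ∈ U, NearRegular G d U u)
    (hL : L ⊆ U) (hj : 3 ≤ j) (hn : 180 * (2 ^ j * (2 * d + 1)) ≤ #L)
    (hno : ∀ l, ¬ IsCycleIn G L j l) :
    ∃ W ⊆ U, (9 / 10 * #L : ℝ) ≤ #W ∧
      ∀ w ∈ W, ∃ l, IsListIn L (j - 1) l ∧ IsCycleIn G U j (w :: l) := by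
  obtain ⟨i, rfl⟩ : ∃ i, j = i + 3 := ⟨j - 3, by omega⟩
  have hpow : (1 : ℝ) ≤ 2 ^ i := one_le_pow₀ one_le_two
  rw [pow_add] at hn
  set e : ℝ := 2 ^ i * 2 * (2 * d + 1)
  have hde : 2 * d + 1 ≤ e := by nlinarith
  have hcomp : AlmostComplete G (2 * d) L := (NearRegular.almostComplete hG hU).mono hL
  have hcomp' : AlmostComplete G e L := fun v hv ↦ (hcomp v hv).trans (by linarith)
  have hLne : L.Nonempty := by
    rw [← card_pos, ← Nat.cast_pos (α := ℝ)]
    linarith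
  have hlink : ∀ x ∈ L, ∀ y ∈ L, G x y →
      (#(outNbhd G L y ∩ inNbhd G L x) : ℝ) ≤ e := by
    intro x hx y hy hxy
    by_contra! hlt
    obtain ⟨l, hl⟩ := hcomp.exists_cycle_of_edge hG (by linarith) hx hy hxy (j := i + 1)
      (by omega) (by rw [pow_succ]; linarith)
    exact hno _ hl
  obtain ⟨x, hx, y, hy, hxy, hx_le, hy_le⟩ :=
    hcomp'.exists_source_sink hG hLne (by linarith) hlink
  have hx_ge := hcomp'.card_le hx subset_rfl
  have hy_ge := hcomp'.card_le hy subset_rfl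
  have hinter := card_add_card_le_card_inter_add (outNbhd_subset (G := G) L x)
    (inNbhd_subset (G := G) L y)
  obtain ⟨q, hq, hxq, hyq⟩ := hcomp.exists_connection hG (by linarith) (fun _ ↦ hxy) (j := i)
    (by linarith)
  refine ⟨outNbhd G (U \ L) y ∩ inNbhd G (U \ L) x,
    inter_subset_left.trans ((outNbhd_subset _ _).trans sdiff_subset), ?_, fun w hw ↦ ?_⟩
  · linarith [le_card_outNbhd_inter_inNbhd_sdiff (hU x (hL hx)) (hU y (hL hy)) hL]
  · obtain ⟨⟨hwU, -⟩, hyw, hwx⟩ := mem_outNbhd_inter_inNbhd.1 hw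
    obtain ⟨hwU, hwL⟩ := mem_sdiff.1 hwU
    have hcon : IsConnectionIn G L w w (i + 2) (x :: q ++ [y]) :=
      (hq.cons hx hxq hwx).append (.nil L hyw) hy
        (List.not_mem_cons_of_ne_of_not_mem (hG.ne hxy).symm hyq) List.not_mem_nil
        (List.disjoint_nil_right _)
    exact ⟨_, hcon.toIsListIn, (hcon.mono hL).isCycleIn hwU fun hw ↦ hwL (hcon.mem w hw)⟩

end ShortCycles

section LayerCake

variable {α : Type*}

lemma intervalIntegrable_card_le (U : Finset α) (f : α → ℝ) (a b : ℝ) :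
    IntervalIntegrable (fun s ↦ (#{u ∈ U | s ≤ f u} : ℝ)) MeasureTheory.volume a b :=
  Antitone.intervalIntegrable fun _ _ hst ↦ Nat.cast_le.2
    (card_le_card (monotone_filter_right U fun _ _ h ↦ hst.trans h))

lemma integral_card_le (U : Finset α) (f : α → ℝ) {m : ℝ} (hf : ∀ u ∈ U, f u ∈ Set.Icc 0 m) :
    ∫ s in (0 : ℝ)..m, (#{u ∈ U | s ≤ f u} : ℝ) = ∑ u ∈ U, f u := by
  have hcard : ∀ s : ℝ, (#{u ∈ U | s ≤ f u} : ℝ) =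
      ∑ u ∈ U, Set.indicator {x | x ≤ f u} (fun _ ↦ (1 : ℝ)) s := by
    intro s
    rw [card_filter]
    push_cast
    exact sum_congr rfl fun u _ ↦ by simp [Set.indicator]
  simp_rw [hcard]
  rw [intervalIntegral.integral_finsetSum]
  · refine sum_congr rfl fun u hu ↦ ?_
    rw [intervalIntegral.integral_indicator (hf u hu)]
    simp
  · intro u _
    refine Antitone.intervalIntegrable fun s t hst ↦ ?_
    simp only [Set.indicator, Set.mem_ofPred_eq]
    split_ifs <;> linarith

lemma mul_sum_le_of_mul_card_le {U : Finset α} {f g : α → ℝ} {m a b : ℝ} (hm : 0 ≤ m)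
    (hf : ∀ u ∈ U, f u ∈ Set.Icc 0 m) (hg : ∀ u ∈ U, 0 ≤ g u)
    (hcard : ∀ s, 0 < s → a * #{u ∈ U | s ≤ f u} ≤ #{u ∈ U | s ≤ g u} + b) :
    a * ∑ u ∈ U, f u ≤ ∑ u ∈ U, g u + b * m := by
  have hint : IntervalIntegrable (fun s ↦ (#{u ∈ U | s ≤ min (g u) m} : ℝ) + b)
      MeasureTheory.volume 0 m := (intervalIntegrable_card_le _ _ _ _).add (by simp)
  calc a * ∑ u ∈ U, f u = ∫ s in (0 : ℝ)..m, a * (#{u ∈ U | s ≤ f u} : ℝ) := by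
        rw [intervalIntegral.integral_const_mul, integral_card_le U f hf]
    _ ≤ ∫ s in (0 : ℝ)..m, ((#{u ∈ U | s ≤ min (g u) m} : ℝ) + b) := by
        refine intervalIntegral.integral_mono_on_of_le_Ioo hm
          ((intervalIntegrable_card_le _ _ _ _).const_mul _) hint fun s hs ↦ ?_
        simpa only [le_min_iff, hs.2.le, and_true] using hcard s hs.1
    _ = ∑ u ∈ U, min (g u) m + b * m := by
        rw [intervalIntegral.integral_add (intervalIntegrable_card_le _ _ _ _) (by simp),
          integral_card_le _ _ fun u hu ↦ ⟨le_min (hg u hu) hm, min_le_right _ _⟩]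
        simp [mul_comm]
    _ ≤ ∑ u ∈ U, g u + b * m := by
        gcongr
        exact min_le_left _ _

end LayerCake

section Weights

variable {V : Type*} {G : V → V → Prop} {U L : Finset V} {v : V} {j : ℕ} {d : ℝ} {g : V → ℝ}

lemma sum_posPart_le_sum_negPart (hg : ∑ u ∈ U, g u ≤ 0) : ∑ u ∈ U, (g u)⁺ ≤ ∑ u ∈ U, (g u)⁻ := by
  rw [← sub_nonpos, ← sum_sub_distrib]
  simpa only [posPart_sub_negPart] using hg

lemma mul_card_lt_sum_posPart {b : ℝ} (hne : {u ∈ U | b < g u}.Nonempty) :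
    b * #{u ∈ U | b < g u} < ∑ u ∈ U, (g u)⁺ :=
  calc b * #{u ∈ U | b < g u} = ∑ u ∈ U with b < g u, b := by
        rw [sum_const, nsmul_eq_mul, mul_comm]
    _ < ∑ u ∈ U with b < g u, (g u)⁺ := sum_lt_sum_of_nonempty hne fun u hu ↦
      (mem_filter.1 hu).2.trans_le (le_posPart _)
    _ ≤ ∑ u ∈ U, (g u)⁺ :=
      sum_le_sum_of_subset_of_nonneg (filter_subset _ _) fun u _ _ ↦ posPart_nonneg _

lemma IsListIn.sum_map_le {b : ℝ} {l : List V} (hl : IsListIn L j l) (hL : ∀ u ∈ L, g u ≤ b) :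
    (l.map g).sum ≤ j * b := by
  rw [← hl.length_eq, ← nsmul_eq_mul, ← List.length_map (f := g)]
  refine List.sum_le_card_nsmul _ _ fun x hx ↦ ?_
  obtain ⟨u, hu, rfl⟩ := List.mem_map.1 hx
  exact hL u (hl.mem u hu)

/-- If this failed, `v` would lie on a cycle whose other vertices have weight at most `-g v / j`. -/
lemma lt_card_filter_of_cycles_pos (hG : IsOriented G) (hU : ∀ u ∈ U, NearRegular G d U u)
    (hj : 3 ≤ j) (hn : 20 * (2 ^ j * (2 * d + 1)) ≤ #U)
    (hpos : ∀ l, IsCycleIn G U j l → 0 < (l.map g).sum) (hv : v ∈ U) (hgv : g v ≤ 0) :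
    (#U : ℝ) / 20 < #{u ∈ U | -g v / j < g u} := by
  by_contra! hS
  set S := {u ∈ U | -g v / j < g u} with hS_def
  have hj0 : (0 : ℝ) < j := by exact_mod_cast (by omega : 0 < j)
  have hvS : v ∈ U \ S := by
    have : 0 ≤ -g v / j := div_nonneg (neg_nonneg.2 hgv) hj0.le
    simp only [hS_def, mem_sdiff, mem_filter, not_and, not_lt]
    exact ⟨hv, fun _ ↦ by linarith⟩
  obtain ⟨l, hl⟩ := exists_cycle_through hG hU sdiff_subset hvS
    (by rwa [Finset.sdiff_sdiff_eq_self (filter_subset _ _)]) hj hn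
  have hl_tail : IsListIn (U \ S) (j - 1) l :=
    ⟨by simp [← hl.length_eq], hl.nodup.of_cons, fun u hu ↦ hl.mem u (List.mem_cons_of_mem v hu)⟩
  have hsum : (l.map g).sum ≤ (j - 1 : ℕ) * (-g v / j) := hl_tail.sum_map_le fun u hu ↦ by
    simp only [hS_def, mem_sdiff, mem_filter, not_and, not_lt] at hu
    exact hu.2 hu.1
  have hcycle := hpos _ (hl.mono sdiff_subset)
  rw [List.map_cons, List.sum_cons] at hcycle
  have hsplit : ((j - 1 : ℕ) : ℝ) * (-g v / j) = -g v + g v / j := by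
    rw [Nat.cast_sub (by omega)]
    field_simp
    ring
  linarith [div_nonpos_of_nonpos_of_nonneg hgv hj0.le]

lemma card_sublevel_le_card_superlevel (hG : IsOriented G) (hd : 0 ≤ d)
    (hU : ∀ u ∈ U, NearRegular G d U u) (hj : 3 ≤ j)
    (hpos : ∀ l, IsCycleIn G U j l → 0 < (l.map g).sum) {s : ℝ} (hs : 0 < s) :
    9 / 10 * (#{u ∈ U | g u ≤ -s} : ℝ) ≤
      #{u ∈ U | 2 * s ≤ g u} + 180 * (2 ^ j * (2 * d + 1)) := by
  set L := {u ∈ U | g u ≤ -s}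
  have hgL : ∀ u ∈ L, g u ≤ -s := fun u hu ↦ (mem_filter.1 hu).2
  have hj' : (3 : ℝ) ≤ j := by exact_mod_cast hj
  rcases lt_or_ge (#L : ℝ) (180 * (2 ^ j * (2 * d + 1))) with hsmall | hlarge
  · linarith [Nat.cast_nonneg (α := ℝ) #{u ∈ U | 2 * s ≤ g u}, Nat.cast_nonneg (α := ℝ) #L]
  obtain ⟨W, hWU, hW, hclose⟩ := exists_many_closing hG hd hU (filter_subset _ U) hj hlarge
    fun l hl ↦ by
      have hsum := hpos l (hl.mono (filter_subset _ U))
      have := hl.sum_map_le hgL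
      nlinarith
  have hWsub : W ⊆ {u ∈ U | 2 * s ≤ g u} := by
    intro w hw
    obtain ⟨l, hl, hcycle⟩ := hclose w hw
    have hsum := hpos _ hcycle
    have hl_le := hl.sum_map_le hgL
    rw [List.map_cons, List.sum_cons] at hsum
    rw [Nat.cast_sub (by omega), Nat.cast_one] at hl_le
    exact mem_filter.2 ⟨hWU hw, by nlinarith⟩
  have : (#W : ℝ) ≤ #{u ∈ U | 2 * s ≤ g u} := by exact_mod_cast card_le_card hWsub
  have : 0 ≤ (2 : ℝ) ^ j * (2 * d + 1) := by positivity
  linarith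

lemma exists_cycle_sum_nonpos (hG : IsOriented G) (hU : ∀ u ∈ U, NearRegular G d U u)
    (hj : 3 ≤ j) (hne : U.Nonempty) (hn : 12000 * j * (2 ^ j * (2 * d + 1)) ≤ #U)
    (hg : ∑ u ∈ U, g u ≤ 0) : ∃ l, IsCycleIn G U j l ∧ (l.map g).sum ≤ 0 := by
  by_contra! hpos
  obtain ⟨v, hv, hmin⟩ := exists_min_image U g hne
  have hgv : g v ≤ 0 := by
    by_contra! hgv
    exact hg.not_gt (sum_pos (fun u hu ↦ hgv.trans_le (hmin u hu)) hne)
  have hd : 0 ≤ d := (hU v hv).nonneg hG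
  have hj' : (3 : ℝ) ≤ j := by exact_mod_cast hj
  set e : ℝ := 2 ^ j * (2 * d + 1)
  have he0 : 0 ≤ e := by positivity
  set S := {u ∈ U | -g v / j < g u}
  have hS : (#U : ℝ) / 20 < #S :=
    lt_card_filter_of_cycles_pos hG hU hj (by nlinarith) hpos hv hgv
  have hSne : S.Nonempty := by
    rw [← card_pos, ← Nat.cast_pos (α := ℝ)]
    linarith [Nat.cast_nonneg (α := ℝ) #U]
  have hquot : 0 ≤ -g v / j := div_nonneg (neg_nonneg.2 hgv) j.cast_nonneg
  have hposPart : -g v / j * (#U / 20) < ∑ u ∈ U, (g u)⁺ :=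
    lt_of_le_of_lt (by gcongr) (mul_card_lt_sum_posPart hSne)
  have hlayer := mul_sum_le_of_mul_card_le (U := U) (f := fun u ↦ (g u)⁻)
    (g := fun u ↦ (g u)⁺ / 2) (a := 9 / 10) (b := 180 * e) (m := -g v) (by linarith)
    (fun u hu ↦ ⟨negPart_nonneg _, by
      rw [negPart_def]
      exact sup_le (by linarith [hmin u hu]) (by linarith)⟩)
    (fun u _ ↦ by have := posPart_nonneg (g u); positivity) fun s hs ↦ by
      have hneg : ∀ u, s ≤ (g u)⁻ ↔ g u ≤ -s := fun u ↦ by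
        simp [negPart_def, hs.not_ge, le_neg]
      have hpos' : ∀ u, s ≤ (g u)⁺ / 2 ↔ 2 * s ≤ g u := fun u ↦ by
        simp [posPart_def, le_div_iff₀, mul_comm s, hs]
      simpa only [hneg, hpos'] using card_sublevel_le_card_superlevel hG hd hU hj hpos hs
  rw [← sum_div] at hlayer
  have hle := sum_posPart_le_sum_negPart hg
  have hem : 600 * e * -g v ≤ -g v / j * (#U / 20) := by
    rw [div_mul_eq_mul_div, le_div_iff₀ (by linarith)]
    nlinarith
  nlinarith

end Weights

section Connections

variable {V : Type*} {G : V → V → Prop} {U W P R S : Finset V} {v x y : V} {k : ℕ} {a d : ℝ}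
  {g : V → ℝ}

lemma exists_edge_between (hG : IsOriented G) (hU : ∀ u ∈ U, NearRegular G d U u)
    (hPU : P ⊆ U) (hRU : R ⊆ U) (hP : (44 / 100 * #U : ℝ) ≤ #P) (hR : (44 / 100 * #U : ℝ) ≤ #R)
    (hd : 0 ≤ d) (hn : 200 * (2 * d + 1) ≤ (#U : ℝ)) : ∃ p ∈ P, ∃ r ∈ R, G p r := by
  by_contra! hno
  have hP_ne : P.Nonempty := by
    rw [← card_pos, ← Nat.cast_pos (α := ℝ)]
    linarith
  have hinter : (#(P ∩ R) : ℝ) ≤ 2 * d := by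
    rcases (P ∩ R).eq_empty_or_nonempty with hempty | ⟨v, hv⟩
    · simpa [hempty] using hd
    · have hv_card := NearRegular.almostComplete hG hU v (hPU (mem_inter.1 hv).1)
      refine le_trans ?_ hv_card
      have hsub : P ∩ R ⊆ {u ∈ U | ¬ G v u ∧ ¬ G u v} := fun u hu ↦ by
        rw [mem_inter] at hu hv
        exact mem_filter.2 ⟨hPU hu.1, hno v hv.1 u hu.2, hno u hu.1 v hv.2⟩
      exact_mod_cast card_le_card hsub
  obtain ⟨b, hb, hb_le⟩ := exists_card_outNbhd_le hG hP_ne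
  have hsub : outNbhd G U b ⊆ outNbhd G P b ∪ U \ (P ∪ R) := by
    intro u hu
    obtain ⟨huU, hbu⟩ := mem_outNbhd.1 hu
    have huR : u ∉ R := fun h ↦ hno b hb u h hbu
    simp only [mem_union, mem_outNbhd, mem_sdiff]
    tauto
  have hcard : (#(outNbhd G U b) : ℝ) ≤ #(outNbhd G P b) + #(U \ (P ∪ R)) := by
    exact_mod_cast (card_le_card hsub).trans (card_union_le _ _)
  rw [cast_card_sdiff (union_subset hPU hRU)] at hcard
  have hunion : (#(P ∪ R) : ℝ) + #(P ∩ R) = #P + #R := by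
    exact_mod_cast card_union_add_card_inter P R
  linarith [(hU b (hPU hb)).1]

lemma exists_short_connection (hG : IsOriented G) (hU : ∀ u ∈ U, NearRegular G d U u)
    (hx : NearRegular G d U x) (hy : NearRegular G d U y) (hn : 200 * (2 * d + 1) ≤ (#U : ℝ))
    (hW : W ⊆ U) (hsmall : (#(U \ W) : ℝ) ≤ 55 / 1000 * #U) :
    ∃ l, IsConnectionIn G W x y 2 l := by
  have hd := hx.nonneg hG
  have hx_ge := hx.le_card_outNbhd W
  have hy_ge := hy.flip.le_card_outNbhd W
  rw [outNbhd_flip] at hy_ge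
  obtain ⟨p, hp, r, hr, hpr⟩ := exists_edge_between hG hU ((outNbhd_subset (G := G) W x).trans hW)
    ((inNbhd_subset (G := G) W y).trans hW) (by linarith) (by linarith) hd hn
  obtain ⟨hpW, hxp⟩ := mem_outNbhd.1 hp
  obtain ⟨hrW, hry⟩ := mem_inNbhd.1 hr
  exact ⟨[p, r], ((IsConnectionIn.nil W hry).cons hrW List.not_mem_nil hpr).cons hpW
    (by simpa using hG.ne hpr) hxp⟩

lemma card_filter_lt_le_of_sum_posPart_le (hpos : ∑ u ∈ U, (g u)⁺ ≤ a * #U) :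
    (#{u ∈ U | 20 * a < g u} : ℝ) ≤ #U / 20 := by
  set S := {u ∈ U | 20 * a < g u}
  by_contra! hS
  have hS_ne : S.Nonempty := by
    rw [← card_pos, ← Nat.cast_pos (α := ℝ)]
    linarith [Nat.cast_nonneg (α := ℝ) #U]
  have hsum : #S * (20 * a) < a * #U :=
    (mul_comm _ _).trans_lt ((mul_card_lt_sum_posPart hS_ne).trans_le hpos)
  have ha : 0 ≤ a := nonneg_of_mul_nonneg_left
    ((sum_nonneg fun u _ ↦ posPart_nonneg (g u)).trans hpos)
    (by exact_mod_cast (hS_ne.mono (filter_subset _ U)).card_pos)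
  linarith [mul_le_mul_of_nonneg_left hS.le ha]

lemma exists_path_sum_le_of_heavy (hG : IsOriented G) (hU : ∀ u ∈ U, NearRegular G d U u)
    (hSU : S ⊆ U) (hS : (#S : ℝ) ≤ #U / 20) (hgS : ∀ u ∈ U \ S, g u ≤ 20 * a)
    (hv : v ∈ U) (hgv : g v ≤ -(20 * (k + 4) * a)) (hn : 12000 * (2 ^ k * (2 * d + 1)) ≤ #U) :
    ∃ q, IsPathIn G U (k + 1) q ∧ (q.map g).sum ≤ -(80 * a) := by
  have hd := (hU v hv).nonneg hG
  have : (1 : ℝ) ≤ 2 ^ k := one_le_pow₀ one_le_two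
  have hsub : outNbhd G (U \ S) v ⊆ U \ S := outNbhd_subset _ _
  have hv_ge := (hU v hv).le_card_outNbhd (U \ S)
  rw [Finset.sdiff_sdiff_eq_self hSU] at hv_ge
  obtain ⟨l, hl⟩ := ((NearRegular.almostComplete hG hU).mono
    (hsub.trans sdiff_subset)).exists_path hG (by linarith) k (by nlinarith)
  refine ⟨v :: l, hl.cons hv (filter_subset_filter _ sdiff_subset) hG, ?_⟩
  have hsum := hl.sum_map_le fun u hu ↦ hgS u (hsub hu)
  rw [List.map_cons, List.sum_cons]
  linarith

lemma exists_path_sum_le_of_light (hG : IsOriented G) (hU : ∀ u ∈ U, NearRegular G d U u)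
    (hk : 160 ≤ k) (ha : 0 < a) (hneg : ∑ u ∈ U, (g u)⁻ = a * #U)
    (hlight : ∀ u ∈ U, -(20 * (k + 4) * a) ≤ g u) (hd : 0 ≤ d)
    (hn : 12000 * k * (2 ^ k * (2 * d + 1)) ≤ #U) :
    ∃ q, IsPathIn G U k q ∧ (q.map g).sum ≤ -(80 * a) := by
  have hk' : (160 : ℝ) ≤ k := by exact_mod_cast hk
  have hpow : (1 : ℝ) ≤ 2 ^ k := one_le_pow₀ one_le_two
  set L := {u ∈ U | g u ≤ -(a / 2)} with hL
  have hL_card : (#U : ℝ) ≤ 40 * (k + 4) * #L := by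
    have hpointwise : ∀ u ∈ U, (g u)⁻ ≤ a / 2 + if g u ≤ -(a / 2) then 20 * (k + 4) * a else 0 := by
      intro u hu
      have := hlight u hu
      rw [negPart_def]
      split_ifs with h
      · exact sup_le (by linarith) (by positivity)
      · exact sup_le (by linarith) (by positivity)
    have hsum := sum_le_sum hpointwise
    rw [hneg, sum_add_distrib, sum_const, ← sum_filter, sum_const, nsmul_eq_mul, nsmul_eq_mul,
      ← hL] at hsum
    refine le_of_mul_le_mul_left ?_ ha
    linarith
  have hcomp := (NearRegular.almostComplete hG hU).mono (filter_subset _ U : L ⊆ U)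
  obtain ⟨q, hq⟩ := hcomp.exists_path hG (by linarith) k (by
    have he : 0 ≤ (2 : ℝ) ^ k * (2 * d + 1) := by positivity
    have : (40 * (k + 4) : ℝ) * (2 ^ k * (2 * d + 1)) ≤ 40 * (k + 4) * #L := by nlinarith
    linarith [le_of_mul_le_mul_left this (by positivity)])
  refine ⟨q, hq.mono (filter_subset _ U), ?_⟩
  have := hq.sum_map_le fun u hu ↦ (mem_filter.1 hu).2
  nlinarith

lemma exists_path_sum_le (hG : IsOriented G) (hU : ∀ u ∈ U, NearRegular G d U u) (hk : 160 ≤ k)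
    (hn : 12000 * k * (2 ^ k * (2 * d + 1)) ≤ #U) (hd : 0 ≤ d) (hne : U.Nonempty)
    (hneg : ∑ u ∈ U, (g u)⁻ = a * #U) (hSU : S ⊆ U) (hS : (#S : ℝ) ≤ #U / 20)
    (hgS : ∀ u ∈ U \ S, g u ≤ 20 * a) :
    ∃ q, IsPathIn G U k q ∧ (q.map g).sum ≤ -(80 * a) := by
  have he : 0 ≤ (2 : ℝ) ^ k * (2 * d + 1) := by positivity
  obtain ⟨i, rfl⟩ : ∃ i, k = i + 1 := ⟨k - 1, by omega⟩
  by_cases hheavy : ∃ v ∈ U, g v ≤ -(20 * (i + 4) * a)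
  · obtain ⟨v, hv, hgv⟩ := hheavy
    refine exists_path_sum_le_of_heavy hG hU hSU hS hgS hv hgv ?_
    have hk' : (1 : ℝ) ≤ (i + 1 : ℕ) := by exact_mod_cast (by omega : 1 ≤ i + 1)
    have hpow : (2 : ℝ) ^ i ≤ 2 ^ (i + 1) := pow_le_pow_right₀ one_le_two i.le_succ
    calc 12000 * (2 ^ i * (2 * d + 1)) ≤ 12000 * (i + 1 : ℕ) * (2 ^ (i + 1) * (2 * d + 1)) := by
          gcongr
          linarith
      _ ≤ #U := hn
  · push Not at hheavy
    have ha_pos : 0 < a := by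
      obtain ⟨u, hu⟩ : (U \ S).Nonempty := by
        have := hne.card_pos
        rw [← card_pos, ← Nat.cast_pos (α := ℝ), cast_card_sdiff hSU]
        have : (0 : ℝ) < #U := by exact_mod_cast this
        linarith
      have := (hheavy u (sdiff_subset hu)).trans_le (hgS u hu)
      have : 0 < (20 * (i + 5)) * a := by linarith
      exact pos_of_mul_pos_right this (by positivity)
    refine exists_path_sum_le_of_light hG hU hk ha_pos hneg (fun u hu ↦ ?_) hd hn
    have := hheavy u hu
    push_cast
    linarith

lemma exists_short_connection_sum_le (hG : IsOriented G) (hU : ∀ u ∈ U, NearRegular G d U u)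
    (hx : NearRegular G d U x) (hy : NearRegular G d U y) (hS : (#S : ℝ) ≤ #U / 20)
    (hgS : ∀ u ∈ U \ S, g u ≤ 20 * a) (hn : 200 * (2 * d + 1) ≤ (#U : ℝ)) {l : List V}
    (hl : (l.length : ℝ) ≤ #U / 200) :
    ∃ l', IsConnectionIn G U x y 2 l' ∧ l.Disjoint l' ∧ (l'.map g).sum ≤ 40 * a := by
  have hsmall : (#(U \ ((U \ S) \ l.toFinset)) : ℝ) ≤ 55 / 1000 * #U := by
    have hsub : U \ ((U \ S) \ l.toFinset) ⊆ S ∪ l.toFinset := fun u hu ↦ by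
      simp only [mem_sdiff, mem_union] at hu ⊢
      tauto
    have hcard : (#(U \ ((U \ S) \ l.toFinset)) : ℝ) ≤ #S + l.length := by
      exact_mod_cast (card_le_card hsub).trans <| (card_union_le _ _).trans <|
        Nat.add_le_add_left l.toFinset_card_le _
    linarith
  obtain ⟨l', hl'⟩ :=
    exists_short_connection hG hU hx hy hn (sdiff_subset.trans sdiff_subset) hsmall
  refine ⟨l', hl'.mono (sdiff_subset.trans sdiff_subset), hl'.disjoint_of_sdiff, ?_⟩
  have := hl'.sum_map_le fun u hu ↦ hgS u (sdiff_subset hu)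
  push_cast at this
  linarith

lemma mul_le_of_mul_two_pow_mul_le {b d n : ℝ} {k : ℕ} (hb : 0 ≤ b) (hd : 0 ≤ d)
    (hn : b * k * (2 ^ k * (2 * d + 1)) ≤ n) : b * k * (2 * d + 1) ≤ n := by
  refine le_trans ?_ hn
  gcongr
  exact le_mul_of_one_le_left (by positivity) (one_le_pow₀ one_le_two)

lemma exists_connection_sum_nonpos (hG : IsOriented G) (hU : ∀ u ∈ U, NearRegular G d U u)
    (hx : NearRegular G d U x) (hy : NearRegular G d U y) (hk : 164 ≤ k)
    (hn : 12000 * k * (2 ^ k * (2 * d + 1)) ≤ #U) (hne : U.Nonempty) (hg : ∑ u ∈ U, g u ≤ 0) :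
    ∃ l, IsConnectionIn G U x y k l ∧ (l.map g).sum ≤ 0 := by
  obtain ⟨i, rfl⟩ : ∃ i, k = 2 + i + 2 := ⟨k - 4, by omega⟩
  have : (0 : ℝ) < #U := by exact_mod_cast hne.card_pos
  have hd := hx.nonneg hG
  obtain ⟨a, hneg⟩ : ∃ a, ∑ u ∈ U, (g u)⁻ = a * #U := ⟨(∑ u ∈ U, (g u)⁻) / #U, by field_simp⟩
  set S := {u ∈ U | 20 * a < g u}
  have hS : (#S : ℝ) ≤ #U / 20 :=
    card_filter_lt_le_of_sum_posPart_le ((sum_posPart_le_sum_negPart hg).trans_eq hneg)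
  have hSU : S ⊆ U := filter_subset _ U
  have hgS (u) (hu : u ∈ U \ S) : g u ≤ 20 * a :=
    not_lt.1 fun h ↦ (mem_sdiff.1 hu).2 (mem_filter.2 ⟨(mem_sdiff.1 hu).1, h⟩)
  have hn_lin := mul_le_of_mul_two_pow_mul_le (by norm_num) hd hn
  push_cast at hn_lin
  have hn_path : 12000 * i * (2 ^ i * (2 * d + 1)) ≤ (#U : ℝ) := by
    refine le_trans ?_ hn
    gcongr
    · omega
    · exact one_le_two
    · omega
  have hn_short : 200 * (2 * d + 1) ≤ (#U : ℝ) := by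
    have : 0 ≤ (i : ℝ) * d := by positivity
    linarith
  have hlen (l : List V) (hl : l.length ≤ i + 2) : (l.length : ℝ) ≤ #U / 200 := by
    have : (l.length : ℝ) ≤ i + 2 := by exact_mod_cast hl
    have : 0 ≤ (i : ℝ) * d := by positivity
    linarith
  obtain ⟨q, hq, hq_sum⟩ := exists_path_sum_le (k := i) hG hU (by omega) hn_path hd hne hneg
    hSU hS hgS
  have hq_ne : q ≠ [] := List.ne_nil_of_length_pos (by rw [hq.length_eq]; omega)
  obtain ⟨l₁, hl₁, hql₁, hl₁_sum⟩ := exists_short_connection_sum_le hG hU hx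
    (hU _ (hq.mem _ (q.head_mem hq_ne))) hS hgS hn_short (hlen q (by rw [hq.length_eq]; omega))
  obtain ⟨l₂, hl₂, hql₂, hl₂_sum⟩ := exists_short_connection_sum_le hG hU
    (hU _ (hq.mem _ (q.getLast_mem hq_ne))) hy hS hgS hn_short
    (hlen (l₁ ++ q) (by rw [List.length_append, hl₁.length_eq, hq.length_eq]; omega))
  refine ⟨l₁ ++ q ++ l₂, hl₁.append_path hq hl₂ hql₁.symm hql₂, ?_⟩
  simp only [List.map_append, List.sum_append]
  linarith

end Connections

section Balanced

variable {ι V : Type*} {G : V → V → Prop} {U W W' : Finset V} {x y v : V} {K M j k r n : ℕ} {c : ℝ}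

/-- The indicator functions of the outneighbourhoods and the inneighbourhoods. -/
noncomputable def adjIndicator (G : V → V → Prop) : V ⊕ V → V → ℝ :=
  Sum.elim (fun v u ↦ if G v u then 1 else 0) (fun v u ↦ if G u v then 1 else 0)

lemma adjIndicator_mem_Icc (i : V ⊕ V) (u : V) : adjIndicator G i u ∈ Set.Icc 0 1 := by
  rcases i with v | v <;> simp only [adjIndicator, Sum.elim_inl, Sum.elim_inr] <;> split_ifs <;>
    simp

lemma expect_adjIndicator_inl (U : Finset V) (v : V) :
    𝔼 u ∈ U, adjIndicator G (.inl v) u = #(outNbhd G U v) / #U := by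
  simp [expect_eq_sum_div_card, adjIndicator, outNbhd]

lemma expect_adjIndicator_inr (U : Finset V) (v : V) :
    𝔼 u ∈ U, adjIndicator G (.inr v) u = #(inNbhd G U v) / #U := by
  simp [expect_eq_sum_div_card, adjIndicator, inNbhd]

lemma nearRegular_iff_le_expect (hU : U.Nonempty) :
    NearRegular G (c * #U) U v ↔ 1 / 2 - c ≤ 𝔼 u ∈ U, adjIndicator G (.inl v) u ∧
      1 / 2 - c ≤ 𝔼 u ∈ U, adjIndicator G (.inr v) u := by
  have hU_pos : (0 : ℝ) < #U := by exact_mod_cast hU.card_pos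
  rw [expect_adjIndicator_inl, expect_adjIndicator_inr, le_div_iff₀ hU_pos, le_div_iff₀ hU_pos,
    show (1 / 2 - c) * (#U : ℝ) = #U / 2 - c * #U by ring, NearRegular]

/-- The degrees into `U` of the vertices of `W` are, in the average sense of `deficit`, close to at
least half of `#U`. Since the bound on the deficit is small for large `U`, it forces the degree of
each single vertex of `W`; `K` bounds the number of vertices removed from `U` at a time. -/
def Balanced (G : V → V → Prop) (K : ℕ) (c : ℝ) (W U : Finset V) : Prop :=
  deficit (1 / 2 - c / 2) (W.disjSum W) (adjIndicator G) U ≤ 5000 * (K : ℝ) ^ 4 / #U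

/-- Sets of at least `M` vertices are large enough for the constructions with sets of at most `K`
vertices in graphs whose degrees fall short of one half by at most a proportion `c`. -/
structure IsThreshold (K : ℕ) (c : ℝ) (M : ℕ) : Prop where
  pos : 0 < c
  two_mul_le : 2 * K + 2 ≤ M
  deficit_le : 5000 * (K : ℝ) ^ 4 ≤ (c / 2) ^ 4 * M
  mul_pow_le : ∀ n : ℕ, M ≤ n → 12000 * K * (2 ^ K * (2 * (c * n) + 1)) ≤ (n : ℝ)

lemma exists_isThreshold (K : ℕ) : ∃ c M, IsThreshold K c M := by
  set D : ℝ := 12000 * K * 2 ^ K + 1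
  have hD : 0 < D := by positivity
  obtain ⟨M, hM⟩ := exists_nat_ge
    (max (2 * K + 2 : ℝ) (max (5000 * (K : ℝ) ^ 4 / (1 / (4 * D) / 2) ^ 4) (2 * D)))
  simp only [max_le_iff] at hM
  obtain ⟨hM_two, hM_deficit, hM_pow⟩ := hM
  refine ⟨1 / (4 * D), M, by positivity, by exact_mod_cast hM_two, ?_, fun n hn ↦ ?_⟩
  · rwa [← div_le_iff₀' (by positivity)]
  · have hn' : 2 * D ≤ n := hM_pow.trans (Nat.cast_le.2 hn)
    calc 12000 * K * (2 ^ K * (2 * (1 / (4 * D) * n) + 1)) ≤ D * (2 * (1 / (4 * D) * n) + 1) := by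
          rw [← mul_assoc]
          gcongr
          exact le_add_of_nonneg_right zero_le_one
      _ = (n + 2 * D) / 2 := by
        field_simp
        ring
      _ ≤ n := by linarith

lemma IsThreshold.mul_pow_le_of_le (h : IsThreshold K c M) (hk : k ≤ K) (hn : M ≤ n) :
    12000 * k * (2 ^ k * (2 * (c * n) + 1)) ≤ (n : ℝ) := by
  have := h.pos
  refine le_trans ?_ (h.mul_pow_le n hn)
  gcongr
  exact one_le_two

lemma balanced_of_nearRegular (hU : U.Nonempty)
    (h : ∀ v ∈ W, NearRegular G (c / 2 * #U) U v) : Balanced G K c W U := by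
  refine le_trans (sum_nonpos fun i hi ↦ ?_) (by positivity : (0 : ℝ) ≤ _)
  rw [posPart_eq_zero.2, zero_pow four_ne_zero]
  rw [sub_nonpos]
  rcases i with v | v
  · exact ((nearRegular_iff_le_expect hU).1 (h v (inl_mem_disjSum.1 hi))).1
  · exact ((nearRegular_iff_le_expect hU).1 (h v (inr_mem_disjSum.1 hi))).2

namespace Balanced

lemma mono (h : Balanced G K c W U) (hW : W' ⊆ W) : Balanced G K c W' U :=
  (deficit_mono (disjSum_mono hW hW) _ _).trans h

lemma nearRegular (h : Balanced G K c W U) (hM : IsThreshold K c M) (hU : M ≤ #U) (hv : v ∈ W) :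
    NearRegular G (c * #U) U v := by
  have hc := hM.pos
  have hU_card : 0 < #U := by have := hM.two_mul_le; omega
  have hU_pos : (0 : ℝ) < #U := by exact_mod_cast hU_card
  have hle : ∀ i ∈ W.disjSum W, 1 / 2 - c ≤ 𝔼 u ∈ U, adjIndicator G i u := by
    intro i hi
    have hpow : (1 / 2 - c / 2 - 𝔼 u ∈ U, adjIndicator G i u)⁺ ^ 4 ≤ (c / 2) ^ 4 :=
      calc _ ≤ 5000 * (K : ℝ) ^ 4 / #U :=
            (single_le_sum (fun i _ ↦ by positivity) hi).trans h
        _ ≤ (c / 2) ^ 4 := by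
          rw [div_le_iff₀ hU_pos]
          exact hM.deficit_le.trans (by gcongr)
    have := (le_posPart _).trans (le_of_pow_le_pow_left₀ four_ne_zero (by positivity) hpow)
    linarith
  exact (nearRegular_iff_le_expect (card_pos.1 hU_card)).2
    ⟨hle _ (inl_mem_disjSum.2 hv), hle _ (inr_mem_disjSum.2 hv)⟩

lemma exists_sdiff {Q : List V → Prop} (h : Balanced G K c W U) (hk : 1 ≤ k) (hkK : k ≤ K)
    (hW : #W ≤ 2 * #U) (hU : 2 * K ≤ #U) (hQ : ∀ l, Q l → IsListIn U k l)
    (hex : ∀ g : V → ℝ, ∑ u ∈ U, g u ≤ 0 → ∃ l, Q l ∧ (l.map g).sum ≤ 0) :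
    ∃ l, Q l ∧ Balanced G K c W (U \ l.toFinset) := by
  have hI : (#(W.disjSum W) : ℝ) ≤ 4 * #U := by
    rw [card_disjSum]
    exact_mod_cast (by omega : #W + #W ≤ 4 * #U)
  obtain ⟨_, -, ⟨l, hl, rfl⟩, hbal⟩ := exists_deficit_sdiff_le
    (P := fun T ↦ ∃ l, Q l ∧ l.toFinset = T) adjIndicator_mem_Icc hI (by exact_mod_cast hU) h
    fun g hg ↦ by
      obtain ⟨l, hl, hsum⟩ := hex g hg
      have hlU := hQ l hl
      refine ⟨l.toFinset, hlU.toFinset_subset, ?_, ?_, ⟨l, hl, rfl⟩, ?_⟩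
      · rw [← card_pos, hlU.card_toFinset]
        omega
      · exact_mod_cast hlU.card_toFinset.trans_le hkK
      · rwa [List.sum_toFinset g hlU.nodup]
  exact ⟨l, hl, hbal⟩

lemma exists_bounded_connection (h : Balanced G K c (insert x (insert y U)) U)
    (hG : IsOriented G) (hM : IsThreshold K c M) (hk : 164 ≤ k) (hkK : k ≤ K) (hU : M ≤ #U) :
    ∃ l, IsConnectionIn G U x y k l ∧
      Balanced G K c (insert x (insert y U)) (U \ l.toFinset) := by
  have hM_two := hM.two_mul_le
  have hcard : #(insert x (insert y U)) ≤ #U + 2 :=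
    (card_insert_le _ _).trans (Nat.succ_le_succ (card_insert_le _ _))
  refine h.exists_sdiff (by omega) hkK (by omega) (by omega) (fun l hl ↦ hl.toIsListIn)
    fun g hg ↦ ?_
  have hreg (u) (hu : u ∈ insert x (insert y U)) := h.nearRegular hM hU hu
  exact exists_connection_sum_nonpos hG (fun u hu ↦ hreg u (by simp [hu])) (hreg x (by simp))
    (hreg y (by simp)) hk (hM.mul_pow_le_of_le hkK hU) (card_pos.1 (by omega)) hg

lemma exists_connection (h : Balanced G K c (insert x (insert y U)) U) (hG : IsOriented G)
    (hK : 328 ≤ K) (hM : IsThreshold K c M) (hr : 164 ≤ r) (hU : r + M ≤ #U) :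
    ∃ l, IsConnectionIn G U x y r l ∧ Balanced G K c (U \ l.toFinset) (U \ l.toFinset) := by
  induction r using Nat.strong_induction_on generalizing U x with
  | _ r ih =>
    rcases lt_or_ge r 328 with hr_lt | hr_ge
    · obtain ⟨l, hl, hbal⟩ := h.exists_bounded_connection hG hM hr (by omega) (by omega)
      exact ⟨l, hl, hbal.mono
        (sdiff_subset.trans ((subset_insert _ _).trans (subset_insert _ _)))⟩
    · obtain ⟨l, hl, hbal⟩ := h.exists_bounded_connection hG hM le_rfl (by omega) (by omega)
      have hcard := hl.card_sdiff_toFinset_add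
      have hl_ne : l ≠ [] := List.ne_nil_of_length_pos (by rw [hl.length_eq]; norm_num)
      have hz := hl.mem _ (List.getLast_mem hl_ne)
      have hchain : (x :: l).IsChain G := (List.isChain_append.1 hl.chain).1
      have hsub : insert (l.getLast hl_ne) (insert y (U \ l.toFinset)) ⊆
          insert x (insert y U) :=
        (insert_subset (mem_insert_of_mem hz) (insert_subset_insert _ sdiff_subset)).trans
          (subset_insert _ _)
      obtain ⟨l', hl', hbal'⟩ :=
        ih (r - 164) (by omega) (hbal.mono hsub) (by omega) (by omega)
      refine ⟨l ++ l', ?_, ?_⟩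
      · rw [← Nat.add_sub_of_le hr]
        exact .append_getLast hl.toIsListIn hchain hl_ne (hl'.mono sdiff_subset)
          hl'.disjoint_of_sdiff
      · rwa [List.toFinset_append, ← sup_eq_union, ← sdiff_sdiff_left]

lemma exists_short_cycle (h : Balanced G K c U U) (hG : IsOriented G) (hM : IsThreshold K c M)
    (hj : 3 ≤ j) (hjK : j ≤ K) (hU : M ≤ #U) :
    ∃ l, IsCycleIn G U j l ∧ Balanced G K c U (U \ l.toFinset) := by
  have hM_two := hM.two_mul_le
  refine h.exists_sdiff (by omega) hjK (by omega) (by omega) (fun l hl ↦ hl.toIsListIn)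
    fun g hg ↦ ?_
  exact exists_cycle_sum_nonpos hG (fun u hu ↦ h.nearRegular hM hU hu) hj
    (card_pos.1 (by omega)) (hM.mul_pow_le_of_le hjK hU) hg

lemma exists_cycle (h : Balanced G K c U U) (hG : IsOriented G) (hK : 328 ≤ K)
    (hM : IsThreshold K c M) (hj : 3 ≤ j) (hU : j + M ≤ #U) :
    ∃ l, IsCycleIn G U j l ∧ Balanced G K c (U \ l.toFinset) (U \ l.toFinset) := by
  rcases lt_or_ge j 167 with hj_lt | hj_ge
  · obtain ⟨l, hl, hbal⟩ := h.exists_short_cycle hG hM hj (by omega) (by omega)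
    exact ⟨l, hl, hbal.mono sdiff_subset⟩
  obtain ⟨t, ht, hbal⟩ := h.exists_short_cycle hG hM le_rfl (by omega) (by omega)
  have hcard := ht.card_sdiff_toFinset_add
  obtain ⟨x, z, y, rfl⟩ := List.length_eq_three.1 ht.length_eq
  have hsub : insert y (insert x (U \ [x, z, y].toFinset)) ⊆ U :=
    insert_subset (ht.mem y (by simp)) (insert_subset (ht.mem x (by simp)) sdiff_subset)
  obtain ⟨l, hl, hbal'⟩ := (hbal.mono hsub).exists_connection hG hK hM (r := j - 3) (by omega)
    (by omega)
  refine ⟨[x, z, y] ++ l, ?_, by rwa [List.toFinset_append, ← sup_eq_union, ← sdiff_sdiff_left]⟩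
  have hl_disj := hl.disjoint_of_sdiff
  simp only [List.disjoint_cons_left] at hl_disj
  obtain ⟨hxl, hzl, hyl, -⟩ := hl_disj
  have ht_nodup := ht.nodup
  simp only [List.nodup_cons, List.mem_cons, not_or] at ht_nodup
  have ht_chain := ht.chain
  simp only [Cycle.chain_coe_cons, List.cons_append, List.isChain_cons_cons] at ht_chain
  have hcycle := (((hl.mono sdiff_subset).cons (ht.mem y (by simp)) hyl ht_chain.2.1).cons
    (ht.mem z (by simp)) (by simp [hzl, ht_nodup]) ht_chain.1).isCycleIn (ht.mem x (by simp))
    (by simp [hxl, ht_nodup])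
  rwa [show j - 3 + 1 + 1 + 1 = j by omega] at hcycle

lemma exists_disjoint_cycles (hG : IsOriented G) (hK : 328 ≤ K) (hM : IsThreshold K c M)
    {L : ι → ℕ} {I : Finset ι} (hL : ∀ i ∈ I, 3 ≤ L i) (h : Balanced G K c U U)
    (hU : ∑ i ∈ I, L i + M ≤ #U) :
    ∃ f : ι → List V, (∀ i ∈ I, IsCycleIn G U (L i) (f i)) ∧
      (I : Set ι).Pairwise fun i j ↦ (f i).Disjoint (f j) := by
  induction I using Finset.induction_on generalizing U with
  | empty => exact ⟨fun _ ↦ [], by simp, by simp⟩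
  | insert i I hi ih =>
    rw [forall_mem_insert] at hL
    rw [sum_insert hi] at hU
    obtain ⟨l, hl, hbal⟩ := h.exists_cycle hG hK hM hL.1 (by omega)
    have hcard := hl.card_sdiff_toFinset_add
    obtain ⟨f, hf, hdisj⟩ := ih hL.2 hbal (by omega)
    have hupdate (j) (hj : j ∈ I) : Function.update f i l j = f j :=
      Function.update_of_ne (ne_of_mem_of_not_mem hj hi) _ _
    refine ⟨Function.update f i l, ?_, ?_⟩
    · refine (forall_mem_insert ..).2 ⟨by rwa [Function.update_self], fun j hj ↦ ?_⟩
      rw [hupdate j hj]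
      exact (hf j hj).mono sdiff_subset
    · rw [coe_insert, Set.pairwise_insert_of_notMem (by exact_mod_cast hi)]
      refine ⟨fun j hj k hk hjk ↦ ?_, fun j hj ↦ ?_⟩
      · simpa only [hupdate j hj, hupdate k hk] using hdisj hj hk hjk
      · rw [Function.update_self, hupdate j hj]
        have hd := (hf j hj).disjoint_of_sdiff
        exact ⟨hd, hd.symm⟩

end Balanced

lemma IsCycleIn.exists_zmod {l : List V} (h : IsCycleIn G U j l) (hj : j ≠ 0) :
    ∃ g : ZMod j → V, Function.Injective g ∧ (∀ a, g a ∈ l) ∧ ∀ a, G (g a) (g (a + 1)) := by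
  obtain rfl := h.length_eq
  have : NeZero l.length := ⟨hj⟩
  obtain ⟨x, l, rfl⟩ := List.exists_cons_of_length_pos (Nat.pos_of_ne_zero hj)
  have hchain := List.isChain_iff_getElem.1 ((Cycle.chain_coe_cons G x l).1 h.chain)
  refine ⟨fun a ↦ (x :: l)[a.val]'(ZMod.val_lt a), fun a b hab ↦ ?_,
    fun a ↦ List.getElem_mem _, fun a ↦ ?_⟩
  · exact ZMod.val_injective _ (h.nodup.getElem_inj_iff.1 hab)
  have ha := ZMod.val_lt a
  have hadj := hchain a.val (by simpa using ha)
  have hsucc : (a + 1).val = (a.val + 1) % (x :: l).length := by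
    rw [ZMod.val_add, ZMod.val_one_eq_one_mod, Nat.add_mod_mod]
  simp only [← List.cons_append, List.getElem_append_left ha] at hadj
  obtain hlt | heq : a.val + 1 < (x :: l).length ∨ a.val + 1 = (x :: l).length := by omega
  · simpa only [List.getElem_append_left hlt, hsucc, Nat.mod_eq_of_lt hlt] using hadj
  · rw [List.getElem_concat_length heq] at hadj
    simpa only [hsucc, heq, Nat.mod_self, List.getElem_cons_zero] using hadj

lemma nearRegular_univ_iff [Fintype V] {d : ℝ} :
    NearRegular G d univ v ↔ (Fintype.card V : ℝ) / 2 - d ≤ outDeg G v ∧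
      (Fintype.card V : ℝ) / 2 - d ≤ inDeg G v := by
  simp only [NearRegular, outNbhd, inNbhd, outDeg, inDeg, Nat.card_eq_fintype_card,
    Fintype.card_subtype, card_univ]

lemma exists_disjoint_zmod_cycles [Fintype V] [Fintype ι] (hG : IsOriented G)
    (hdeg : ∀ v, NearRegular G (c / 2 * Fintype.card V) univ v) (hM : IsThreshold 328 c M)
    {L : ι → ℕ} (hL : ∀ i, 3 ≤ L i) (hcard : ∑ i, L i + M ≤ Fintype.card V) :
    ∃ g : (i : ι) → ZMod (L i) → V, (∀ i, Function.Injective (g i)) ∧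
      (∀ i j, i ≠ j → ∀ a b, g i a ≠ g j b) ∧ ∀ i a, G (g i a) (g i (a + 1)) := by
  have hM_two := hM.two_mul_le
  have hbal : Balanced G 328 c univ univ :=
    balanced_of_nearRegular (card_pos.1 (by rw [card_univ]; omega)) fun v _ ↦ hdeg v
  obtain ⟨f, hf, hdisj⟩ := hbal.exists_disjoint_cycles hG le_rfl hM (I := univ)
    (fun i _ ↦ hL i) (by rwa [card_univ])
  choose g hg_inj hg_mem hg_adj using fun i ↦
    (hf i (mem_univ i)).exists_zmod (by have := hL i; omega)
  refine ⟨g, hg_inj, fun i j hij a b hab ↦ ?_, hg_adj⟩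
  exact hdisj (mem_univ i) (mem_univ j) hij (hg_mem i a) (hab ▸ hg_mem j b)

end Balanced

end OrientedGraph

/-- Keevash–Sudakov: there exist positive constants c, C and an integer n₀ such that every
oriented graph on n ≥ n₀ vertices with minimum semidegree at least (1/2 − c)n contains,
for any integers n₁, …, n_t ≥ 3 with n₁ + ⋯ + n_t ≤ n − C, pairwise vertex-disjoint
directed cycles of lengths n₁, …, n_t. -/
theorem vertex_disjoint_prescribed_cycles :
    ∃ (c C : ℝ) (n₀ : ℕ), 0 < c ∧ 0 < C ∧
      ∀ (V : Type) [Fintype V] (G : V → V → Prop),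
        IsOriented G →
        n₀ ≤ Fintype.card V →
        (∀ x : V, (1 / 2 - c) * (Fintype.card V : ℝ) ≤ (outDeg G x : ℝ) ∧
          (1 / 2 - c) * (Fintype.card V : ℝ) ≤ (inDeg G x : ℝ)) →
        ∀ (t : ℕ) (L : Fin t → ℕ), (∀ i, 3 ≤ L i) →
          ((∑ i, L i : ℕ) : ℝ) ≤ (Fintype.card V : ℝ) - C →
          ∃ g : (i : Fin t) → ZMod (L i) → V,
            (∀ i, Function.Injective (g i)) ∧
            (∀ i j : Fin t, i ≠ j → ∀ a b, g i a ≠ g j b) ∧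
            ∀ i, ∀ a, G (g i a) (g i (a + 1)) := by
  obtain ⟨c, M, hM⟩ := OrientedGraph.exists_isThreshold 328
  have hM_pos : 0 < M := by have := hM.two_mul_le; omega
  refine ⟨c / 2, M, 0, half_pos hM.pos, by exact_mod_cast hM_pos, ?_⟩
  intro V _ G hG _ hdeg t L hL hsum
  refine OrientedGraph.exists_disjoint_zmod_cycles hG (fun v ↦ ?_) hM hL ?_
  · rw [OrientedGraph.nearRegular_univ_iff]
    exact ⟨by linarith [(hdeg v).1], by linarith [(hdeg v).2]⟩
  · exact_mod_cast le_sub_iff_add_le.1 hsum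
end
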